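/- arXiv:2110.05670 — 3 statements merged into one kernel-verified Lean document; each statement's English description precedes it below -/
import Mathlib

section
/- Let $G$ be a graph with minimum degree $\delta(G) \geq 1$. Then for any vertex $v$ of $G$, $\rho^2(G - v) \geq \rho^2(G) - 2 d_G(v) + 1$. -/
open SimpleGraph

attribute [local instance] Classical.propDecidable

noncomputable def specRad {V : Type*} [Fintype V] (G : SimpleGraph V) : ℝ :=
  sSup {μ : ℝ | Module.End.HasEigenvalue (Matrix.toLin' (G.adjMatrix ℝ)) μ}

lemma sd_hasEig {V : Type*} [Fintype V] (A : Matrix V V ℝ) (μ : ℝ) :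
    Module.End.HasEigenvalue (Matrix.toLin' A) μ ↔ ∃ x : V → ℝ, x ≠ 0 ∧ A.mulVec x = μ • x := by
  constructor
  · intro h
    obtain ⟨x, hx⟩ := h.exists_hasEigenvector
    exact ⟨x, hx.2, by simpa using hx.apply_eq_smul⟩
  · rintro ⟨x, hx, h⟩
    apply Module.End.hasEigenvalue_of_hasEigenvector (x := x)
    rw [Module.End.hasEigenvector_iff]
    exact ⟨by rw [Module.End.mem_eigenspace_iff]; simpa using h, hx⟩

lemma sd_mem {V : Type*} [Fintype V] [Nonempty V] (G : SimpleGraph V) :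
    Module.End.HasEigenvalue (Matrix.toLin' (G.adjMatrix ℝ)) (specRad G) ∧
    ∀ μ, Module.End.HasEigenvalue (Matrix.toLin' (G.adjMatrix ℝ)) μ → μ ≤ specRad G := by
  have hfin : {μ : ℝ | Module.End.HasEigenvalue (Matrix.toLin' (G.adjMatrix ℝ)) μ}.Finite :=
    Module.End.finite_hasEigenvalue _
  have hH : (G.adjMatrix ℝ).IsHermitian := by
    ext i j; simp [Matrix.conjTranspose_apply, SimpleGraph.adjMatrix_apply, G.adj_comm]
  have hne : {μ : ℝ | Module.End.HasEigenvalue (Matrix.toLin' (G.adjMatrix ℝ)) μ}.Nonempty := by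
    obtain ⟨i⟩ := ‹Nonempty V›
    refine ⟨hH.eigenvalues i, ?_⟩
    rw [Set.mem_ofPred_eq, sd_hasEig]
    refine ⟨_, ?_, hH.mulVec_eigenvectorBasis i⟩
    intro h
    apply hH.eigenvectorBasis.orthonormal.ne_zero i
    ext j
    exact congrFun h j
  exact ⟨hne.csSup_mem hfin, fun μ hμ => le_csSup hfin.bddAbove hμ⟩

lemma sd_psd {V : Type*} [Fintype V] [Nonempty V] (G : SimpleGraph V) :
    (specRad G • (1 : Matrix V V ℝ) - G.adjMatrix ℝ).PosSemidef := by
  have hH : (specRad G • (1 : Matrix V V ℝ) - G.adjMatrix ℝ).IsHermitian := by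
    ext i j; simp [Matrix.conjTranspose_apply, SimpleGraph.adjMatrix_apply, G.adj_comm, Matrix.one_apply, eq_comm]
  rw [hH.posSemidef_iff_eigenvalues_nonneg]
  intro i
  have h := hH.mulVec_eigenvectorBasis i
  have h2 : Module.End.HasEigenvalue (Matrix.toLin' (G.adjMatrix ℝ)) (specRad G - hH.eigenvalues i) := by
    rw [sd_hasEig]
    refine ⟨(hH.eigenvectorBasis i).ofLp, ?_, ?_⟩
    · intro h
      apply hH.eigenvectorBasis.orthonormal.ne_zero i
      ext j
      exact congrFun h j
    · rw [Matrix.sub_mulVec, Matrix.smul_mulVec, Matrix.one_mulVec] at h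
      rw [sub_smul]
      rw [← h]; abel
  have := (sd_mem G).2 _ h2
  simp; linarith

/-- quadratic form, as double sum -/
lemma sd_ray {V : Type*} [Fintype V] [Nonempty V] (G : SimpleGraph V) (x : V → ℝ) :
    x ⬝ᵥ (G.adjMatrix ℝ).mulVec x ≤ specRad G * (x ⬝ᵥ x) := by
  have := (sd_psd G).dotProduct_mulVec_nonneg x
  rw [Matrix.sub_mulVec, Matrix.smul_mulVec, Matrix.one_mulVec, dotProduct_sub, dotProduct_smul] at this
  simp at this
  linarith

lemma sd_abs {V : Type*} [Fintype V] (G : SimpleGraph V) (x : V → ℝ) :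
    |x ⬝ᵥ (G.adjMatrix ℝ).mulVec x| ≤ |x| ⬝ᵥ (G.adjMatrix ℝ).mulVec |x| := by
  simp only [dotProduct, Matrix.mulVec, Finset.mul_sum]
  refine (Finset.abs_sum_le_sum_abs _ _).trans (Finset.sum_le_sum fun i _ => ?_)
  refine (Finset.abs_sum_le_sum_abs _ _).trans (Finset.sum_le_sum fun j _ => ?_)
  rw [abs_mul, abs_mul]
  simp [SimpleGraph.adjMatrix_apply]
  split_ifs <;> simp

lemma sd_abs_self {V : Type*} [Fintype V] (x : V → ℝ) : |x| ⬝ᵥ |x| = x ⬝ᵥ x := by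
  simp [dotProduct]

lemma sd_perron {V : Type*} [Fintype V] [Nonempty V] (G : SimpleGraph V) :
    ∃ x : V → ℝ, x ≠ 0 ∧ (∀ i, 0 ≤ x i) ∧ (G.adjMatrix ℝ).mulVec x = specRad G • x := by
  obtain ⟨x, hx, h⟩ := (sd_hasEig _ _).1 (sd_mem G).1
  refine ⟨|x|, by simpa using hx, fun i => abs_nonneg _, ?_⟩
  have h1 := sd_abs G x
  rw [h, dotProduct_smul, smul_eq_mul] at h1
  have h2 := sd_ray G |x|
  rw [sd_abs_self] at h2
  have h3 := (sd_psd G).dotProduct_mulVec_zero_iff |x|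
  have h4 : (specRad G • (1 : Matrix V V ℝ) - G.adjMatrix ℝ).mulVec |x| = 0 := by
    rw [← h3, Matrix.sub_mulVec, Matrix.smul_mulVec, Matrix.one_mulVec, dotProduct_sub, dotProduct_smul]
    simp only [star_trivial, sd_abs_self, smul_eq_mul]
    linarith [le_abs_self (specRad G * x ⬝ᵥ x)]
  rw [Matrix.sub_mulVec, Matrix.smul_mulVec, Matrix.one_mulVec, sub_eq_zero] at h4
  exact h4.symm

lemma sd_nonneg {V : Type*} [Fintype V] [Nonempty V] (G : SimpleGraph V) : 0 ≤ specRad G := by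
  obtain ⟨i⟩ := ‹Nonempty V›
  have := @sd_ray V _ ⟨i⟩ G (Pi.single i 1)
  simpa using this

lemma sd_sq {V : Type*} [Fintype V] [Nonempty V] (G : SimpleGraph V) (y : V → ℝ) :
    (G.adjMatrix ℝ).mulVec y ⬝ᵥ (G.adjMatrix ℝ).mulVec y ≤ specRad G ^ 2 * (y ⬝ᵥ y) := by
  have hq : ∀ z : V → ℝ, |z ⬝ᵥ (G.adjMatrix ℝ).mulVec z| ≤ specRad G * (z ⬝ᵥ z) := fun z =>
    (sd_abs G z).trans (by simpa [sd_abs_self] using sd_ray G |z|)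
  set A := G.adjMatrix ℝ with hA
  set b := A.mulVec y with hb
  have hs : y ⬝ᵥ A.mulVec b = b ⬝ᵥ b := by
    rw [Matrix.dotProduct_mulVec, ← Matrix.mulVec_transpose, hA, SimpleGraph.transpose_adjMatrix]
  have key : ∀ c : ℝ, 2 * c * (b ⬝ᵥ b) ≤ specRad G * (c ^ 2 * (b ⬝ᵥ b) + y ⬝ᵥ y) := by
    intro c
    have h1 := (abs_le.1 (hq (c • b + y))).2
    have h2 := (abs_le.1 (hq (c • b - y))).1
    simp only [Matrix.mulVec_add, Matrix.mulVec_sub, Matrix.mulVec_smul, dotProduct_add, add_dotProduct,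
      dotProduct_sub, sub_dotProduct, smul_dotProduct, dotProduct_smul, smul_eq_mul, hs, ← hb] at h1 h2
    have := dotProduct_comm b y
    nlinarith
  have h0 := sd_nonneg G
  rcases h0.eq_or_lt with h | h
  · have := key 1
    rw [← h] at this ⊢
    linarith
  · have := key (1 / specRad G)
    field_simp at this
    linarith

lemma sd_final (r n T S d L : ℝ) (hr : 0 ≤ r) (hT : 0 ≤ T) (hn : 0 < n) (hS : 0 ≤ S) (hd : 1 ≤ d)
    (h1 : r ^ 2 * T ≤ d * S) (h2 : S + T ≤ n) (h3 : r * (2 * S - n) ≤ (d - 1) * S)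
    (h4 : r ^ 2 * (n - T) - 2 * (r ^ 2 * T) + d * T ≤ L ^ 2 * (n - T)) :
    r ^ 2 - 2 * d + 1 ≤ L ^ 2 := by
  by_contra! hc
  have hL := sq_nonneg L
  have hnT : 0 < n - T := by
    by_contra! h
    have : S = 0 := by linarith
    have : T = n := by linarith
    subst this
    nlinarith
  have h5 : T * (2 * r ^ 2 + d - 1) ≤ (2 * d - 1) * n := by
    rcases le_total r d with h | h
    · have hrd : r ^ 2 ≤ d ^ 2 := by nlinarith
      have h6 : T * (r ^ 2 + d) ≤ d * n := by nlinarith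
      have h7 : d * (2 * r ^ 2 + d - 1) ≤ (2 * d - 1) * (r ^ 2 + d) := by nlinarith
      have h8 : 0 < r ^ 2 + d := by positivity
      have h9 : T * (d * (2 * r ^ 2 + d - 1)) ≤ (2 * d - 1) * (d * n) :=
        calc _ ≤ T * ((2 * d - 1) * (r ^ 2 + d)) := by gcongr
          _ = (2 * d - 1) * (T * (r ^ 2 + d)) := by ring
          _ ≤ _ := mul_le_mul_of_nonneg_left h6 (by linarith)
      nlinarith
    · have h6 : d * (2 * S - n) ≤ (d - 1) * S := by
        rcases le_total (2 * S - n) 0 with h' | h'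
        · nlinarith [mul_nonneg (sub_nonneg.2 hd) hS]
        · nlinarith
      have h7 : (d + 1) * S ≤ d * n := by linarith
      have h8 : d * T ≤ S := by
        have : d * (d * T) ≤ d * S := by nlinarith
        nlinarith
      have h9 : T * (2 * r ^ 2 + d - 1) * d ≤ (2 * d ^ 2 + d - 1) * S := by nlinarith
      have : (2 * d ^ 2 + d - 1) * S = (2 * d - 1) * ((d + 1) * S) := by ring
      have : (2 * d - 1) * ((d + 1) * S) ≤ (2 * d - 1) * (d * n) :=
        mul_le_mul_of_nonneg_left h7 (by linarith)
      nlinarith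
  nlinarith

lemma sd_del {V : Type*} [Fintype V] (G : SimpleGraph V) (v : V) [Nonempty {w | w ≠ v}]
    (x : V → ℝ) :
    ∑ u ∈ Finset.univ.erase v, ((G.adjMatrix ℝ).mulVec x u - G.adjMatrix ℝ u v * x v) ^ 2 ≤
      specRad (G.induce {w | w ≠ v}) ^ 2 * ∑ u ∈ Finset.univ.erase v, x u ^ 2 := by
  have h := sd_sq (G.induce {w | w ≠ v}) (fun u => x u)
  have conv : ∀ f : V → ℝ, ∑ u ∈ Finset.univ.erase v, f u = ∑ u : {w | w ≠ v}, f u := by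
    intro f
    exact Finset.sum_subtype _ (by simp) f
  rw [conv, conv]
  simp only [dotProduct, ← pow_two] at h
  convert h using 3 with u
  simp only [Matrix.mulVec, dotProduct]
  rw [← Finset.add_sum_erase _ _ (Finset.mem_univ v), add_sub_cancel_left, conv]
  rfl

/-- Sun–Das inequality: if `δ(G) ≥ 1`, then for every vertex `v`,
`ρ²(G - v) ≥ ρ²(G) - 2 d(v) + 1`. -/
theorem sun_das {V : Type*} [Fintype V] (G : SimpleGraph V)
    (hδ : 1 ≤ G.minDegree) (v : V) :
    specRad G ^ 2 - 2 * (G.degree v : ℝ) + 1 ≤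
      specRad (G.induce {w | w ≠ v}) ^ 2 := by
  have hd : 1 ≤ G.degree v := hδ.trans (G.minDegree_le_degree v)
  have : Nonempty V := ⟨v⟩
  have : Nonempty {w | w ≠ v} := by
    obtain ⟨w, hw⟩ := (G.degree_pos_iff_exists_adj v).1 hd
    exact ⟨w, hw.ne'⟩
  obtain ⟨x, hx0, hx, hA⟩ := sd_perron G
  have hdel := sd_del G v x
  have hr := sd_nonneg G
  set r := specRad G
  set A := G.adjMatrix ℝ with hAdef
  have hAx : ∀ u, ∑ w, A u w * x w = r * x u := fun u => congrFun hA u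
  have hA0 : ∀ u w, 0 ≤ A u w := fun u w => by
    simp only [hAdef, SimpleGraph.adjMatrix_apply]; split_ifs <;> norm_num
  have hA1 : ∀ u w, A u w ≤ 1 := fun u w => by
    simp only [hAdef, SimpleGraph.adjMatrix_apply]; split_ifs <;> norm_num
  have hA2 : ∀ u w, A u w ^ 2 = A u w := fun u w => by
    simp only [hAdef, SimpleGraph.adjMatrix_apply]; split_ifs <;> norm_num
  have hAs : ∀ u w, A u w = A w u := fun u w => by
    simp only [hAdef, SimpleGraph.adjMatrix_apply, G.adj_comm]
  have hAd : ∀ u, A u u = 0 := fun u => by simp [hAdef]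
  have hdeg : ∑ u, A v u = G.degree v := by
    simp [hAdef, SimpleGraph.adjMatrix_apply, SimpleGraph.degree, SimpleGraph.neighborFinset_eq_filter]
  -- C : Cauchy-Schwarz
  have hC : r ^ 2 * x v ^ 2 ≤ (G.degree v : ℝ) * ∑ u, A v u * x u ^ 2 := by
    have := Finset.sum_mul_sq_le_sq_mul_sq Finset.univ (fun u => A v u) (fun u => A v u * x u)
    simp only [mul_pow, hA2, hdeg] at this
    rw [← mul_pow, ← hAx v]
    refine le_trans (le_of_eq ?_) this
    congr 1
    exact Finset.sum_congr rfl fun u _ => by rw [← mul_assoc, ← pow_two, hA2]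
  have hsplit : ∀ f : V → ℝ, ∑ u ∈ Finset.univ.erase v, f u = ∑ u, f u - f v := fun f => by
    rw [← Finset.add_sum_erase _ _ (Finset.mem_univ v)]; ring
  apply sd_final r (∑ u, x u ^ 2) (x v ^ 2) (∑ u, A v u * x u ^ 2) (G.degree v) _ hr (sq_nonneg _)
  · obtain ⟨i, hi⟩ := Function.ne_iff.1 hx0
    exact Finset.sum_pos' (fun _ _ => sq_nonneg _) ⟨i, Finset.mem_univ _, pow_pos (lt_of_le_of_ne (hx i) (Ne.symm hi)) 2⟩
  · exact Finset.sum_nonneg fun u _ => mul_nonneg (hA0 _ _) (sq_nonneg _)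
  · exact_mod_cast hd
  · exact hC
  · have h1 : ∑ u, A v u * x u ^ 2 ≤ ∑ u ∈ Finset.univ.erase v, x u ^ 2 := by
      rw [← Finset.add_sum_erase _ _ (Finset.mem_univ v), hAd, zero_mul, zero_add]
      exact Finset.sum_le_sum fun u _ => mul_le_of_le_one_left (sq_nonneg _) (hA1 _ _)
    rw [hsplit] at h1
    linarith
  · -- third inequality
    set y : V → ℝ := fun u => A v u * x u with hy
    have hy0 : ∀ u, 0 ≤ y u := fun u => mul_nonneg (hA0 _ _) (hx _)
    set e : V → ℝ := Pi.single v (x v) with he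
    set z : V → ℝ := x - y - e with hz
    have hz0 : ∀ u, 0 ≤ z u := by
      intro u
      by_cases h : u = v
      · subst h; simp [hz, hy, he, hAd]
      · simp [hz, hy, he, h]
        exact mul_le_of_le_one_left (hx u) (hA1 _ _)
    have hzz : 0 ≤ z ⬝ᵥ A.mulVec z :=
      Finset.sum_nonneg fun u _ => mul_nonneg (hz0 u) (Finset.sum_nonneg fun w _ =>
        mul_nonneg (hA0 _ _) (hz0 w))
    have hsym : ∀ p q : V → ℝ, p ⬝ᵥ A.mulVec q = q ⬝ᵥ A.mulVec p := fun p q => by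
      rw [Matrix.dotProduct_mulVec, ← Matrix.mulVec_transpose, hAdef, SimpleGraph.transpose_adjMatrix,
        dotProduct_comm]
    have hyx : y ⬝ᵥ x = ∑ u, A v u * x u ^ 2 := by
      simp only [dotProduct, hy]; exact Finset.sum_congr rfl fun u _ => by ring
    have hyy : y ⬝ᵥ y = ∑ u, A v u * x u ^ 2 := by
      simp only [dotProduct, hy]
      exact Finset.sum_congr rfl fun u _ => by rw [← pow_two, mul_pow, hA2]
    have hxx : x ⬝ᵥ x = ∑ u, x u ^ 2 := by simp [dotProduct, pow_two]
    have hex : e ⬝ᵥ x = x v ^ 2 := by simp [he, pow_two]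
    have hee : e ⬝ᵥ A.mulVec e = 0 := by
      simp [he, hAd]
    have hey : e ⬝ᵥ A.mulVec y = r * x v ^ 2 := by
      have : A.mulVec y v = r * x v := by
        rw [← hAx v]
        exact Finset.sum_congr rfl fun u _ => by simp only [hy]; rw [← mul_assoc, ← pow_two, hA2]
      rw [he, single_dotProduct, this]; ring
    have hyAy : y ⬝ᵥ A.mulVec y ≤ (∑ u, y u) ^ 2 - y ⬝ᵥ y := by
      rw [pow_two, Finset.sum_mul_sum]
      simp only [dotProduct, Matrix.mulVec, Finset.mul_sum]
      rw [← Finset.sum_sub_distrib]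
      refine Finset.sum_le_sum fun u _ => ?_
      rw [← Finset.add_sum_erase _ _ (Finset.mem_univ u), ← Finset.add_sum_erase _ (fun j => y u * y j) (Finset.mem_univ u), hAd]
      simp only [zero_mul, mul_zero, zero_add, add_sub_cancel_left]
      exact Finset.sum_le_sum fun w _ => mul_le_mul_of_nonneg_left
        (mul_le_of_le_one_left (hy0 w) (hA1 _ _)) (hy0 u)
    have hsy : ∑ u, y u = r * x v := hAx v
    rw [hsy, mul_pow, hyy] at hyAy
    have hexp : z ⬝ᵥ A.mulVec z = x ⬝ᵥ A.mulVec x - 2 * (y ⬝ᵥ A.mulVec x) - 2 * (e ⬝ᵥ A.mulVec x)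
        + y ⬝ᵥ A.mulVec y + 2 * (e ⬝ᵥ A.mulVec y) + e ⬝ᵥ A.mulVec e := by
      simp only [hz, Matrix.mulVec_sub, dotProduct_sub, sub_dotProduct]
      rw [hsym x y, hsym x e, hsym y e]; ring
    rw [hexp, hA, hee, hey] at hzz
    simp only [dotProduct_smul, smul_eq_mul, hxx, hyx, hex] at hzz
    linarith
  · rw [hsplit, hsplit] at hdel
    refine le_trans (le_of_eq ?_) hdel
    have : ∀ u, (A.mulVec x u - A u v * x v) ^ 2 =
        r ^ 2 * x u ^ 2 - 2 * r * x v * (A v u * x u) + x v ^ 2 * A v u := by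
      intro u
      have : A.mulVec x u = r * x u := hAx u
      rw [this, hAs u v]
      linear_combination x v ^ 2 * hA2 v u
    have hv : A.mulVec x v = r * x v := hAx v
    simp only [this, hv, Finset.sum_add_distrib, Finset.sum_sub_distrib, ← Finset.mul_sum, hdeg, hAx, hAd]
    ring
end

section
/- Every 2-connected graph $G$ with minimum degree $\delta(G) \geq k$ for some integer $k \geq 3$ and with at least $2k+1$ vertices contains an even cycle of length at least $2k$. -/
open SimpleGraph

attribute [local instance] Classical.propDecidable

/-- `G` is 2-connected: at least 3 vertices and deleting any vertex leaves a
connected graph. -/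
def TwoConnected {V : Type*} [Fintype V] (G : SimpleGraph V) : Prop :=
  3 ≤ Fintype.card V ∧ ∀ v : V, (G.induce {w | w ≠ v}).Connected


section PathOnBasics

variable {V : Type*} {G : SimpleGraph V}

/-- `PathOn G S a b`: there is a path of `G` from `a` to `b` with vertex set exactly `S`. -/
inductive PathOn (G : SimpleGraph V) : Finset V → V → V → Prop
  | single (a : V) : PathOn G {a} a a
  | cons {S : Finset V} {a b c : V} :
      PathOn G S b c → G.Adj a b → a ∉ S → PathOn G (insert a S) a c

theorem PathOn.start_mem {S : Finset V} {a b : V} (h : PathOn G S a b) : a ∈ S := by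
  cases h <;> simp

theorem PathOn.end_mem {S : Finset V} {a b : V} (h : PathOn G S a b) : b ∈ S := by
  induction h with
  | single a => simp
  | cons _ _ _ ih => simp [ih]

theorem PathOn.join {S T : Finset V} {a b c d : V} (h : PathOn G S a b) (hbc : G.Adj b c)
    (h' : PathOn G T c d) (hd : Disjoint S T) : PathOn G (S ∪ T) a d := by
  induction h with
  | single a =>
    have : a ∉ T := by simpa using hd
    have e : ({a} : Finset V) ∪ T = insert a T := by ext; simp
    rw [e]; exact PathOn.cons h' hbc this
  | @cons S a b e hp hab ha ih =>
    rw [Finset.disjoint_insert_left] at hd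
    rw [Finset.insert_union]
    refine PathOn.cons (ih hbc hd.2) hab ?_
    simp [ha, hd.1]

theorem PathOn.symm {S : Finset V} {a b : V} (h : PathOn G S a b) : PathOn G S b a := by
  induction h with
  | single a => exact PathOn.single a
  | @cons S a b e hp hab ha ih =>
    have := ih.join hab.symm (PathOn.single a) (by simpa using ha)
    have e : S ∪ {a} = insert a S := by ext; simp
    rwa [e] at this

theorem PathOn.suffix {S : Finset V} {a b z : V} (h : PathOn G S a b) (hz : z ∈ S) :
    ∃ S' ⊆ S, PathOn G S' z b := by
  induction h with
  | single a =>
    simp at hz; subst hz; exact ⟨_, subset_rfl, PathOn.single _⟩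
  | @cons S a b e hp hab ha ih =>
    by_cases hza : z = a
    · subst hza; exact ⟨_, subset_rfl, PathOn.cons hp hab ha⟩
    · obtain ⟨S', h1, h2⟩ := ih (by simpa [hza] using hz)
      exact ⟨S', h1.trans (Finset.subset_insert _ _), h2⟩

theorem PathOn.toWalk {S : Finset V} {a b : V} (h : PathOn G S a b) :
    ∃ p : G.Walk a b, p.IsPath ∧ (∀ x, x ∈ p.support ↔ x ∈ S) ∧ p.length + 1 = S.card := by
  induction h with
  | single a => exact ⟨SimpleGraph.Walk.nil, by simp⟩
  | @cons S a b e hp hab ha ih =>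
    obtain ⟨p, h1, h2, h3⟩ := ih
    refine ⟨SimpleGraph.Walk.cons hab p, ?_, ?_, ?_⟩
    · rw [SimpleGraph.Walk.cons_isPath_iff]; exact ⟨h1, by rw [h2]; exact ha⟩
    · intro x; simp [h2]
    · rw [Finset.card_insert_of_notMem ha]; simp [h3]

theorem PathOn.toCycle {S : Finset V} {a b : V} (h : PathOn G S a b) (hab : G.Adj b a)
    (h3 : 3 ≤ S.card) :
    ∃ (v : V) (c : G.Walk v v), c.IsCycle ∧ c.length = S.card := by
  obtain ⟨p, h1, h2, h4⟩ := h.toWalk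
  refine ⟨b, SimpleGraph.Walk.cons hab p, ?_, by simp [h4]⟩
  rw [SimpleGraph.Walk.cons_isCycle_iff]
  refine ⟨h1, ?_⟩
  intro he
  have hl : p.length = 1 := by
    have := h1.eq_snd_of_mem_edges (by rw [Sym2.eq_swap] at he; exact he) 
    have h5 : b = p.getVert p.length := by simp
    have h6 : p.getVert p.length = p.getVert 1 := by rw [← h5]; exact this
    have := h1.getVert_injOn (by simp) (by simp; omega) h6
    exact this
  omega

theorem PathOn.enum {S : Finset V} {a b : V} (h : PathOn G S a b) :
    ∃ w : ℕ → V, w 0 = a ∧ w (S.card - 1) = b ∧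
      (∀ i < S.card, ∀ j < S.card, w i = w j → i = j) ∧
      (∀ i, i + 1 < S.card → G.Adj (w i) (w (i + 1))) ∧
      (∀ x, x ∈ S ↔ ∃ i < S.card, w i = x) := by
  obtain ⟨p, h1, h2, h3⟩ := h.toWalk
  refine ⟨p.getVert, by simp, ?_, ?_, ?_, ?_⟩
  · rw [← h3]; simp
  · intro i hi j hj hij
    exact h1.getVert_injOn (by simp; omega) (by simp; omega) hij
  · intro i hi
    exact p.adj_getVert_succ (by omega)
  · intro x
    rw [← h2, SimpleGraph.Walk.mem_support_iff_exists_getVert]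
    constructor
    · rintro ⟨i, hi, hl⟩; exact ⟨i, by omega, hi⟩
    · rintro ⟨i, hi, hl⟩; exact ⟨i, hl, by omega⟩

/-- `Rch G S Z u`: from `u ∈ S` one can walk inside `S` to a vertex adjacent to `Z`. -/
inductive Rch (G : SimpleGraph V) (S Z : Set V) : V → Prop
  | base {u z : V} : u ∈ S → z ∈ Z → G.Adj u z → Rch G S Z u
  | step {u w : V} : u ∈ S → G.Adj u w → Rch G S Z w → Rch G S Z u

theorem Rch.mem {S Z : Set V} {u : V} (h : Rch G S Z u) : u ∈ S := by
  cases h <;> assumption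

/-- Walk stays in `K` until it exits into `the target`. -/
theorem Rch.exit {S Z K Z' : Set V} {u : V} (h : Rch G S Z u) (hu : u ∈ K)
    (hK : ∀ a ∈ K, ∀ b ∈ S, G.Adj a b → b ∈ K ∨ b ∈ Z')
    (hZ : ∀ a ∈ K, a ∈ S → ∀ b ∈ Z, G.Adj a b → b ∈ Z') : Rch G K Z' u := by
  induction h with
  | base hS hz ha => exact Rch.base hu (hZ _ hu hS _ hz ha) ha
  | @step u w hS ha hr ih =>
    rcases hK _ hu _ hr.mem ha with h | h
    · exact Rch.step hu ha (ih h)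
    · exact Rch.base hu h ha

theorem Rch.path {S : Finset V} {Z : Set V} {u : V} (h : Rch G (S : Set V) Z u) :
    ∃ P ⊆ S, ∃ q, PathOn G P u q ∧ ∃ z ∈ Z, G.Adj q z := by
  induction h with
  | @base u z hS hz ha =>
    exact ⟨{u}, by simpa using hS, u, PathOn.single u, z, hz, ha⟩
  | @step u w hS ha hr ih =>
    obtain ⟨P, hP, q, hp, hz⟩ := ih
    by_cases hu : u ∈ P
    · obtain ⟨P', h1, h2⟩ := hp.suffix hu
      exact ⟨P', h1.trans hP, q, h2, hz⟩
    · exact ⟨insert u P, Finset.insert_subset (by simpa using hS) hP, q, hp.cons ha hu, hz⟩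

end PathOnBasics

section Rooted

variable {V : Type*} {G : SimpleGraph V}

/-- A rooted 2-connected piece: `S` hangs on the root `x` and on the target set `T`. -/
structure GoodPiece (G : SimpleGraph V) (S : Finset V) (x : V) (T : Set V) : Prop where
  ne : S.Nonempty
  xS : x ∉ S
  xT : x ∉ T
  hTS : ∀ y ∈ T, y ∉ S
  r1 : ∀ u ∈ S, Rch G (S : Set V) {x} u
  r2 : ∀ u ∈ S, Rch G (S : Set V) T u
  r3 : ∀ v ∈ S, ∀ u ∈ S, u ≠ v → Rch G (S.erase v : Finset V) (insert x T) u

theorem PathOn.closed {P : Finset V} {K : Finset V} {a b : V} (h : PathOn G P a b)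
    (ha : a ∈ K) (hK : ∀ u ∈ K, ∀ w ∈ P, G.Adj u w → w ∈ K) : b ∈ K := by
  induction h with
  | single a => exact ha
  | @cons S a b e hp hab hn ih =>
    exact ih (hK a ha b (by simp [hp.start_mem]) hab)
      (fun u hu w hw => hK u hu w (by simp [hw]))

theorem good_cases {S : Finset V} {x : V} {T : Set V} (h : GoodPiece G S x T) :
    (∃ v ∈ S, ∃ K ⊆ S, v ∉ K ∧ GoodPiece G K x {v} ∧
      (∀ u ∈ K, ∀ w ∈ S, G.Adj u w → w ∈ K ∨ w = v) ∧ (∀ u ∈ K, ∀ y ∈ T, ¬ G.Adj u y) ∧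
      ∃ P ⊆ S, Disjoint K P ∧ ∃ q, PathOn G P v q ∧ ∃ z ∈ T, G.Adj q z) ∨
    (∃ u1 ∈ S, G.Adj x u1 ∧ (((∃ y ∈ T, G.Adj u1 y) ∧ ∀ w ∈ S, ¬ G.Adj u1 w) ∨
      ∃ K ⊆ S, u1 ∉ K ∧ GoodPiece G K u1 T ∧
        ∀ u ∈ K, ∀ w ∈ S, G.Adj u w → w ∈ K ∨ w = u1)) := by
  by_cases hA : ∃ v ∈ S, ∃ u ∈ S, u ≠ v ∧ ¬ Rch G (S.erase v : Finset V) T u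
  · left
    obtain ⟨v, hv, u0, hu0, huv, hnr⟩ := hA
    set K : Finset V := (S.erase v).filter (fun w => ¬ Rch G (S.erase v : Finset V) T w) with hKdef
    have memK : ∀ w, w ∈ K ↔ (w ≠ v ∧ w ∈ S) ∧ ¬ Rch G (S.erase v : Finset V) T w := by
      intro w; simp [hKdef]
    have hKS : K ⊆ S := fun w hw => ((memK w).1 hw).1.2
    have hvK : v ∉ K := fun hw => ((memK v).1 hw).1.1 rfl
    have hcl : ∀ u ∈ K, ∀ w ∈ S, G.Adj u w → w ∈ K ∨ w = v := by
      intro u hu w hw ha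
      by_cases hwv : w = v
      · exact Or.inr hwv
      · left
        rw [memK] at hu ⊢
        refine ⟨⟨hwv, hw⟩, fun hr => hu.2 (Rch.step (by simp [hu.1]) ha hr)⟩
    have hT : ∀ u ∈ K, ∀ y ∈ T, ¬ G.Adj u y := by
      intro u hu y hy ha
      rw [memK] at hu
      exact hu.2 (Rch.base (by simp [hu.1]) hy ha)
    refine ⟨v, hv, K, hKS, hvK, ?_, hcl, hT, ?_⟩
    · refine ⟨⟨u0, (memK _).2 ⟨⟨huv, hu0⟩, hnr⟩⟩, fun hx => h.xS (hKS hx), ?_, ?_, ?_, ?_, ?_⟩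
      · intro hx
        have : x = v := hx
        exact h.xS (this ▸ hv)
      · intro y hy
        have : y = v := hy
        rw [this]; exact hvK
      · intro u hu
        refine (h.r3 v hv u (hKS hu) (((memK u).1 hu).1.1)).exit (by simpa using hu) ?_ ?_
        · intro a ha b hb hab
          left
          have hb' : b ≠ v ∧ b ∈ S := by simpa [and_comm] using hb
          rcases hcl a (by simpa using ha) b hb'.2 hab with h1 | h1
          · simpa using h1
          · exact absurd h1 hb'.1
        · intro a ha _ b hb hab
          rcases hb with h1 | h1
          · exact h1
          · exact absurd hab (hT a (by simpa using ha) b h1)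
      · intro u hu
        refine (h.r2 u (hKS hu)).exit (by simpa using hu) ?_ ?_
        · intro a ha b hb hab
          exact hcl a (by simpa using ha) b (by simpa using hb) hab
        · intro a ha _ b hb hab
          exact absurd hab (hT a (by simpa using ha) b hb)
      · intro w hw u hu huw
        refine (h.r3 w (hKS hw) u (hKS hu) huw).exit (by simp [huw, hu]) ?_ ?_
        · intro a ha b hb hab
          have hb' : b ≠ w ∧ b ∈ S := by simpa [and_comm] using hb
          have ha' : a ≠ w ∧ a ∈ K := by simpa [and_comm] using ha
          rcases hcl a ha'.2 b hb'.2 hab with h1 | h1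
          · left; simp [h1, hb'.1]
          · right; right; exact h1
        · intro a ha _ b hb hab
          have ha' : a ≠ w ∧ a ∈ K := by simpa [and_comm] using ha
          rcases hb with h1 | h1
          · left; exact h1
          · exact absurd hab (hT a ha'.2 b h1)
    · obtain ⟨P, hPS, q, hp, z, hz, hqz⟩ := (h.r2 v hv).path
      refine ⟨P, hPS, ?_, q, hp, z, hz, hqz⟩
      have hqK : q ∉ K := fun hq => hT q hq z hz hqz
      cases hp with
      | single => simpa using hvK
      | @cons S' _ b _ hp' hab hn =>
        rw [Finset.disjoint_insert_right]
        refine ⟨hvK, ?_⟩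
        rw [Finset.disjoint_right]
        intro t ht htK
        obtain ⟨P', hP', hpt⟩ := hp'.suffix ht
        refine hqK (hpt.closed htK ?_)
        intro u hu w hw huw
        rcases hcl u hu w (hPS (by simp [hP' hw])) huw with h1 | h1
        · exact h1
        · exact absurd (hP' hw) (h1 ▸ hn)
  · right
    push Not at hA
    obtain ⟨a0, ha0⟩ := h.ne
    obtain ⟨P0, hP0, u1, hp0, z, hz, ha⟩ := (h.r1 a0 ha0).path
    have hz' : z = x := hz
    subst hz'
    have hu1 : u1 ∈ S := hP0 hp0.end_mem
    refine ⟨u1, hu1, ha.symm, ?_⟩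
    set K : Finset V := (S.erase u1).filter (fun w => Rch G (S.erase u1 : Finset V) {u1} w) with hKdef
    have memK : ∀ w, w ∈ K ↔ (w ≠ u1 ∧ w ∈ S) ∧ Rch G (S.erase u1 : Finset V) {u1} w := by
      intro w; simp [hKdef]
    have hKS : K ⊆ S := fun w hw => ((memK w).1 hw).1.2
    have huK : u1 ∉ K := fun hw => ((memK u1).1 hw).1.1 rfl
    have hcl : ∀ u ∈ K, ∀ w ∈ S, G.Adj u w → w ∈ K ∨ w = u1 := by
      intro u hu w hw ha
      by_cases hwv : w = u1
      · exact Or.inr hwv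
      · left
        rw [memK] at hu ⊢
        exact ⟨⟨hwv, hw⟩, Rch.step (by simp [hwv, hw]) ha.symm hu.2⟩
    by_cases hKe : K.Nonempty
    · right
      refine ⟨K, hKS, huK, ?_, hcl⟩
      refine ⟨hKe, huK, fun hT => h.hTS u1 hT hu1, fun y hy hyK => h.hTS y hy (hKS hyK), ?_, ?_, ?_⟩
      · intro u hu
        refine (((memK u).1 hu).2).exit (by simpa using hu) ?_ ?_
        · intro a ha b hb hab
          have hb' : b ≠ u1 ∧ b ∈ S := by simpa [and_comm] using hb
          exact hcl a (by simpa using ha) b hb'.2 hab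
        · intro a ha _ b hb hab; exact hb
      · intro u hu
        have hu' := (memK u).1 hu
        refine (hA u1 hu1 u hu'.1.2 hu'.1.1).exit (by simpa using hu) ?_ ?_
        · intro a ha b hb hab
          have hb' : b ≠ u1 ∧ b ∈ S := by simpa [and_comm] using hb
          rcases hcl a (by simpa using ha) b hb'.2 hab with h1 | h1
          · left; simpa using h1
          · exact absurd h1 hb'.1
        · intro a ha _ b hb hab; exact hb
      · intro w hw u hu huw
        refine (hA w (hKS hw) u (hKS hu) huw).exit (by simp [huw, hu]) ?_ ?_
        · intro a ha b hb hab
          have hb' : b ≠ w ∧ b ∈ S := by simpa [and_comm] using hb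
          have ha' : a ≠ w ∧ a ∈ K := by simpa [and_comm] using ha
          rcases hcl a ha'.2 b hb'.2 hab with h1 | h1
          · left; simp [h1, hb'.1]
          · right; left; exact h1
        · intro a ha _ b hb hab; right; exact hb
    · left
      have hno : ∀ w ∈ S, ¬ G.Adj u1 w := by
        intro w hw haw
        apply hKe
        exact ⟨w, (memK w).2 ⟨⟨haw.ne.symm, hw⟩,
          Rch.base (by simp [haw.ne.symm, hw]) rfl haw.symm⟩⟩
      refine ⟨?_, hno⟩
      have hr := h.r2 u1 hu1
      cases hr with
      | base _ hz ha => exact ⟨_, hz, ha⟩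
      | step _ ha hr => exact absurd ha (hno _ (by simpa using hr.mem))

/-- Rooted Erdős–Gallai type lemma. -/
theorem rooted_path (m : ℕ) : ∀ (S : Finset V) (x : V) (T : Set V) (d : ℕ), S.card ≤ m →
    GoodPiece G S x T →
    (∀ u ∈ S, d ≤ ((insert x S).filter (G.Adj u)).card + (if ∃ y ∈ T, G.Adj u y then 1 else 0)) →
    ∃ P ⊆ S, ∃ p q, PathOn G P p q ∧ G.Adj x p ∧ (∃ y ∈ T, G.Adj q y) ∧ d ≤ P.card + 1 := by
  induction m with
  | zero =>
    intro S x T d hS h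
    have := h.ne.card_pos
    omega
  | succ m ih =>
    intro S x T d hS h hd
    rcases good_cases h with ⟨v, hv, K, hKS, hvK, hK, hcl, hT, P2, hP2S, hKP, q2, hp2, hz⟩ |
      ⟨u1, hu1, hxu, h3⟩
    · have hcard : K.card < S.card :=
        Finset.card_lt_card (Finset.ssubset_iff_subset_ne.2 ⟨hKS, fun e => hvK (e ▸ hv)⟩)
      obtain ⟨P1, hP1, p, q, hp, hxp, ⟨y, hy, hqy⟩, hdc⟩ := ih K x {v} d (by omega) hK (by
        intro u hu
        have h1 := hd u (hKS hu)
        have h2 : ¬ ∃ y ∈ T, G.Adj u y := by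
          rintro ⟨y, hy, ha⟩; exact hT u hu y hy ha
        rw [if_neg h2] at h1
        have h3 : (insert x S).filter (G.Adj u) ⊆
            ((insert x K).filter (G.Adj u)) ∪ (({v} : Finset V).filter (G.Adj u)) := by
          intro w hw
          simp only [Finset.mem_filter, Finset.mem_insert, Finset.mem_union,
            Finset.mem_singleton] at hw ⊢
          rcases hw with ⟨h4 | h4, h5⟩
          · exact Or.inl ⟨Or.inl h4, h5⟩
          · rcases hcl u hu w h4 h5 with h6 | h6
            · exact Or.inl ⟨Or.inr h6, h5⟩
            · exact Or.inr ⟨h6, h5⟩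
        have h4 := (Finset.card_le_card h3).trans (Finset.card_union_le _ _)
        have h5 : (({v} : Finset V).filter (G.Adj u)).card ≤
            (if ∃ y ∈ ({v} : Set V), G.Adj u y then 1 else 0) := by
          by_cases h6 : G.Adj u v
          · simp [h6, Finset.filter_singleton]
          · simp [h6, Finset.filter_singleton]
        omega)
      have hyv : y = v := hy
      subst hyv
      refine ⟨P1 ∪ P2, Finset.union_subset (hP1.trans hKS) hP2S, p, q2, ?_, hxp, hz, ?_⟩
      · exact hp.join hqy hp2 (Finset.disjoint_of_subset_left hP1 hKP)
      · have := Finset.card_le_card (Finset.subset_union_left (s₁ := P1) (s₂ := P2))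
        omega
    · rcases h3 with ⟨hy, hno⟩ | ⟨K, hKS, huK, hK, hcl⟩
      · refine ⟨{u1}, by simpa using hu1, u1, u1, PathOn.single u1, hxu, hy, ?_⟩
        have h1 := hd u1 hu1
        rw [if_pos hy] at h1
        have h2 : (insert x S).filter (G.Adj u1) ⊆ {x} := by
          intro w hw
          simp only [Finset.mem_filter, Finset.mem_insert, Finset.mem_singleton] at hw ⊢
          rcases hw with ⟨h4 | h4, h5⟩
          · exact h4
          · exact absurd h5 (hno w h4)
        have h3 := Finset.card_le_card h2
        simp at h3 ⊢
        omega
      · have hcard : K.card < S.card :=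
          Finset.card_lt_card (Finset.ssubset_iff_subset_ne.2 ⟨hKS, fun e => huK (e ▸ hu1)⟩)
        obtain ⟨P1, hP1, p, q, hp, hxp, hy, hdc⟩ := ih K u1 T (d - 1) (by omega) hK (by
          intro u hu
          have h1 := hd u (hKS hu)
          have h3 : (insert x S).filter (G.Adj u) ⊆
              insert x ((insert u1 K).filter (G.Adj u)) := by
            intro w hw
            simp only [Finset.mem_filter, Finset.mem_insert] at hw ⊢
            rcases hw with ⟨h4 | h4, h5⟩
            · exact Or.inl h4
            · rcases hcl u hu w h4 h5 with h6 | h6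
              · exact Or.inr ⟨Or.inr h6, h5⟩
              · exact Or.inr ⟨Or.inl h6, h5⟩
          have h4 := (Finset.card_le_card h3).trans (Finset.card_insert_le _ _)
          omega)
        have hn : u1 ∉ P1 := fun e => huK (hP1 e)
        refine ⟨insert u1 P1, Finset.insert_subset hu1 (hP1.trans hKS), u1, q,
          hp.cons hxp hn, hxu, hy, ?_⟩
        rw [Finset.card_insert_of_notMem hn]
        omega

/-- From a rooted piece one gets a path from the root that is long or ends in a vertex all of whose
neighbours are on the path or in the target. -/
theorem rooted_closed_path [Fintype V] (k m : ℕ) (hdeg : ∀ u, k ≤ (Finset.univ.filter (G.Adj u)).card) :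
    ∀ (S : Finset V) (x : V) (T : Set V) (X : Finset V) (x0 : V), S.card ≤ m →
    GoodPiece G S x T → PathOn G X x0 x → Disjoint X S →
    (∀ u ∈ S, ∀ w, G.Adj u w → w ∈ S ∨ w ∈ T ∨ w ∈ X) →
    ∃ P q, PathOn G P x0 q ∧ P ⊆ X ∪ S ∧ q ∈ S ∧ (∃ y ∈ T, G.Adj q y) ∧
      (k ≤ P.card ∨ ∀ w, G.Adj q w → w ∈ P ∨ w ∈ T) := by
  induction m with
  | zero =>
    intro S x T X x0 hS h
    have := h.ne.card_pos
    omega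
  | succ m ih =>
    intro S x T X x0 hS h hX hXS hN
    rcases good_cases h with ⟨v, hv, K, hKS, hvK, hK, hcl, hT, P2, hP2S, hKP, q2, hp2, hz⟩ |
      ⟨u1, hu1, hxu, h3⟩
    · obtain ⟨P1, hP1, p, q, hp, hxp, ⟨y, hy, hqy⟩, hdc⟩ :=
        rooted_path (G := G) K.card K x {v} (k + 1 - X.card) le_rfl hK (by
        intro u hu
        have h1 := hdeg u
        have h3 : Finset.univ.filter (G.Adj u) ⊆
            ((insert x K).filter (G.Adj u)) ∪ (X.erase x) ∪ (({v} : Finset V).filter (G.Adj u)) := by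
          intro w hw
          simp only [Finset.mem_filter, Finset.mem_insert, Finset.mem_union, Finset.mem_univ,
            true_and, Finset.mem_singleton, Finset.mem_erase] at hw ⊢
          rcases hN u (hKS hu) w hw with h4 | h4 | h4
          · rcases hcl u hu w h4 hw with h6 | h6
            · exact Or.inl (Or.inl ⟨Or.inr h6, hw⟩)
            · exact Or.inr ⟨h6, hw⟩
          · exact absurd hw (hT u hu w h4)
          · by_cases hwx : w = x
            · exact Or.inl (Or.inl ⟨Or.inl hwx, hw⟩)
            · exact Or.inl (Or.inr ⟨hwx, h4⟩)
        have h4 := (Finset.card_le_card h3).trans (Finset.card_union_le _ _)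
        have h4' := Finset.card_union_le ((insert x K).filter (G.Adj u)) (X.erase x)
        have h6 := Finset.card_erase_of_mem hX.end_mem
        have h7 := Finset.card_pos.2 ⟨_, hX.end_mem⟩
        by_cases h8 : G.Adj u v
        · rw [if_pos ⟨v, rfl, h8⟩]
          have h9 := Finset.card_filter_le ({v} : Finset V) (G.Adj u)
          rw [Finset.card_singleton] at h9
          omega
        · have h9 : (({v} : Finset V).filter (G.Adj u)).card = 0 := by
            simp [h8, Finset.filter_singleton]
          omega)
      have hyv : y = v := hy
      subst hyv
      have hd12 : Disjoint P1 P2 := Finset.disjoint_of_subset_left hP1 hKP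
      have hs12 : P1 ∪ P2 ⊆ S := Finset.union_subset (hP1.trans hKS) hP2S
      have hd : Disjoint X (P1 ∪ P2) := Finset.disjoint_of_subset_right hs12 hXS
      refine ⟨X ∪ (P1 ∪ P2), q2, hX.join hxp (hp.join hqy hp2 hd12) hd,
        Finset.union_subset_union_right hs12, hP2S hp2.end_mem, hz, Or.inl ?_⟩
      rw [Finset.card_union_of_disjoint hd, Finset.card_union_of_disjoint hd12]
      have := Finset.card_pos.2 ⟨_, hp2.end_mem⟩
      omega
    · rcases h3 with ⟨hy, hno⟩ | ⟨K, hKS, huK, hK, hcl⟩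
      · have hd : Disjoint X {u1} := Finset.disjoint_of_subset_right (by simpa using hu1) hXS
        refine ⟨X ∪ {u1}, u1, hX.join hxu (PathOn.single u1) hd,
          Finset.union_subset_union_right (by simpa using hu1), hu1, hy, Or.inr ?_⟩
        intro w hw
        rcases hN u1 hu1 w hw with h4 | h4 | h4
        · exact absurd hw (hno w h4)
        · exact Or.inr h4
        · left; simp [h4]
      · have hcard : K.card < S.card :=
          Finset.card_lt_card (Finset.ssubset_iff_subset_ne.2 ⟨hKS, fun e => huK (e ▸ hu1)⟩)
        have hd : Disjoint X {u1} := Finset.disjoint_of_subset_right (by simpa using hu1) hXS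
        obtain ⟨P, q, h1, h2, h3, h4, h5⟩ := ih K u1 T (X ∪ {u1}) x0 (by omega) hK
          (hX.join hxu (PathOn.single u1) hd) (by
            rw [Finset.disjoint_union_left]
            exact ⟨Finset.disjoint_of_subset_right hKS hXS, by simpa using huK⟩) (by
            intro u hu w hw
            rcases hN u (hKS hu) w hw with h4 | h4 | h4
            · rcases hcl u hu w h4 hw with h6 | h6
              · exact Or.inl h6
              · right; right; simp [h6]
            · exact Or.inr (Or.inl h4)
            · right; right; simp [h4])
        refine ⟨P, q, h1, h2.trans ?_, hKS h3, h4, h5⟩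
        intro w hw
        simp only [Finset.mem_union, Finset.mem_singleton] at hw ⊢
        rcases hw with (h | h) | h
        · exact Or.inl h
        · exact Or.inr (h ▸ hu1)
        · exact Or.inr (hKS h)

end Rooted

section Cyclic

variable {V : Type*} {G : SimpleGraph V}

/-- `v : ℤ → V` runs periodically around a cycle of length `n` (an edge if `n = 2`). -/
structure CycFn (G : SimpleGraph V) (v : ℤ → V) (n : ℕ) : Prop where
  two_le : 2 ≤ n
  inj : ∀ i j, v i = v j ↔ (n : ℤ) ∣ j - i
  adj : ∀ i, G.Adj (v i) (v (i + 1))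

/-- No even cycle of length at least `2 * k`. -/
def NoEven (G : SimpleGraph V) (k : ℕ) : Prop :=
  ∀ (S : Finset V) (a b : V), PathOn G S a b → G.Adj b a → Even S.card → S.card < 2 * k

theorem CycFn.per {v : ℤ → V} {n : ℕ} (h : CycFn G v n) (i : ℤ) : v (i + n) = v i := by
  symm; rw [h.inj]; simp

theorem CycFn.shift {v : ℤ → V} {n : ℕ} (h : CycFn G v n) (i0 : ℤ) :
    CycFn G (fun i => v (i0 + i)) n := by
  refine ⟨h.two_le, ?_, ?_⟩
  · intro i j; rw [h.inj]; congr! 1; ring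
  · intro i; have := h.adj (i0 + i); rwa [add_assoc] at this

theorem CycFn.ne {v : ℤ → V} {n : ℕ} (h : CycFn G v n) {i j : ℤ} (h1 : i < j) (h2 : j < i + n) :
    v i ≠ v j := by
  intro e
  rw [h.inj] at e
  have := Int.le_of_dvd (by omega) e
  omega

theorem CycFn.eq_of {v : ℤ → V} {n : ℕ} (h : CycFn G v n) {i j : ℤ} (h1 : i < j + n)
    (h2 : j < i + n) (e : v i = v j) : i = j := by
  by_contra hne
  rcases lt_or_gt_of_ne hne with h3 | h3
  · exact h.ne h3 h2 e
  · exact h.ne h3 h1 e.symm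

theorem CycFn.rep {v : ℤ → V} {n : ℕ} (h : CycFn G v n) (a i : ℤ) :
    ∃ j, a ≤ j ∧ j < a + n ∧ v j = v i := by
  have hn : (0 : ℤ) < n := by have := h.two_le; omega
  refine ⟨a + (i - a) % n, ?_, ?_, ?_⟩
  · have := Int.emod_nonneg (i - a) hn.ne'; omega
  · have := Int.emod_lt_of_pos (i - a) hn; omega
  · rw [h.inj]
    refine ⟨(i - a) / n, ?_⟩
    have := Int.mul_ediv_add_emod (i - a) n
    linarith

theorem CycFn.arc_card {v : ℤ → V} {n : ℕ} (h : CycFn G v n) {a b : ℤ} (hb : b < a + n) :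
    ((Finset.Icc a b).image v).card = (b + 1 - a).toNat := by
  rw [Finset.card_image_of_injOn, Int.card_Icc]
  intro i hi j hj e
  simp at hi hj
  exact h.eq_of (by omega) (by omega) e

theorem CycFn.arc_disj {v : ℤ → V} {n : ℕ} (h : CycFn G v n) {a b c d : ℤ} (h1 : b < c)
    (h2 : d < a + n) : Disjoint ((Finset.Icc a b).image v) ((Finset.Icc c d).image v) := by
  rw [Finset.disjoint_left]
  intro w hw hw'
  simp only [Finset.mem_image, Finset.mem_Icc] at hw hw'
  obtain ⟨i, hi, rfl⟩ := hw
  obtain ⟨j, hj, e⟩ := hw'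
  exact h.ne (by omega) (by omega) e.symm

theorem CycFn.arc {v : ℤ → V} {n : ℕ} (h : CycFn G v n) {a b : ℤ} (hab : a ≤ b) (hb : b < a + n) :
    PathOn G ((Finset.Icc a b).image v) (v a) (v b) := by
  induction b, hab using Int.leInduction with
  | base => simpa using PathOn.single (v a)
  | succ b hab ih =>
    have h1 := ih (by omega)
    have h2 := h1.join (h.adj b) (PathOn.single (v (b + 1))) (by
      have := h.arc_disj (a := a) (b := b) (c := b + 1) (d := b + 1) (by omega) (by omega)
      simpa using this)
    have e : ((Finset.Icc a b).image v) ∪ {v (b + 1)} = (Finset.Icc a (b + 1)).image v := by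
      rw [← Finset.image_singleton, ← Finset.image_union]
      congr 1
      ext t; simp; omega
    rwa [e] at h2

theorem exists_cycFn {S : Finset V} {a b : V} (h : PathOn G S a b) (hba : G.Adj b a) :
    ∃ v : ℤ → V, CycFn G v S.card ∧ ∀ x, x ∈ S ↔ ∃ i, v i = x := by
  obtain ⟨w, h0, h1, hinj, hadj, hS⟩ := h.enum
  have h2 : 2 ≤ S.card := by
    have : 1 < S.card := Finset.one_lt_card.2 ⟨b, h.end_mem, a, h.start_mem, hba.ne⟩
    omega
  set n := S.card with hn
  have hn0 : (0 : ℤ) < n := by omega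
  have hnn : ∀ i : ℤ, 0 ≤ i % n := fun i => Int.emod_nonneg i hn0.ne'
  have hlt : ∀ i : ℤ, i % n < n := fun i => Int.emod_lt_of_pos i hn0
  refine ⟨fun i => w (i % n).toNat, ⟨h2, ?_, ?_⟩, ?_⟩
  · intro i j
    have hi := hnn i
    have hi' := hlt i
    have hj := hnn j
    have hj' := hlt j
    constructor
    · intro e
      have e1 := hinj _ (by omega) _ (by omega) e
      have e2 : i % n = j % n := by omega
      exact Int.ModEq.dvd e2
    · intro e
      have e2 : i % n = j % n := (Int.modEq_iff_dvd.2 e)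
      simp only [e2]
  · intro i
    have hi := hnn i
    have hi' := hlt i
    have key : (i + 1) % n = (i % n + 1) % n := by simp
    by_cases hc : i % n + 1 < n
    · have e : (i + 1) % n = i % n + 1 := by
        rw [key, Int.emod_eq_of_lt (by omega) hc]
      have := hadj (i % n).toNat (by omega)
      simp only [e]
      convert this using 2
      omega
    · have e0 : i % n + 1 = n := by omega
      have e : (i + 1) % n = 0 := by rw [key, e0]; simp
      simp only [e]
      have e3 : (i % n).toNat = n - 1 := by omega
      rw [e3, h1]; simpa [h0] using hba
  · intro x
    rw [hS]
    constructor
    · rintro ⟨i, hi, rfl⟩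
      refine ⟨i, ?_⟩
      change w ((i : ℤ) % n).toNat = w i
      rw [Int.emod_eq_of_lt (by omega) (by omega)]
      simp
    · rintro ⟨i, rfl⟩
      have hi := hnn i
      have hi' := hlt i
      exact ⟨_, by omega, rfl⟩

theorem count_spread {B : Finset ℤ} {l r : ℤ} (hl : ∀ x ∈ B, l ≤ x) (hr : ∀ x ∈ B, x ≤ r)
    (hs : ∀ x ∈ B, ∀ y ∈ B, x < y → x + 2 ≤ y) (hlr : l ≤ r + 2) :
    2 * (B.card : ℤ) ≤ r - l + 2 := by
  have hd : Disjoint B (B.image (· + 1)) := by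
    rw [Finset.disjoint_left]
    intro x hx hx'
    simp only [Finset.mem_image] at hx'
    obtain ⟨y, hy, e⟩ := hx'
    have := hs y hy x hx (by omega)
    omega
  have hc : (B.image (· + 1)).card = B.card :=
    Finset.card_image_of_injective _ (fun x y h => by simpa using h)
  have hsub : B ∪ B.image (· + 1) ⊆ Finset.Icc l (r + 1) := by
    intro x hx
    simp only [Finset.mem_union, Finset.mem_image] at hx
    rw [Finset.mem_Icc]
    rcases hx with hx | ⟨y, hy, e⟩
    · have := hl x hx; have := hr x hx; omega
    · have := hl y hy; have := hr y hy; omega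
  have := Finset.card_le_card hsub
  rw [Finset.card_union_of_disjoint hd, hc, Int.card_Icc] at this
  omega

/-- The non-Hamiltonian case. -/
theorem nonham_contra [Fintype V] {v : ℤ → V} {n k : ℕ} (h : CycFn G v n)
    (hmax : ∀ (S : Finset V) (a b : V), PathOn G S a b → G.Adj b a → S.card ≤ n)
    (hne : NoEven G k) (hnk : Even n → n < 2 * k)
    (hdeg : ∀ u, k ≤ (Finset.univ.filter (G.Adj u)).card)
    {P : Finset V} {q : V} (hP : PathOn G P (v 0) q) (hq : q ≠ v 0)
    (hout : ∀ w ∈ P, w ≠ v 0 → ∀ i, v i ≠ w)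
    {g0 : ℤ} (hg0 : G.Adj q (v g0)) (hg0' : v g0 ≠ v 0)
    (hcl : k ≤ P.card ∨ ∀ w, G.Adj q w → w ∈ P ∨ ∃ i, v i = w) : False := by
  have hn2 := h.two_le
  have hper : v n = v 0 := by have := h.per 0; simpa using this
  obtain ⟨P', p, hP', hpq, h0p, hcard, hsub⟩ : ∃ (P' : Finset V) (p : V), v 0 ∉ P' ∧
      PathOn G P' p q ∧ G.Adj (v 0) p ∧ P.card = P'.card + 1 ∧ P' ⊆ P := by
    cases hP with
    | single => exact absurd rfl hq
    | @cons S _ b _ hp ha hn =>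
      exact ⟨S, b, hn, hp, ha, by rw [Finset.card_insert_of_notMem hn], Finset.subset_insert _ _⟩
  have hdisj : ∀ a b, Disjoint P' ((Finset.Icc a b).image v) := by
    intro a b
    rw [Finset.disjoint_left]
    intro w hw hw'
    simp only [Finset.mem_image] at hw'
    obtain ⟨i, _, e⟩ := hw'
    exact hout w (hsub hw) (fun e' => hP' (e' ▸ hw)) i e
  have hqout : ∀ i, v i ≠ q := hout q (hsub hpq.end_mem) hq
  have hqdisj : ∀ a b, Disjoint {q} ((Finset.Icc a b).image v) := by
    intro a b
    rw [Finset.disjoint_left]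
    intro w hw hw'
    simp only [Finset.mem_image, Finset.mem_singleton] at hw hw'
    obtain ⟨i, _, e⟩ := hw'
    exact hqout i (e.trans hw)
  obtain ⟨τ, hτ⟩ : ∃ τ : ℤ, τ = (P.card : ℤ) := ⟨_, rfl⟩
  have hc1 : ∀ g : ℤ, 0 < g → g < n → G.Adj q (v g) →
      τ ≤ g ∧ ((τ + n - g) % 2 = 0 → τ + n - g < 2 * k) := by
    intro g hg hgn ha
    have hp := hpq.join ha (h.arc (a := g) (b := n) hgn.le (by omega)) (hdisj _ _)
    rw [hper] at hp
    have h1 := hmax _ _ _ hp h0p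
    have h2 := hne _ _ _ hp h0p
    rw [Finset.card_union_of_disjoint (hdisj _ _), h.arc_card (by omega)] at h1 h2
    refine ⟨by omega, fun hev => ?_⟩
    have := h2 (by rw [Nat.even_iff]; omega)
    omega
  have hc2 : ∀ g : ℤ, 0 < g → g < n → G.Adj q (v g) →
      g + τ ≤ n ∧ ((τ + g) % 2 = 0 → τ + g < 2 * k) := by
    intro g hg hgn ha
    have hp := hpq.join ha (h.arc (a := 0) (b := g) hg.le (by omega)).symm (hdisj _ _)
    have h1 := hmax _ _ _ hp h0p
    have h2 := hne _ _ _ hp h0p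
    rw [Finset.card_union_of_disjoint (hdisj _ _), h.arc_card (by omega)] at h1 h2
    refine ⟨by omega, fun hev => ?_⟩
    have := h2 (by rw [Nat.even_iff]; omega)
    omega
  have hc3 : ∀ g g' : ℤ, 0 < g → g < g' → g' < n → G.Adj q (v g) → G.Adj q (v g') →
      g + 2 ≤ g' ∧ ((n - (g' - g)) % 2 = 0 → n - (g' - g) + 2 < 2 * k) := by
    intro g g' hg hgg hgn ha ha'
    have hp := (PathOn.single (G := G) q).join ha'
      (h.arc (a := g') (b := g + n) (by omega) (by omega)) (hqdisj _ _)
    rw [h.per] at hp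
    have h1 := hmax _ _ _ hp ha.symm
    have h2 := hne _ _ _ hp ha.symm
    rw [Finset.card_union_of_disjoint (hqdisj _ _), h.arc_card (by omega),
      Finset.card_singleton] at h1 h2
    refine ⟨by omega, fun hev => ?_⟩
    have := h2 (by rw [Nat.even_iff]; omega)
    omega
  have hnk' : (n : ℤ) % 2 = 0 → (n : ℤ) < 2 * k := by
    intro he
    have := hnk (by rw [Nat.even_iff]; omega)
    omega
  obtain ⟨g, hg1, hg2, hg3⟩ := h.rep 0 g0
  have hg4 : g ≠ 0 := by rintro rfl; exact hg0' hg3.symm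
  rw [← hg3] at hg0
  rcases hcl with hcl | hcl
  · have h1 := hc1 g (by omega) (by omega) hg0
    have h2 := hc2 g (by omega) (by omega) hg0
    omega
  · set A : Finset ℤ := (Finset.Ioo (0 : ℤ) n).filter (fun g => G.Adj q (v g)) with hA
    have memA : ∀ x, x ∈ A ↔ (0 < x ∧ x < n) ∧ G.Adj q (v x) := by
      intro x; simp [hA]
    have hAne : A.Nonempty := ⟨g, (memA g).2 ⟨by omega, hg0⟩⟩
    have hAcard : (k : ℤ) ≤ A.card + τ - 1 := by
      have hs : Finset.univ.filter (G.Adj q) ⊆ P.erase q ∪ A.image v := by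
        intro w hw
        simp only [Finset.mem_filter, Finset.mem_univ, true_and] at hw
        simp only [Finset.mem_union, Finset.mem_erase, Finset.mem_image]
        rcases hcl w hw with h1 | ⟨i, hi⟩
        · exact Or.inl ⟨hw.ne.symm, h1⟩
        · obtain ⟨j, hj1, hj2, hj3⟩ := h.rep 0 i
          rw [hi] at hj3
          by_cases hj0 : j = 0
          · left
            refine ⟨hw.ne.symm, ?_⟩
            rw [← hj3, hj0]; exact hP.start_mem
          · right
            exact ⟨j, (memA j).2 ⟨by omega, hj3 ▸ hw⟩, hj3⟩
      have h1 := Finset.card_le_card hs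
      have h2 := Finset.card_union_le (P.erase q) (A.image v)
      have h3 := Finset.card_erase_of_mem (hP.end_mem)
      have h4 := Finset.card_pos.2 ⟨_, hP.end_mem⟩
      have h5 := Finset.card_image_le (s := A) (f := v)
      have h6 := hdeg q
      omega
    have hsp : ∀ x ∈ A, ∀ y ∈ A, x < y → x + 2 ≤ y := by
      intro x hx y hy hxy
      rw [memA] at hx hy
      exact (hc3 x y (by omega) hxy (by omega) hx.2 hy.2).1
    obtain ⟨g1, hg1A, hg1m⟩ : ∃ g1 ∈ A, ∀ x ∈ A, g1 ≤ x :=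
      ⟨A.min' hAne, A.min'_mem _, fun x hx => A.min'_le x hx⟩
    obtain ⟨ga, hgaA, hgam⟩ : ∃ ga ∈ A, ∀ x ∈ A, x ≤ ga :=
      ⟨A.max' hAne, A.max'_mem _, fun x hx => A.le_max' x hx⟩
    have hcnt := count_spread hg1m hgam hsp (by have := hg1m ga hgaA; omega)
    have hg1' := (memA g1).1 hg1A
    have hga' := (memA ga).1 hgaA
    have e1 := hc1 g1 (by omega) (by omega) hg1'.2
    have e2 := hc2 ga (by omega) (by omega) hga'.2
    have hodd : (n : ℤ) % 2 = 1 := by omega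
    have hp1 : (τ + g1) % 2 = 0 := by omega
    have hp2 : (τ + ga) % 2 = 1 := by omega
    have hBne : (A.filter (fun x => (τ + x) % 2 = 0)).Nonempty := ⟨g1, Finset.mem_filter.2 ⟨hg1A, hp1⟩⟩
    obtain ⟨x, hxB, hxm⟩ : ∃ x ∈ A.filter (fun x => (τ + x) % 2 = 0),
        ∀ y ∈ A.filter (fun x => (τ + x) % 2 = 0), y ≤ x :=
      ⟨_, Finset.max'_mem _ hBne, fun y hy => Finset.le_max' _ y hy⟩
    rw [Finset.mem_filter] at hxB
    have hxga : x < ga := by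
      have := hgam x hxB.1
      have : x ≠ ga := by rintro rfl; omega
      omega
    have hCne : (A.filter (fun y => x < y)).Nonempty := ⟨ga, by simp [hgaA, hxga]⟩
    obtain ⟨y, hyB, hym⟩ : ∃ y ∈ A.filter (fun y => x < y),
        ∀ z ∈ A.filter (fun y => x < y), y ≤ z :=
      ⟨_, Finset.min'_mem _ hCne, fun z hz => Finset.min'_le _ z hz⟩
    rw [Finset.mem_filter] at hyB
    have hy1 : (τ + y) % 2 = 1 := by
      by_contra hc
      have := hxm y (by rw [Finset.mem_filter]; exact ⟨hyB.1, by omega⟩)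
      omega
    have hyga := hgam y hyB.1
    have hxg1 := hg1m x hxB.1
    have hx' := (memA x).1 hxB.1
    have hy' := (memA y).1 hyB.1
    have e3 := hc3 x y (by omega) hyB.2 (by omega) hx'.2 hy'.2
    have hcardA : A.card = (A.filter (fun z => x < z)).card + (A.filter (fun z => ¬ x < z)).card :=
      (Finset.card_filter_add_card_filter_not (s := A) (fun z => x < z)).symm
    have c1 := count_spread (B := A.filter (fun z => x < z)) (l := y) (r := ga) hym
      (fun z hz => hgam z (Finset.mem_filter.1 hz).1)
      (fun a ha b hb => hsp a (Finset.mem_filter.1 ha).1 b (Finset.mem_filter.1 hb).1) (by omega)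
    have c2 := count_spread (B := A.filter (fun z => ¬ x < z)) (l := g1) (r := x)
      (fun z hz => hg1m z (Finset.mem_filter.1 hz).1)
      (fun z hz => not_lt.1 (Finset.mem_filter.1 hz).2)
      (fun a ha b hb => hsp a (Finset.mem_filter.1 ha).1 b (Finset.mem_filter.1 hb).1) (by omega)
    omega

end Cyclic

section Hamiltonian

variable {V : Type*} {G : SimpleGraph V}

theorem chord_bound {v : ℤ → V} {n k : ℕ} (h : CycFn G v n) (hne : NoEven G k) (hk : 3 ≤ k)
    {i x : ℤ} (hx0 : 0 < x) (hxn : x < n) (hx : x % 2 = 1) (ha : G.Adj (v i) (v (i + x))) :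
    x ≤ 2 * k - 3 := by
  have hp := h.arc (a := i) (b := i + x) (by omega) (by omega)
  have h1 := hne _ _ _ hp ha.symm
  rw [h.arc_card (by omega)] at h1
  have := h1 (by rw [Nat.even_iff]; omega)
  omega

theorem cross_bound {v : ℤ → V} {n k : ℕ} (h : CycFn G v n) (hne : NoEven G k)
    (hn : (n : ℤ) % 2 = 1)
    {i x y : ℤ} (hx0 : 2 ≤ x) (hxy : x < y) (hyn : y ≤ n - 2) (hodd : (y - x) % 2 = 1)
    (ha : G.Adj (v i) (v (i + x))) (hb : G.Adj (v (i + 1)) (v (i + 1 + y))) :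
    n - (y - x) < 2 * k := by
  have hd := h.arc_disj (a := i + 1) (b := i + x) (c := i + 1 + y) (d := i + n)
    (by omega) (by omega)
  have hp := (h.arc (a := i + 1) (b := i + x) (by omega) (by omega)).symm.join hb
    (h.arc (a := i + 1 + y) (b := i + n) (by omega) (by omega)) hd
  rw [h.per] at hp
  have h1 := hne _ _ _ hp ha
  rw [Finset.card_union_of_disjoint hd, h.arc_card (by omega), h.arc_card (by omega)] at h1
  have := h1 (by rw [Nat.even_iff]; omega)
  omega

theorem zigzag {v : ℤ → V} {n : ℕ} (h : CycFn G v n) (h3 : ∀ i, G.Adj (v i) (v (i + 3)))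
    (t : ℕ) (ht : 2 * t + 2 ≤ n) :
    PathOn G ((Finset.Icc (0 : ℤ) (2 * t + 1)).image v) (v (2 * t)) (v (2 * t + 1)) := by
  induction t with
  | zero => simpa using h.arc (a := 0) (b := 1) (by omega) (by omega)
  | succ t ih =>
    have h1 := (ih (by omega)).symm
    have d1 := h.arc_disj (a := 0) (b := 2 * t + 1) (c := 2 * t + 3) (d := 2 * t + 3)
      (by omega) (by omega)
    have a1 : G.Adj (v (2 * t)) (v (2 * t + 3)) := h3 _
    have h2 := h1.join a1 (PathOn.single _) (by simpa using d1)
    have a2 : G.Adj (v (2 * t + 2)) (v (2 * t + 1)) := by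
      have := (h.adj (2 * t + 1)).symm
      rwa [show (2 * (t : ℤ) + 1 + 1) = 2 * t + 2 by ring] at this
    have h4 := h2.cons a2 (by
      simp only [Finset.mem_union, Finset.mem_image, Finset.mem_Icc, Finset.mem_singleton]
      rintro (⟨j, hj, e⟩ | e)
      · exact h.ne (by omega) (by omega) e
      · exact h.ne (by omega) (by omega) e)
    have e : insert (v (2 * (t : ℤ) + 2)) ((Finset.Icc (0 : ℤ) (2 * t + 1)).image v ∪ {v (2 * t + 3)})
        = (Finset.Icc (0 : ℤ) (2 * (t + 1 : ℕ) + 1)).image v := by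
      rw [← Finset.image_singleton, ← Finset.image_union, ← Finset.image_insert]
      congr 1
      ext z; simp; omega
    rw [e] at h4
    convert h4 using 2 <;> push_cast <;> ring

/-- Forward neighbours of `v i` at offsets of parity `r`. -/
noncomputable def offs (G : SimpleGraph V) (v : ℤ → V) (n : ℕ) (r : ℤ) (i : ℤ) : Finset ℤ :=
  (Finset.Ioo (0 : ℤ) n).filter (fun x => x % 2 = r ∧ G.Adj (v i) (v (i + x)))

theorem mem_offs {v : ℤ → V} {n : ℕ} {r i x : ℤ} :
    x ∈ offs G v n r i ↔ (0 < x ∧ x < n) ∧ x % 2 = r ∧ G.Adj (v i) (v (i + x)) := by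
  simp [offs]

theorem adj_rev {v : ℤ → V} {n : ℕ} (h : CycFn G v n) (i x : ℤ) :
    G.Adj (v (i + x)) (v (i + x + (n - x))) ↔ G.Adj (v i) (v (i + x)) := by
  rw [show i + x + (n - x) = i + n by ring, h.per]
  exact ⟨fun h => h.symm, fun h => h.symm⟩

theorem offs_even_bound {v : ℤ → V} {n k : ℕ} (h : CycFn G v n) (hne : NoEven G k) (hk : 3 ≤ k)
    (hn : (n : ℤ) % 2 = 1) {i y : ℤ} (hy : y ∈ offs G v n 0 i) : n - y ≤ 2 * k - 3 := by
  rw [mem_offs] at hy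
  exact chord_bound h hne hk (i := i + y) (by omega) (by omega) (by omega)
    ((adj_rev h i y).2 hy.2.2)

theorem offs_cross {v : ℤ → V} {n k : ℕ} (h : CycFn G v n) (hne : NoEven G k) (hk : 3 ≤ k)
    (hn : (n : ℤ) % 2 = 1) {i x y : ℤ} (hx : x ∈ offs G v n 1 i) (hy : y ∈ offs G v n 0 (i + 1))
    (hxy : x < y) : n - 2 * k + 2 ≤ y - x := by
  have hyb := offs_even_bound h hne hk hn hy
  rw [mem_offs] at hx hy
  have hxb := chord_bound h hne hk (by omega) (by omega) (by omega) hx.2.2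
  by_cases h1 : x = 1
  · omega
  by_cases h2 : y = n - 1
  · omega
  have := cross_bound h hne hn (by omega) hxy (by omega) (by omega) hx.2.2 hy.2.2
  omega

theorem one_mem_offs {v : ℤ → V} {n : ℕ} (h : CycFn G v n) (i : ℤ) : 1 ∈ offs G v n 1 i := by
  have := h.two_le
  rw [mem_offs]
  exact ⟨by omega, by norm_num, h.adj i⟩

/-- The main counting inequality, with a set `W` of extra even offsets. -/
theorem offs_count {v : ℤ → V} {n k : ℕ} (h : CycFn G v n) (hne : NoEven G k) (hk : 3 ≤ k)
    (hn : (n : ℤ) % 2 = 1) (hnk : 2 * k + 1 ≤ n) (i M : ℤ) (hM : M ∈ offs G v n 1 i)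
    (hMm : ∀ x ∈ offs G v n 1 i, x ≤ M) (W : Finset ℤ)
    (hW1 : ∀ w ∈ W, w % 2 = 0 ∧ 0 < w ∧ w < n)
    (hW2 : ∀ w ∈ W, w ∉ offs G v n 0 (i + 1)) (hW3 : ∀ w ∈ W, w - 1 ∉ offs G v n 1 i)
    (hW4 : ∀ w ∈ W, w ≤ M ∨ n = 2 * k + 1) :
    (offs G v n 1 i).card + (offs G v n 0 (i + 1)).card + W.card ≤ k := by
  obtain ⟨m, hm⟩ : ∃ m : ℕ, n = 2 * m + 1 := ⟨n / 2, by omega⟩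
  set A := offs G v n 1 i with hA
  set E := offs G v n 0 (i + 1) with hE
  have hAb : ∀ x ∈ A, 0 < x ∧ x % 2 = 1 ∧ x ≤ 2 * k - 3 := by
    intro x hx
    have hx' := mem_offs.1 hx
    exact ⟨by omega, by omega, chord_bound h hne hk (by omega) (by omega) (by omega) hx'.2.2⟩
  have hEb : ∀ y ∈ E, 0 < y ∧ y < n ∧ y % 2 = 0 := by
    intro y hy
    have hy' := mem_offs.1 hy
    exact ⟨by omega, by omega, by omega⟩
  have hcr : ∀ x ∈ A, ∀ y ∈ E, x < y → n - 2 * k + 2 ≤ y - x :=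
    fun x hx y hy hxy => offs_cross h hne hk hn hx hy hxy
  set B := A.image (· + 1) with hB
  set T := (Finset.Icc (1 : ℤ) ((m : ℤ) - k)).image (fun j => M + 1 + 2 * j) with hT
  have hBc : B.card = A.card := Finset.card_image_of_injective _ (fun x y h => by simpa using h)
  have hTc : T.card = m - k := by
    rw [hT, Finset.card_image_of_injective _ (fun x y h => by simpa using h), Int.card_Icc]; omega
  have memB : ∀ z, z ∈ B ↔ z - 1 ∈ A := by
    intro z
    simp only [hB, Finset.mem_image]
    constructor
    · rintro ⟨a, ha, rfl⟩; simpa using ha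
    · intro hz; exact ⟨z - 1, hz, by ring⟩
  have hTb : ∀ z ∈ T, M + 3 ≤ z ∧ z ≤ M + n - 2 * k ∧ z % 2 = 0 := by
    intro z hz
    simp only [hT, Finset.mem_image, Finset.mem_Icc] at hz
    obtain ⟨j, hj, rfl⟩ := hz
    have := hAb M hM
    exact ⟨by omega, by omega, by omega⟩
  have hMb := hAb M hM
  have d1 : Disjoint B E := by
    rw [Finset.disjoint_left]
    intro z hz hz'
    have := hcr (z - 1) ((memB z).1 hz) z hz' (by omega)
    omega
  have d2 : Disjoint (B ∪ E) T := by
    rw [Finset.disjoint_left]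
    intro z hz hz'
    have h1 := hTb z hz'
    rcases Finset.mem_union.1 hz with h2 | h2
    · have := hMm _ ((memB z).1 h2); omega
    · have := hcr M hM z h2 (by omega); omega
  have d3 : Disjoint (B ∪ E ∪ T) W := by
    rw [Finset.disjoint_left]
    intro z hz hz'
    have h1 := hW4 z hz'
    rcases Finset.mem_union.1 hz with h2 | h2
    · rcases Finset.mem_union.1 h2 with h3 | h3
      · exact hW3 z hz' ((memB z).1 h3)
      · exact hW2 z hz' h3
    · have := hTb z h2; omega
  have hsub : B ∪ E ∪ T ∪ W ⊆ (Finset.Icc (1 : ℤ) m).image (fun j => 2 * j) := by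
    intro z hz
    have key : z % 2 = 0 ∧ 0 < z ∧ z < n := by
      simp only [Finset.mem_union] at hz
      rcases hz with ((h1 | h1) | h1) | h1
      · have := hAb _ ((memB z).1 h1); omega
      · have := hEb _ h1; omega
      · have := hTb _ h1; omega
      · have := hW1 _ h1; omega
    simp only [Finset.mem_image, Finset.mem_Icc]
    exact ⟨z / 2, by omega, by omega⟩
  have hc := (Finset.card_le_card hsub).trans Finset.card_image_le
  rw [Finset.card_union_of_disjoint d3, Finset.card_union_of_disjoint d2,
    Finset.card_union_of_disjoint d1, hBc, hTc, Int.card_Icc] at hc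
  omega

theorem offs_per {v : ℤ → V} {n : ℕ} (h : CycFn G v n) (r i : ℤ) :
    offs G v n r (i + n) = offs G v n r i := by
  ext x
  rw [mem_offs, mem_offs, h.per, show i + n + x = i + x + n by ring, h.per]

theorem offs_congr {v : ℤ → V} {n : ℕ} (h : CycFn G v n) (r : ℤ) {i j : ℤ} (e : v i = v j) :
    offs G v n r i = offs G v n r j := by
  ext x
  have : v (i + x) = v (j + x) := by
    rw [h.inj] at e ⊢
    rwa [show j + x - (i + x) = j - i by ring]
  rw [mem_offs, mem_offs, e, this]

theorem offs_double {v : ℤ → V} {n : ℕ} (h : CycFn G v n) (hn : (n : ℤ) % 2 = 1) :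
    ∑ i ∈ Finset.Ico (0 : ℤ) n, (offs G v n 1 i).card =
      ∑ i ∈ Finset.Ico (0 : ℤ) n, (offs G v n 0 i).card := by
  have hn0 : (0 : ℤ) < n := by omega
  have hnn : ∀ i : ℤ, 0 ≤ i % n := fun i => Int.emod_nonneg i hn0.ne'
  have hlt : ∀ i : ℤ, i % n < n := fun i => Int.emod_lt_of_pos i hn0
  have hv : ∀ i x : ℤ, v (i % n + x) = v (i + x) := by
    intro i x
    rw [h.inj]
    refine ⟨i / n, ?_⟩
    have := Int.mul_ediv_add_emod i n
    linarith
  have key : ∀ r s : ℤ, (∀ x : ℤ, x % 2 = r → (n - x) % 2 = s) →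
      ∀ a ∈ (Finset.Ico (0 : ℤ) n).sigma (fun i => offs G v n r i),
        (⟨(a.1 + a.2) % n, n - a.2⟩ : (_ : ℤ) × ℤ) ∈
          (Finset.Ico (0 : ℤ) n).sigma (fun i => offs G v n s i) := by
    rintro r s hrs ⟨i, x⟩ ha
    simp only [Finset.mem_sigma, Finset.mem_Ico, mem_offs] at ha ⊢
    refine ⟨⟨hnn _, hlt _⟩, by omega, hrs x ha.2.2.1, ?_⟩
    rw [hv]
    have := hv (i + x) 0
    rw [add_zero, add_zero] at this
    rw [this]
    exact (adj_rev h i x).2 ha.2.2.2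
  have inv : ∀ r : ℤ, ∀ a ∈ (Finset.Ico (0 : ℤ) n).sigma (fun i => offs G v n r i),
      (⟨((a.1 + a.2) % n + (n - a.2)) % n, n - (n - a.2)⟩ : (_ : ℤ) × ℤ) = a := by
    rintro r ⟨i, x⟩ ha
    simp only [Finset.mem_sigma, Finset.mem_Ico] at ha
    have e1 : ((i + x) % n + (n - x)) % n = i := by
      rw [Int.emod_add_emod, show i + x + (n - x) = i + n by ring, Int.add_emod_right]
      exact Int.emod_eq_of_lt (by omega) (by omega)
    have e2 : (n : ℤ) - (n - x) = x := by ring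
    simp only [e1, e2]
  rw [← Finset.card_sigma, ← Finset.card_sigma]
  exact Finset.card_nbij' (fun a => ⟨(a.1 + a.2) % n, n - a.2⟩)
    (fun a => ⟨(a.1 + a.2) % n, n - a.2⟩)
    (key 1 0 (by omega)) (key 0 1 (by omega)) (inv 1) (inv 0)

theorem offs_deg [Fintype V] {v : ℤ → V} {n k : ℕ} (h : CycFn G v n)
    (hsurj : ∀ x, ∃ i, v i = x)
    (hdeg : ∀ u, k ≤ (Finset.univ.filter (G.Adj u)).card) (i : ℤ) :
    k ≤ (offs G v n 1 i).card + (offs G v n 0 i).card := by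
  have hs : Finset.univ.filter (G.Adj (v i)) ⊆
      (offs G v n 1 i ∪ offs G v n 0 i).image (fun x => v (i + x)) := by
    intro w hw
    simp only [Finset.mem_filter, Finset.mem_univ, true_and] at hw
    obtain ⟨j0, rfl⟩ := hsurj w
    obtain ⟨j, h1, h2, h3⟩ := h.rep i j0
    rw [← h3] at hw ⊢
    have hij : i ≠ j := by rintro rfl; exact hw.ne rfl
    simp only [Finset.mem_image, Finset.mem_union, mem_offs]
    refine ⟨j - i, ?_, by ring_nf⟩
    rw [show i + (j - i) = j by ring]
    rcases Int.emod_two_eq_zero_or_one (j - i) with h4 | h4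
    · right; exact ⟨by omega, h4, hw⟩
    · left; exact ⟨by omega, h4, hw⟩
  have h1 := (Finset.card_le_card hs).trans Finset.card_image_le
  have h2 := Finset.card_union_le (offs G v n 1 i) (offs G v n 0 i)
  have := hdeg (v i)
  omega

/-- The Hamiltonian case. -/
theorem ham_contra [Fintype V] {v : ℤ → V} {n k : ℕ} (h : CycFn G v n) (hne : NoEven G k)
    (hk : 3 ≤ k) (hn : (n : ℤ) % 2 = 1) (hnk : 2 * k + 1 ≤ n) (hsurj : ∀ x, ∃ i, v i = x)
    (hdeg : ∀ u, k ≤ (Finset.univ.filter (G.Adj u)).card) : False := by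
  have hmaxM : ∀ i, ∃ M ∈ offs G v n 1 i, ∀ x ∈ offs G v n 1 i, x ≤ M := fun i =>
    ⟨_, Finset.max'_mem _ ⟨1, one_mem_offs h i⟩, fun x hx => Finset.le_max' _ x hx⟩
  have hub : ∀ i, (offs G v n 1 i).card + (offs G v n 0 (i + 1)).card ≤ k := by
    intro i
    obtain ⟨M, hM, hMm⟩ := hmaxM i
    simpa using offs_count h hne hk hn hnk i M hM hMm ∅ (by simp) (by simp) (by simp) (by simp)
  have hlb := offs_deg h hsurj hdeg
  -- the number of even offsets is constant
  have hmono : ∀ (i : ℤ) (t : ℕ), (offs G v n 0 (i + t)).card ≤ (offs G v n 0 i).card := by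
    intro i t
    induction t with
    | zero => simp
    | succ t ih =>
      have h1 := hub (i + t)
      have h2 := hlb (i + t)
      rw [show i + ((t + 1 : ℕ) : ℤ) = i + t + 1 by push_cast; ring]
      omega
  have hstep : ∀ i, (offs G v n 0 (i + 1)).card = (offs G v n 0 i).card := by
    intro i
    have h1 := hmono i 1
    have h2 := hmono (i + 1) (n - 1)
    rw [show i + 1 + ((n - 1 : ℕ) : ℤ) = i + n by push_cast [show 1 ≤ n by omega]; ring,
      offs_per h] at h2
    push_cast at h1
    omega
  have hsum : ∀ i, (offs G v n 1 i).card + (offs G v n 0 i).card = k := by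
    intro i
    have := hub i; have := hlb i; have := hstep i; omega
  have hE : ∀ t : ℕ, (offs G v n 0 t).card = (offs G v n 0 0).card := by
    intro t
    induction t with
    | zero => simp
    | succ t ih => rw [← ih]; push_cast; exact hstep t
  have hEall : ∀ i, (offs G v n 0 i).card = (offs G v n 0 0).card := by
    intro i
    obtain ⟨j, h1, h2, h3⟩ := h.rep 0 i
    rw [← offs_congr h 0 h3]
    obtain ⟨t, rfl⟩ := Int.eq_ofNat_of_zero_le h1
    exact hE t
  have hhalf : 2 * (offs G v n 0 0).card = k := by
    have hd := offs_double h hn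
    have e1 : ∀ i ∈ Finset.Ico (0 : ℤ) n, (offs G v n 1 i).card = k - (offs G v n 0 0).card := by
      intro i _
      have := hsum i; have := hEall i; omega
    rw [Finset.sum_congr rfl e1, Finset.sum_congr rfl (fun i _ => hEall i), Finset.sum_const,
      Finset.sum_const, Int.card_Ico] at hd
    simp only [smul_eq_mul] at hd
    have h1 := Nat.eq_of_mul_eq_mul_left (by omega) hd
    have := hsum 0
    omega
  have hA2 : ∀ i, 2 ≤ (offs G v n 1 i).card := by
    intro i
    have := hsum i; have := hEall i; omega
  have heq : ∀ i, (offs G v n 1 i).card + (offs G v n 0 (i + 1)).card = k := by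
    intro i
    have := hsum i; have := hstep i; omega
  -- all chords of length three are present
  have h3 : ∀ i, G.Adj (v i) (v (i + 3)) := by
    intro i
    by_cases hc : n = 2 * k + 1
    · have fa : ∀ i x : ℤ, x % 2 = 1 → 1 ≤ x → x ≤ 2 * k - 1 →
          G.Adj (v i) (v (i + x)) ∨ G.Adj (v (i + 1)) (v (i + 1 + (x + 1))) := by
        intro i x hx h1 h2
        by_contra hcon
        push Not at hcon
        obtain ⟨M, hM, hMm⟩ := hmaxM i
        have := offs_count h hne hk hn hnk i M hM hMm {x + 1}
          (by simp; omega) (by simp [mem_offs, hcon.2]) (by simp [mem_offs, hcon.1])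
          (by intro _ _; exact Or.inr hc)
        have := heq i
        simp at *
        omega
      have fb : ∀ i x : ℤ, x % 2 = 1 → 1 ≤ x → x ≤ 2 * k - 1 →
          G.Adj (v i) (v (i + x)) → ¬ G.Adj (v (i + 1)) (v (i + 1 + (x + 1))) := by
        intro i x hx h1 h2 ha hb
        have := offs_cross h hne hk hn (i := i) (x := x) (y := x + 1)
          (mem_offs.2 ⟨by omega, hx, ha⟩) (mem_offs.2 ⟨by omega, by omega, hb⟩) (by omega)
        omega
      have fr : ∀ i x : ℤ, G.Adj (v (i + 1)) (v (i + 1 + (x + 1))) ↔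
          G.Adj (v (i + x + 2)) (v (i + x + 2 + (2 * k - x))) := by
        intro i x
        rw [← adj_rev h (i + 1) (x + 1), show i + 1 + (x + 1) = i + x + 2 by ring,
          show (n : ℤ) - (x + 1) = 2 * k - x by omega]
      have fd : ∀ i x : ℤ, x % 2 = 1 → 1 ≤ x → x ≤ 2 * k - 3 →
          G.Adj (v (i + 2)) (v (i + 2 + (x + 2))) → G.Adj (v i) (v (i + x)) := by
        intro i x hx h1 h2 ha
        rcases fa i x hx h1 (by omega) with hb | hb
        · exact hb
        · exfalso
          have := cross_bound h hne hn (i := i + 1) (x := x + 1) (y := x + 2) (by omega) (by omega)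
            (by omega) (by omega) hb (by rw [show i + 1 + 1 = i + 2 by ring]; exact ha)
          omega
      have fchain : ∀ (t : ℕ) (j : ℤ), 2 * (t : ℤ) + 3 ≤ 2 * k - 1 →
          G.Adj (v (j + 2 * t)) (v (j + 2 * t + (2 * t + 3))) → G.Adj (v j) (v (j + 3)) := by
        intro t
        induction t with
        | zero => intro j _ ha; simpa using ha
        | succ t ih =>
          intro j ht ha
          push_cast at ht ha
          refine ih j (by omega) (fd _ _ (by omega) (by omega) (by omega) ?_)
          convert ha using 2 <;> ring
      have f3 : ∀ i : ℤ, G.Adj (v (i + 3)) (v (i + 3 + 3)) → G.Adj (v i) (v (i + 3)) := by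
        intro i ha
        rcases fa i 3 (by norm_num) (by norm_num) (by omega) with hb | hb
        · exact hb
        · exfalso
          rw [fr] at hb
          refine fb _ _ (by omega) (by omega) (by omega) hb ?_
          rw [fr, show i + 3 + 2 + (2 * k - 3) + 2 = i + 3 + n by omega, h.per,
            show i + 3 + n + (2 * k - (2 * k - 3)) = i + 3 + 3 + n by ring, h.per]
          exact ha
      rcases fa i 3 (by norm_num) (by norm_num) (by omega) with hb | hb
      · exact hb
      · rw [fr] at hb
        obtain ⟨t, rfl⟩ : ∃ t, k = t + 3 := ⟨k - 3, by omega⟩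
        have h5 := fchain t (i + 5 - 2 * t) (by push_cast; omega) (by
          push_cast at hb
          convert hb using 2 <;> ring)
        have h6 : G.Adj (v (i + 12)) (v (i + 12 + 3)) := by
          rw [← h.per (i + 5 - 2 * t), ← h.per (i + 5 - 2 * t + 3),
            show i + 5 - 2 * (t : ℤ) + n = i + 12 by push_cast [hc]; ring,
            show i + 5 - 2 * (t : ℤ) + 3 + n = i + 12 + 3 by push_cast [hc]; ring] at h5
          exact h5
        have h7 := f3 (i + 9) (by convert h6 using 2 <;> ring)
        have h8 := f3 (i + 6) (by convert h7 using 2 <;> ring)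
        have h9 := f3 (i + 3) (by convert h8 using 2 <;> ring)
        exact f3 i h9
    · by_contra hcon
      obtain ⟨M, hM, hMm⟩ := hmaxM i
      have hM5 : 5 ≤ M := by
        obtain ⟨x, hx, hx1⟩ := Finset.exists_mem_ne (s := offs G v n 1 i) (by have := hA2 i; omega) (1 : ℤ)
        have hx3 : x ≠ 3 := by
          rintro rfl; exact hcon (mem_offs.1 hx).2.2
        have hx' := mem_offs.1 hx
        have := hMm x hx
        omega
      have h4 : (4 : ℤ) ∉ offs G v n 0 (i + 1) := by
        intro hy
        have := offs_cross h hne hk hn (one_mem_offs h i) hy (by norm_num)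
        omega
      have := offs_count h hne hk hn hnk i M hM hMm {4} (by simp; omega) (by simpa using h4)
        (by
          intro w hw
          rw [Finset.mem_singleton] at hw
          subst hw
          intro hw
          exact hcon (mem_offs.1 hw).2.2) (by simp; omega)
      have := heq i
      simp at *
      omega
  have hz := zigzag h h3 (k - 1) (by omega)
  have h1 := hne _ _ _ hz (h.adj _).symm
  rw [h.arc_card (by omega)] at h1
  have := h1 (by rw [Nat.even_iff]; omega)
  omega

end Hamiltonian

section Main

variable {V : Type*} {G : SimpleGraph V}

theorem twoConn_rch [Fintype V] (h2 : TwoConnected G) (C : Finset V) (v u z : V) (hu : u ∉ C)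
    (huv : u ≠ v) (hz : z ∈ C) (hzv : z ≠ v) :
    Rch G {w | w ∉ C ∧ w ≠ v} {w | w ∈ C ∧ w ≠ v} u := by
  have hr := (h2.2 v).preconnected ⟨u, huv⟩ ⟨z, hzv⟩
  obtain ⟨p⟩ := hr
  have key : ∀ (a b : {w | w ≠ v}) (p : (G.induce {w | w ≠ v}).Walk a b), (a : V) ∉ C →
      (b : V) ∈ C → Rch G {w | w ∉ C ∧ w ≠ v} {w | w ∈ C ∧ w ≠ v} a := by
    intro a b p
    induction p with
    | nil => intro h1 h2; exact absurd h2 h1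
    | @cons a c b hac p ih =>
      intro h1 h2
      have hac' : G.Adj a c := hac
      by_cases hc : (c : V) ∈ C
      · exact Rch.base ⟨h1, a.2⟩ ⟨hc, c.2⟩ hac'
      · exact Rch.step ⟨h1, a.2⟩ hac' (ih hc h2)
  exact key _ _ p hu hz

theorem no_even_false [Fintype V] (k : ℕ) (hk : 3 ≤ k) (h2 : TwoConnected G)
    (hdeg : ∀ u, k ≤ (Finset.univ.filter (G.Adj u)).card) (hn : 2 * k + 1 ≤ Fintype.card V)
    (hne : NoEven G k) : False := by
  -- a longest cycle (possibly a single edge)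
  set 𝒞 : Finset (Finset V) :=
    Finset.univ.filter (fun S => ∃ a b, PathOn G S a b ∧ G.Adj b a) with h𝒞
  have h𝒞ne : 𝒞.Nonempty := by
    have : Nonempty V := Fintype.card_pos_iff.1 (by omega)
    obtain ⟨a⟩ := this
    have h1 := hdeg a
    obtain ⟨b, hb⟩ : (Finset.univ.filter (G.Adj a)).Nonempty := Finset.card_pos.1 (by omega)
    have hb' : G.Adj a b := by simpa using hb
    refine ⟨insert a {b}, ?_⟩
    simp only [h𝒞, Finset.mem_filter, Finset.mem_univ, true_and]
    exact ⟨a, b, (PathOn.single b).cons hb' (by simpa using hb'.ne), hb'.symm⟩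
  obtain ⟨C, hC, hCmax⟩ := Finset.exists_max_image 𝒞 Finset.card h𝒞ne
  simp only [h𝒞, Finset.mem_filter, Finset.mem_univ, true_and] at hC hCmax
  obtain ⟨a, b, hab, hba⟩ := hC
  obtain ⟨v, hv, hvC⟩ := exists_cycFn hab hba
  have hmax : ∀ (S : Finset V) (a b : V), PathOn G S a b → G.Adj b a → S.card ≤ C.card :=
    fun S a b h1 h3 => hCmax S ⟨a, b, h1, h3⟩
  have hCe : Even C.card → C.card < 2 * k := hne C a b hab hba
  by_cases hall : ∀ x, x ∈ C
  · have hCu : C.card = Fintype.card V := by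
      rw [Finset.eq_univ_of_forall hall, Finset.card_univ]
    have hodd : (C.card : ℤ) % 2 = 1 := by
      by_contra hcon
      have := hCe (by rw [Nat.even_iff]; omega)
      omega
    exact ham_contra hv hne hk hodd (by omega) (fun x => (hvC x).1 (hall x)) hdeg
  · push Not at hall
    obtain ⟨u0, hu0⟩ := hall
    have hother : ∀ w, ∃ z ∈ C, z ≠ w := by
      intro w
      by_cases hw : a = w
      · exact ⟨b, hab.end_mem, hw ▸ hba.ne⟩
      · exact ⟨a, hab.start_mem, hw⟩
    have hreach : ∀ w u, u ∉ C → u ≠ w → Rch G {t | t ∉ C ∧ t ≠ w} {t | t ∈ C ∧ t ≠ w} u := by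
      intro w u hu huw
      obtain ⟨z, hz, hzw⟩ := hother w
      exact twoConn_rch h2 C w u z hu huw hz hzw
    -- a vertex `x` of the cycle with a neighbour outside
    obtain ⟨x, hxC, y, hyC, hyx⟩ : ∃ x ∈ C, ∃ y, y ∉ C ∧ G.Adj y x := by
      have hr := hreach a u0 hu0 (fun e => hu0 (e ▸ hab.start_mem))
      clear hu0
      induction hr with
      | base h1 h3 h4 => exact ⟨_, h3.1, _, h1.1, h4⟩
      | step _ _ _ ih => exact ih
    set H : Finset V := Finset.univ.filter (fun u => Rch G {t | t ∉ C} {x} u) with hH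
    have memH : ∀ u, u ∈ H ↔ Rch G {t | t ∉ C} {x} u := by intro u; simp [hH]
    have hHC : ∀ u ∈ H, u ∉ C := fun u hu => ((memH u).1 hu).mem
    have hcl : ∀ u ∈ H, ∀ w, w ∉ C → G.Adj u w → w ∈ H := by
      intro u hu w hw ha
      rw [memH] at hu ⊢
      exact Rch.step hw ha.symm hu
    have hgood : GoodPiece G H x {t | t ∈ C ∧ t ≠ x} := by
      refine ⟨⟨y, (memH y).2 (Rch.base hyC rfl hyx)⟩, fun hx => hHC x hx hxC, fun hx => hx.2 rfl,
        fun t ht htH => hHC t htH ht.1, ?_, ?_, ?_⟩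
      · intro u hu
        refine ((memH u).1 hu).exit (by simpa using hu) ?_ ?_
        · intro s hs t ht hst
          left
          simpa using hcl s (by simpa using hs) t ht hst
        · intro s _ _ t ht _; exact ht
      · intro u hu
        refine (hreach x u (hHC u hu) (fun e => hHC u hu (e ▸ hxC))).exit (by simpa using hu) ?_ ?_
        · intro s hs t ht hst
          left
          simpa using hcl s (by simpa using hs) t ht.1 hst
        · intro s _ _ t ht _; exact ht
      · intro w hw u hu huw
        refine (hreach w u (hHC u hu) huw).exit (by simp [hu, huw]) ?_ ?_
        · intro s hs t ht hst
          have hs' : s ∈ H ∧ s ≠ w := by simpa using hs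
          left
          simp [hcl s hs'.1 t ht.1 hst, ht.2]
        · intro s _ _ t ht _
          by_cases htx : t = x
          · exact Or.inl htx
          · exact Or.inr ⟨ht.1, htx⟩
    obtain ⟨P, q, hP, hPs, hqH, ⟨z, hz, hqz⟩, hlong⟩ := rooted_closed_path k H.card hdeg H x _ {x} x
      le_rfl hgood (PathOn.single x) (by simpa using hgood.xS) (by
        intro u hu w hw
        by_cases hwC : w ∈ C
        · by_cases hwx : w = x
          · right; right; simp [hwx]
          · right; left; exact ⟨hwC, hwx⟩
        · left; exact hcl u hu w hwC hw)
    obtain ⟨i0, hi0⟩ := (hvC x).1 hxC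
    have hv' := hv.shift i0
    have hv0 : v (i0 + 0) = x := by simp [hi0]
    have hvC' : ∀ w ∈ C, ∃ i, v (i0 + i) = w := by
      intro w hw
      obtain ⟨i, hi⟩ := (hvC w).1 hw
      exact ⟨i - i0, by rw [← hi]; congr 1; ring⟩
    obtain ⟨g, hg⟩ := hvC' z hz.1
    refine nonham_contra hv' hmax hne hCe hdeg (P := P) (q := q) (by rw [hv0]; exact hP)
      (by rw [hv0]; rintro rfl; exact hgood.xS hqH) ?_ (g0 := g) (by simpa [hg] using hqz)
      (by rw [hv0]; simpa [hg] using hz.2) ?_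
    · intro w hw hwx i hi
      rw [hv0] at hwx
      have h3 := hPs hw
      simp only [Finset.mem_union, Finset.mem_singleton] at h3
      rcases h3 with h3 | h3
      · exact hwx h3
      · exact hHC w h3 ((hvC w).2 ⟨_, hi⟩)
    · rcases hlong with h3 | h3
      · exact Or.inl h3
      · right
        intro w hw
        rcases h3 w hw with h4 | h4
        · exact Or.inl h4
        · exact Or.inr (hvC' w h4.1)

end Main

/-- Voss–Zuluaga (even case): a 2-connected graph with `δ(G) ≥ k ≥ 3` on at
least `2k+1` vertices contains an even cycle of length at least `2k`. -/
theorem voss_zuluaga_even {V : Type*} [Fintype V] (G : SimpleGraph V)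
    (k : ℕ) (hk : 3 ≤ k) (h2 : TwoConnected G)
    (hδ : k ≤ G.minDegree) (hn : 2 * k + 1 ≤ Fintype.card V) :
    ∃ (v : V) (c : G.Walk v v), c.IsCycle ∧ Even c.length ∧ 2 * k ≤ c.length := by
  by_contra hcon
  refine no_even_false (G := G) k hk h2 ?_ hn ?_
  · intro u
    have h1 := hδ.trans (G.minDegree_le_degree u)
    rw [← SimpleGraph.card_neighborFinset_eq_degree] at h1
    refine h1.trans (Finset.card_le_card ?_)
    intro w hw
    simpa using hw
  · intro S a b hp hba hev
    by_contra hlt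
    obtain ⟨x, c, hc, hl⟩ := hp.toCycle hba (by omega)
    exact hcon ⟨x, c, hc, by rw [hl]; exact hev, by omega⟩
end

section
/- Every 2-connected non-bipartite graph $G$ with minimum degree $\delta(G) \geq k$ for some integer $k \geq 3$ and with at least $2k+1$ vertices contains an odd cycle of length at least $2k-1$. -/
open SimpleGraph

attribute [local instance] Classical.propDecidable

namespace VZ

/-- `l` is the vertex list of a path from `a` to `b`. -/
def IsP {V : Type*} (G : SimpleGraph V) (a b : V) (l : List V) : Prop :=
  l.IsChain G.Adj ∧ l.Nodup ∧ l.head? = some a ∧ l.getLast? = some b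

/-- Ascending segment of a sequence. -/
def up {V : Type*} (z : ℕ → V) (a b : ℕ) : List V := (List.range' a (b + 1 - a)).map z

section paths
variable {V : Type*} {G : SimpleGraph V}

theorem IsP.single (a : V) : IsP G a a [a] := by simp [IsP]

theorem IsP.append {a b c d : V} {l m : List V} (h1 : IsP G a b l) (h2 : IsP G c d m)
    (hbc : G.Adj b c) (hd : ∀ x ∈ l, x ∉ m) : IsP G a d (l ++ m) := by
  obtain ⟨c1, n1, e1, f1⟩ := h1
  obtain ⟨c2, n2, e2, f2⟩ := h2
  refine ⟨?_, ?_, ?_, ?_⟩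
  · rw [List.isChain_append]
    refine ⟨c1, c2, ?_⟩
    intro x hx y hy
    rw [f1] at hx; rw [e2] at hy
    simp at hx hy; subst hx; subst hy; exact hbc
  · rw [List.nodup_append]
    exact ⟨n1, n2, fun x hx y hy h => hd x hx (h ▸ hy)⟩
  · simp [List.head?_append, e1]
  · simp [List.getLast?_append, f2]

theorem IsP.reverse {a b : V} {l : List V} (h : IsP G a b l) : IsP G b a l.reverse := by
  obtain ⟨c1, n1, e1, f1⟩ := h
  refine ⟨?_, List.nodup_reverse.2 n1, by simpa using f1, by simpa using e1⟩
  rw [List.isChain_reverse]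
  exact c1.imp (fun a b h => h.symm)

theorem IsP.mem_left {a b : V} {l : List V} (h : IsP G a b l) : a ∈ l :=
  List.mem_of_mem_head? h.2.2.1

theorem IsP.mem_right {a b : V} {l : List V} (h : IsP G a b l) : b ∈ l :=
  List.mem_of_getLast? h.2.2.2

theorem IsP.length_pos {a b : V} {l : List V} (h : IsP G a b l) : 0 < l.length :=
  List.length_pos_of_mem h.mem_left

@[simp] theorem length_up (z : ℕ → V) (a b : ℕ) : (up z a b).length = b + 1 - a := by simp [up]

theorem mem_up {z : ℕ → V} {a b : ℕ} {x : V} : x ∈ up z a b ↔ ∃ i, a ≤ i ∧ i ≤ b ∧ z i = x := by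
  simp only [up, List.mem_map, List.mem_range'_1]
  constructor
  · rintro ⟨i, hi, rfl⟩; exact ⟨i, by omega, by omega, rfl⟩
  · rintro ⟨i, h1, h2, rfl⟩; exact ⟨i, by omega, rfl⟩

/-- `z 0, …, z p` is a path. -/
def ZP (G : SimpleGraph V) (z : ℕ → V) (p : ℕ) : Prop :=
  (∀ i, i < p → G.Adj (z i) (z (i + 1))) ∧ ∀ i j, i ≤ p → j ≤ p → z i = z j → i = j

theorem ZP.up {z : ℕ → V} {p a b : ℕ} (h : ZP G z p) (hab : a ≤ b) (hb : b ≤ p) :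
    IsP G (z a) (z b) (up z a b) := by
  obtain ⟨n, rfl⟩ := Nat.exists_eq_add_of_le hab
  induction n with
  | zero => simp [VZ.up, IsP.single]
  | succ n ih =>
    have e : VZ.up z a (a + (n+1)) = VZ.up z a (a + n) ++ [z (a + (n + 1))] := by
      have h1 : a + (n + 1) + 1 - a = (n + 1) + 1 := by omega
      have h2 : a + n + 1 - a = n + 1 := by omega
      simp only [VZ.up, h1, h2]
      rw [List.range'_concat]
      simp
    rw [e]
    refine (ih (by omega) (by omega)).append (IsP.single _) (h.1 (a + n) (by omega)) ?_
    intro x hx hx'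
    rw [mem_up] at hx
    obtain ⟨i, h1, h2, rfl⟩ := hx
    simp at hx'
    have := h.2 _ _ (by omega) (by omega) hx'
    omega

theorem IsP.exists_zp {a b : V} {l : List V} (h : IsP G a b l) :
    ∃ (z : ℕ → V) (p : ℕ), l.length = p + 1 ∧ z 0 = a ∧ z p = b ∧ ZP G z p ∧ l = VZ.up z 0 p ∧
      (∀ x, x ∈ l ↔ ∃ i, i ≤ p ∧ z i = x) := by
  have hpos := h.length_pos
  obtain ⟨c1, n1, e1, f1⟩ := h
  have key : l = VZ.up (fun i => l.getD i a) 0 (l.length - 1) := by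
    apply List.ext_getElem
    · simp; omega
    · intro i h1 h2
      simp [VZ.up, h1]
  refine ⟨fun i => l.getD i a, l.length - 1, by omega, ?_, ?_, ⟨?_, ?_⟩, key, ?_⟩
  · clear key; cases l <;> simp_all
  · clear key; rw [List.getLast?_eq_getElem?] at f1
    simp [f1]
  · intro i hi
    have := List.isChain_iff_getElem.1 c1 i (by omega)
    simp only [List.getD_eq_getElem?_getD]
    rw [List.getElem?_eq_getElem (by omega), List.getElem?_eq_getElem (by omega)]
    simpa using this
  · intro i j hi hj hij
    simp only [List.getD_eq_getElem?_getD] at hij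
    rw [List.getElem?_eq_getElem (by omega), List.getElem?_eq_getElem (by omega)] at hij
    simp at hij
    exact (List.Nodup.getElem_inj_iff n1).1 hij
  · intro x
    conv_lhs => rw [key]
    rw [mem_up]
    simp

/-- Path reachability inside a set. -/
def Rch (G : SimpleGraph V) (X : V → Prop) (a b : V) : Prop :=
  ∃ l, IsP G a b l ∧ ∀ x ∈ l, X x

theorem Rch.refl {X : V → Prop} {a : V} (h : X a) : Rch G X a a :=
  ⟨[a], IsP.single a, by simpa using h⟩

theorem Rch.symm {X : V → Prop} {a b : V} (h : Rch G X a b) : Rch G X b a := by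
  obtain ⟨l, h1, h2⟩ := h
  exact ⟨l.reverse, h1.reverse, by simpa using h2⟩

theorem IsP.prefix {a b x : V} {l : List V} (h : IsP G a b l) (hx : x ∈ l) :
    ∃ m, IsP G a x m ∧ ∀ y ∈ m, y ∈ l := by
  obtain ⟨z, p, h1, rfl, rfl, h4, h5, h6⟩ := h.exists_zp
  obtain ⟨i, hi, rfl⟩ := (h6 x).1 hx
  refine ⟨VZ.up z 0 i, h4.up (by omega) hi, ?_⟩
  intro y hy
  obtain ⟨j, _, hj, rfl⟩ := mem_up.1 hy
  exact (h6 _).2 ⟨j, by omega, rfl⟩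

theorem Rch.step {X : V → Prop} {a b c : V} (h : Rch G X a b) (hbc : G.Adj b c) (hc : X c) :
    Rch G X a c := by
  obtain ⟨l, h1, h2⟩ := h
  by_cases hcl : c ∈ l
  · obtain ⟨m, h3, h4⟩ := h1.prefix hcl
    exact ⟨m, h3, fun y hy => h2 y (h4 y hy)⟩
  · refine ⟨l ++ [c], h1.append (IsP.single c) hbc ?_, ?_⟩
    · intro x hx hx'; simp at hx'; exact hcl (hx' ▸ hx)
    · intro x hx
      simp at hx
      rcases hx with hx | rfl
      · exact h2 x hx
      · exact hc

theorem Rch.trans {X : V → Prop} {a b c : V} (h : Rch G X a b) (h' : Rch G X b c) :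
    Rch G X a c := by
  obtain ⟨l, h1, h2⟩ := h'
  obtain ⟨z, p, g1, g2, g3, g4, g5, g6⟩ := h1.exists_zp
  have : ∀ i, i ≤ p → Rch G X a (z i) := by
    intro i
    induction i with
    | zero => intro _; rw [g2]; exact h
    | succ i ih =>
      intro hi
      exact (ih (by omega)).step (g4.1 i (by omega)) (h2 _ ((g6 _).2 ⟨i+1, hi, rfl⟩))
  rw [← g3]; exact this p le_rfl

theorem Rch.inside {X : V → Prop} {w a b : V} (h : Rch G X w a) (h' : Rch G X w b) :
    Rch G (Rch G X w) a b := by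
  obtain ⟨l, h1, h2⟩ := h.symm.trans h'
  refine ⟨l, h1, ?_⟩
  intro x hx
  obtain ⟨m, h3, h4⟩ := h1.prefix hx
  exact h.trans ⟨m, h3, fun y hy => h2 y (h4 y hy)⟩

theorem Rch.right {X : V → Prop} {a b : V} (h : Rch G X a b) : X b := by
  obtain ⟨l, h1, h2⟩ := h
  exact h2 _ h1.mem_right

theorem IsP.length_le [Fintype V] {a b : V} {l : List V} (h : IsP G a b l) :
    l.length ≤ Fintype.card V := h.2.1.length_le_card

end paths
section additive
variable {c : ℕ} [NeZero c]

theorem engine (U E : Finset (ZMod c)) (al : ℕ) (hEU : E ⊆ U)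
    (h : ∀ e ∈ E, ∀ m : ℕ, 1 ≤ m → m ≤ al → e + (m : ZMod c) ∉ U) :
    U.card + E.card * al ≤ c := by
  have key : ∀ e ∈ E, ∀ e' ∈ E, ∀ m m' : ℕ, 1 ≤ m → m' ≤ al → m ≤ m' →
      e + (m : ZMod c) = e' + (m' : ZMod c) → e = e' ∧ m = m' := by
    intro e he e' he' m m' h1 h2 h3 h4
    obtain ⟨d, rfl⟩ := Nat.exists_eq_add_of_le h3
    have h5 : e = e' + (d : ZMod c) := by
      push_cast at h4
      have : e + (m : ZMod c) = (e' + d) + m := by rw [h4]; ring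
      exact add_right_cancel this
    rcases Nat.eq_zero_or_pos d with rfl | hd
    · simpa using h5
    · exact absurd (h5 ▸ hEU he) (h e' he' d hd (by omega))
  have hinj : Set.InjOn (fun q : ZMod c × ℕ => q.1 + (q.2 : ZMod c))
      (E ×ˢ Finset.Icc 1 al : Finset (ZMod c × ℕ)) := by
    rintro ⟨e, m⟩ h1 ⟨e', m'⟩ h2 h3
    simp only [Finset.coe_product, Set.mem_prod, Finset.mem_coe, Finset.mem_Icc] at h1 h2
    simp only at h3
    rcases le_total m m' with hm | hm
    · obtain ⟨rfl, rfl⟩ := key e h1.1 e' h2.1 m m' h1.2.1 h2.2.2 hm h3; rfl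
    · obtain ⟨rfl, rfl⟩ := key e' h2.1 e h1.1 m' m h2.2.1 h1.2.2 hm h3.symm; rfl
  have hc := Finset.card_image_of_injOn hinj
  rw [Finset.card_product, Nat.card_Icc] at hc
  have hdis : Disjoint U ((E ×ˢ Finset.Icc 1 al).image
      (fun q : ZMod c × ℕ => q.1 + (q.2 : ZMod c))) := by
    rw [Finset.disjoint_right]
    intro x hx
    simp only [Finset.mem_image, Finset.mem_product, Finset.mem_Icc] at hx
    obtain ⟨⟨e, m⟩, ⟨h1, h2, h3⟩, rfl⟩ := hx
    exact h e h1 m h2 h3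
  have := Finset.card_le_univ (U ∪ (E ×ˢ Finset.Icc 1 al).image
      (fun q : ZMod c × ℕ => q.1 + (q.2 : ZMod c)))
  rw [Finset.card_union_of_disjoint hdis, hc, ZMod.card] at this
  simpa using this

theorem exists_shift {x y : ZMod c} (h : x ≠ y) :
    ∃ a : ℕ, 0 < a ∧ a < c ∧ y = x + a := by
  refine ⟨(y - x).val, ?_, ZMod.val_lt _, ?_⟩
  · rw [Nat.pos_iff_ne_zero, Ne, ZMod.val_eq_zero]
    intro h'; exact h (sub_eq_zero.1 h').symm
  · rw [ZMod.natCast_zmod_val]; ring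

theorem nearest (X Y : Finset (ZMod c)) (h : ∃ x ∈ X, ∃ y ∈ Y, x ≠ y) :
    ∃ x ∈ X, ∃ a : ℕ, 0 < a ∧ a < c ∧ x + (a : ZMod c) ∈ Y ∧
      ∀ m : ℕ, 1 ≤ m → m < a → x + (m : ZMod c) ∉ X ∪ Y := by
  have hex : ∃ a : ℕ, 0 < a ∧ a < c ∧ ∃ x ∈ X, x + (a : ZMod c) ∈ Y := by
    obtain ⟨x, hx, y, hy, hxy⟩ := h
    obtain ⟨a, h1, h2, rfl⟩ := exists_shift hxy
    exact ⟨a, h1, h2, x, hx, hy⟩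
  obtain ⟨h1, h2, x, hx, hy⟩ := Nat.find_spec hex
  set a := Nat.find hex with ha
  refine ⟨x, hx, a, h1, h2, hy, ?_⟩
  intro m hm1 hm2 hmem
  rcases Finset.mem_union.1 hmem with hX | hY
  · apply Nat.find_min hex (m := a - m) (by omega)
    refine ⟨by omega, by omega, _, hX, ?_⟩
    rw [Nat.cast_sub hm2.le]
    have : x + (m : ZMod c) + ((a : ZMod c) - m) = x + a := by ring
    rw [this]; exact hy
  · exact Nat.find_min hex (m := m) hm2 ⟨by omega, by omega, x, hx, hY⟩

theorem cyc (I J : Finset (ZMod c)) (al : ℕ) (hne : ∃ i ∈ I, ∃ j ∈ J, i ≠ j)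
    (h : ∀ i ∈ I, ∀ j ∈ J, ∀ m : ℕ, 0 < m → m < c → (j = i + m → al < m) ∧ (i = j + m → al < m)) :
    ∃ m : ℕ, (I ∪ J).card + m * al ≤ c ∧
      (((I ∩ J).card = 0 ∧ m = 2) ∨
        (1 ≤ (I ∩ J).card ∧ (I ∩ J).card < (I ∪ J).card ∧ m = (I ∩ J).card + 1) ∨
        ((I ∩ J).card = (I ∪ J).card ∧ 2 ≤ (I ∪ J).card ∧ m = (I ∩ J).card)) := by
  have hal : al < c := by
    obtain ⟨i, hi, j, hj, hij⟩ := hne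
    obtain ⟨a, h1, h2, h3⟩ := exists_shift hij
    have := (h i hi j hj a h1 h2).1 h3
    omega
  have hD : ∀ e ∈ I ∩ J, ∀ m : ℕ, 1 ≤ m → m ≤ al → e + (m : ZMod c) ∉ I ∪ J := by
    intro e he m h1 h2 h3
    rw [Finset.mem_inter] at he
    rcases Finset.mem_union.1 h3 with h4 | h4
    · have := (h _ h4 e he.2 m (by omega) (by omega)).2 rfl
      omega
    · have := (h e he.1 _ h4 m (by omega) (by omega)).1 rfl
      omega
  rcases Nat.eq_zero_or_pos (I ∩ J).card with h0 | hpos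
  · refine ⟨2, ?_, Or.inl ⟨h0, rfl⟩⟩
    have hdis : I ∩ J = ∅ := Finset.card_eq_zero.1 h0
    obtain ⟨x, hx, a, a1, a2, a3, a4⟩ := nearest I J hne
    obtain ⟨y, hy, b, b1, b2, b3, b4⟩ := nearest J I (by
      obtain ⟨i, hi, j, hj, hij⟩ := hne; exact ⟨j, hj, i, hi, hij.symm⟩)
    have hxy : x ≠ y := by
      rintro rfl
      have : x ∈ I ∩ J := Finset.mem_inter.2 ⟨hx, hy⟩
      rw [hdis] at this; simp at this
    have := engine (I ∪ J) {x, y} al (by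
        intro w hw; simp at hw; rcases hw with rfl | rfl
        · simp [hx]
        · simp [hy]) (by
        intro e he m m1 m2
        simp at he
        rcases he with rfl | rfl
        · have := (h e hx _ a3 a a1 a2).1 rfl
          exact a4 m m1 (by omega)
        · have := (h _ b3 e hy b b1 b2).2 rfl
          rw [Finset.union_comm]
          exact b4 m m1 (by omega))
    rwa [Finset.card_pair hxy] at this
  · have hsub : I ∩ J ⊆ I ∪ J := fun w hw => Finset.mem_union_left _ (Finset.mem_inter.1 hw).1
    rcases (Finset.card_le_card hsub).lt_or_eq with hlt | heq
    · refine ⟨_, ?_, Or.inr (Or.inl ⟨hpos, hlt, rfl⟩)⟩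
      obtain ⟨w, hw1, hw2⟩ := Finset.exists_mem_notMem_of_card_lt_card hlt
      obtain ⟨d, hd⟩ := Finset.card_pos.1 hpos
      obtain ⟨x, hx, a, a1, a2, a3, a4⟩ := nearest ((I ∪ J) \ (I ∩ J)) (I ∩ J)
        ⟨w, by simp only [Finset.mem_sdiff]; exact ⟨hw1, hw2⟩, d, hd, by rintro rfl; exact hw2 hd⟩
      rw [Finset.mem_sdiff] at hx
      have := engine (I ∪ J) (insert x (I ∩ J)) al (by
        intro w hw; rw [Finset.mem_insert] at hw; rcases hw with rfl | hw
        · exact hx.1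
        · exact hsub hw) (by
        intro e he m m1 m2
        rw [Finset.mem_insert] at he
        rcases he with rfl | he
        · have h3 := Finset.mem_inter.1 a3
          have : al < a := by
            rcases Finset.mem_union.1 hx.1 with h4 | h4
            · exact (h e h4 _ h3.2 a a1 a2).1 rfl
            · exact (h _ h3.1 e h4 a a1 a2).2 rfl
          have := a4 m m1 (by omega)
          intro h5; apply this
          by_cases h6 : e + (m : ZMod c) ∈ I ∩ J
          · exact Finset.mem_union_right _ h6
          · exact Finset.mem_union_left _ (Finset.mem_sdiff.2 ⟨h5, h6⟩)
        · exact hD e he m m1 m2)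
      rwa [Finset.card_insert_of_notMem hx.2] at this
    · refine ⟨_, engine _ _ al hsub hD, Or.inr (Or.inr ⟨heq, ?_, rfl⟩)⟩
      obtain ⟨i, hi, j, hj, hij⟩ := hne
      have := Finset.one_lt_card.2 ⟨i, Finset.mem_union_left J hi, j, Finset.mem_union_right I hj, hij⟩
      omega

theorem cyc_b2 (I J : Finset (ZMod c)) (mu : ℕ) (hne : ∃ i ∈ I, ∃ j ∈ J, i ≠ j)
    (h : ∀ i ∈ I, ∀ j ∈ J, ∀ m : ℕ, 0 < m → m < c →
      (j = i + m → mu + 2 ≤ m) ∧ (i = j + m → mu + 2 ≤ m)) :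
    I.card + J.card + 2 * mu ≤ c := by
  obtain ⟨m, h1, h2⟩ := cyc I J (mu + 1) hne (by
    intro i hi j hj m m1 m2
    have := h i hi j hj m m1 m2
    exact ⟨fun e => this.1 e, fun e => this.2 e⟩)
  have h3 := Finset.card_union_add_card_inter I J
  generalize (I ∪ J).card = r at *
  generalize (I ∩ J).card = d at *
  rcases h2 with ⟨rfl, rfl⟩ | ⟨g1, g2, rfl⟩ | ⟨rfl, g2, rfl⟩
  · omega
  · nlinarith
  · nlinarith

/-- The halving relabelling of the cyclic group of odd order. -/
theorem half_card (M : ℕ) (hc : c = 2 * M + 1) (I : Finset (ZMod c)) :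
    (Finset.univ.filter (fun a : ZMod c => 2 * a ∈ I)).card = I.card := by
  have h2 : (2 : ZMod c) * ((M + 1 : ℕ) : ZMod c) = 1 := by
    have h3 : ((2 * M + 1 : ℕ) : ZMod c) = 0 := by rw [← hc]; simp
    push_cast at h3 ⊢
    linear_combination h3
  apply Finset.card_bij (fun a _ => 2 * a)
  · intro a ha; simpa using ha
  · intro a _ b _ hab
    have : ((M + 1 : ℕ) : ZMod c) * (2 * a) = ((M + 1 : ℕ) : ZMod c) * (2 * b) := by rw [hab]
    calc a = (2 * ((M + 1 : ℕ) : ZMod c)) * a := by rw [h2, one_mul]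
      _ = ((M + 1 : ℕ) : ZMod c) * (2 * a) := by ring
      _ = (2 * ((M + 1 : ℕ) : ZMod c)) * b := by rw [this]; ring
      _ = b := by rw [h2, one_mul]
  · intro b hb
    refine ⟨((M + 1 : ℕ) : ZMod c) * b, ?_, ?_⟩
    · simp only [Finset.mem_filter, Finset.mem_univ, true_and]
      rw [← mul_assoc, h2, one_mul]; exact hb
    · rw [← mul_assoc, h2, one_mul]

theorem half_ne (M : ℕ) (hc : c = 2 * M + 1) (I J : Finset (ZMod c))
    (hne : ∃ i ∈ I, ∃ j ∈ J, i ≠ j) :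
    ∃ i ∈ Finset.univ.filter (fun a : ZMod c => 2 * a ∈ I),
      ∃ j ∈ Finset.univ.filter (fun a : ZMod c => 2 * a ∈ J), i ≠ j := by
  have h2 : (2 : ZMod c) * ((M + 1 : ℕ) : ZMod c) = 1 := by
    have h3 : ((2 * M + 1 : ℕ) : ZMod c) = 0 := by rw [← hc]; simp
    push_cast at h3 ⊢
    linear_combination h3
  obtain ⟨i, hi, j, hj, hij⟩ := hne
  have e : ∀ b : ZMod c, 2 * (((M + 1 : ℕ) : ZMod c) * b) = b := by
    intro b; rw [← mul_assoc, h2, one_mul]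
  refine ⟨((M + 1 : ℕ) : ZMod c) * i, ?_, ((M + 1 : ℕ) : ZMod c) * j, ?_, ?_⟩
  · simp only [Finset.mem_filter, Finset.mem_univ, true_and]; rw [e]; exact hi
  · simp only [Finset.mem_filter, Finset.mem_univ, true_and]; rw [e]; exact hj
  · intro h; apply hij; rw [← e i, h, e]

theorem cyc_b1e (M : ℕ) (hc : c = 2 * M + 1) (I J : Finset (ZMod c)) (ga : ℕ) (hga : 1 ≤ ga)
    (hne : ∃ i ∈ I, ∃ j ∈ J, i ≠ j)
    (h : ∀ i ∈ I, ∀ j ∈ J, ∀ m : ℕ, 0 < m → m < c → m % 2 = 0 →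
      (j = i + m → 2 * ga + 2 ≤ m) ∧ (i = j + m → 2 * ga + 2 ≤ m)) :
    I.card + J.card + 2 * ga ≤ c + 1 := by
  have hlt : 2 * ga + 2 < c := by
    obtain ⟨i, hi, j, hj, hij⟩ := hne
    obtain ⟨a, a1, a2, a3⟩ := exists_shift hij
    obtain ⟨b, b1, b2, b3⟩ := exists_shift hij.symm
    have hab : ((a + b : ℕ) : ZMod c) = 0 := by
      have e : i = i + a + b := by rw [← a3]; exact b3
      push_cast
      have : i + 0 = i + ((a : ZMod c) + b) := by rw [add_zero, ← add_assoc]; exact e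
      exact (add_left_cancel this).symm
    rw [ZMod.natCast_eq_zero_iff] at hab
    have hab2 : a + b = c := by
      obtain ⟨q, hq⟩ := hab
      have : q = 1 := by
        rcases Nat.lt_trichotomy q 1 with h1 | h1 | h1
        · have : q = 0 := by omega
          subst this; omega
        · exact h1
        · have : c * 2 ≤ c * q := Nat.mul_le_mul_left c h1
          omega
      subst this; omega
    rcases Nat.even_or_odd' a with ⟨q, hq | hq⟩
    · have := (h i hi j hj a a1 a2 (by omega)).1 a3
      omega
    · have := (h i hi j hj b b1 b2 (by omega)).2 b3
      omega
  obtain ⟨m, h1, h2⟩ := cyc _ _ ga (half_ne M hc I J hne) (by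
    intro i hi j hj m m1 m2
    simp only [Finset.mem_filter, Finset.mem_univ, true_and] at hi hj
    constructor
    · intro e
      by_contra hcon
      have := (h _ hi _ hj (2 * m) (by omega) (by omega) (by omega)).1 (by rw [e]; push_cast; ring)
      omega
    · intro e
      by_contra hcon
      have := (h _ hi _ hj (2 * m) (by omega) (by omega) (by omega)).2 (by rw [e]; push_cast; ring)
      omega)
  have h3 := Finset.card_union_add_card_inter (Finset.univ.filter (fun a : ZMod c => 2 * a ∈ I))
    (Finset.univ.filter (fun a : ZMod c => 2 * a ∈ J))
  rw [half_card M hc, half_card M hc] at h3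
  generalize (Finset.univ.filter (fun a : ZMod c => 2 * a ∈ I) ∪
    Finset.univ.filter (fun a : ZMod c => 2 * a ∈ J)).card = r at *
  generalize (Finset.univ.filter (fun a : ZMod c => 2 * a ∈ I) ∩
    Finset.univ.filter (fun a : ZMod c => 2 * a ∈ J)).card = d at *
  rcases h2 with ⟨rfl, rfl⟩ | ⟨g1, g2, rfl⟩ | ⟨rfl, g2, rfl⟩
  · omega
  · nlinarith
  · obtain ⟨d', rfl⟩ := Nat.exists_eq_add_of_le g2
    obtain ⟨g', rfl⟩ := Nat.exists_eq_add_of_le hga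
    have : (2 + d') * (1 + g') = 2 + d' + 2 * g' + d' * g' := by ring
    rw [this] at h1
    have := Nat.zero_le (d' * g')
    omega

theorem cyc_b1o (M : ℕ) (hc : c = 2 * M + 1) (I J : Finset (ZMod c)) (ga : ℕ) (hga : 1 ≤ ga)
    (hne : ∃ i ∈ I, ∃ j ∈ J, i ≠ j)
    (h : ∀ i ∈ I, ∀ j ∈ J, ∀ m : ℕ, 0 < m → m < c → m % 2 = 1 →
      (j = i + m → 2 * ga + 1 ≤ m) ∧ (i = j + m → 2 * ga + 1 ≤ m)) :
    I.card + J.card + (2 * ga - 1) ≤ c := by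
  have hlt : ga ≤ M := by
    obtain ⟨i, hi, j, hj, hij⟩ := hne
    obtain ⟨a, a1, a2, a3⟩ := exists_shift hij
    rcases Nat.even_or_odd' a with ⟨q, hq | hq⟩
    · have := (h i hi j hj (c - a) (by omega) (by omega) (by omega)).2 (by
        rw [Nat.cast_sub a2.le, a3]; simp)
      omega
    · have := (h i hi j hj a a1 a2 (by omega)).1 a3
      omega
  have c0 : ((2 * M + 1 : ℕ) : ZMod c) = 0 := by rw [← hc]; simp
  have claim : ∀ i j : ZMod c, 2 * i ∈ I → 2 * j ∈ J → ∀ b : ℕ, M - ga + 1 ≤ b → b ≤ M + ga →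
      j ≠ i + b := by
    intro i j hi hj b b1 b2 e
    rcases le_or_gt b M with hb | hb
    · have := (h _ hi _ hj (c - 2 * b) (by omega) (by omega) (by omega)).2 (by
        rw [Nat.cast_sub (by omega), e]; push_cast; simp; ring)
      omega
    · have := (h _ hi _ hj (2 * b - c) (by omega) (by omega) (by omega)).1 (by
        rw [Nat.cast_sub (by omega), e]; push_cast; simp; ring)
      omega
  set I' := Finset.univ.filter (fun a : ZMod c => 2 * a ∈ I) with hI'
  set J' := Finset.univ.filter (fun a : ZMod c => 2 * a ∈ J) with hJ'
  have cI : I'.card = I.card := half_card M hc I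
  have cJ : J'.card = J.card := half_card M hc J
  set K := I'.image (fun a => a + ((M - ga + 1 : ℕ) : ZMod c)) with hK
  have cK : K.card = I.card := by
    rw [← cI]; exact Finset.card_image_of_injective _ (add_left_injective _)
  have claim2 : ∀ x ∈ K, ∀ m : ℕ, m ≤ 2 * ga - 1 → x + (m : ZMod c) ∉ J' := by
    intro x hx m hm hJ
    simp only [hK, hI', hJ', Finset.mem_image, Finset.mem_filter, Finset.mem_univ, true_and] at hx hJ
    obtain ⟨a, ha, rfl⟩ := hx
    exact claim a _ ha hJ (M - ga + 1 + m) (by omega) (by omega) (by push_cast; ring)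
  have hdis : Disjoint K J' := by
    rw [Finset.disjoint_left]
    intro x hx hJ
    exact claim2 x hx 0 (by omega) (by simpa using hJ)
  obtain ⟨i, hi, j, hj, -⟩ := hne
  obtain ⟨x, hx⟩ : K.Nonempty := by
    rw [← Finset.card_pos, cK, Finset.card_pos]; exact ⟨i, hi⟩
  obtain ⟨y, hy⟩ : J'.Nonempty := by
    rw [← Finset.card_pos, cJ, Finset.card_pos]; exact ⟨j, hj⟩
  obtain ⟨e, he, a, a1, a2, a3, a4⟩ := nearest K J'
    ⟨x, hx, y, hy, fun hxy => Finset.disjoint_left.1 hdis hx (hxy ▸ hy)⟩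
  have hage : 2 * ga - 1 < a := by
    by_contra hcon
    exact claim2 e he a (by omega) a3
  have := engine (K ∪ J') {e} (2 * ga - 1) (by simp [he]) (by
    intro w hw m m1 m2
    simp at hw; subst hw
    exact a4 m m1 (by omega))
  rw [Finset.card_union_of_disjoint hdis, cK, cJ] at this
  simpa using this

end additive
section defs
variable {V : Type*}

/-- Number of neighbours of `u` in `S`. -/
noncomputable def dS (G : SimpleGraph V) (S : Finset V) (u : V) : ℕ := (S.filter (G.Adj u)).card

def Good (G : SimpleGraph V) (S : Finset V) (u v : V) : Prop :=
  u ≠ v ∧ ∃ x ∈ S, ∃ y ∈ S, x ≠ y ∧ G.Adj u x ∧ G.Adj v y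

/-- There is a path with `n` vertices inside `H` from `u` to `v`. -/
def HP (G : SimpleGraph V) (H : Finset V) (u v : V) (n : ℕ) : Prop :=
  ∃ m, IsP G u v m ∧ (∀ w ∈ m, w ∈ H) ∧ m.length = n

def Link (G : SimpleGraph V) (H : Finset V) (x y : V) (n : ℕ) : Prop :=
  ∃ u v, HP G H u v n ∧ G.Adj x u ∧ G.Adj y v

inductive Concl (G : SimpleGraph V) (S H : Finset V) (k : ℕ) : Prop
  | cA (x y : V) (n : ℕ) (hx : x ∈ S) (hy : y ∈ S) (hxy : x ≠ y) (h : Link G H x y n)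
      (hn : 2 * k ≤ n + 4)
  | cC (x y : V) (n n' : ℕ) (hx : x ∈ S) (hy : y ∈ S) (hxy : x ≠ y) (h : Link G H x y n)
      (h' : Link G H x y n') (hp : n % 2 ≠ n' % 2) (hn : 2 * k ≤ n + n' + 4)
  | cB1o (u v : V) (n : ℕ) (hg : Good G S u v) (h : HP G H u v n) (hp : n % 2 = 0)
      (hn : 2 * k ≤ dS G S u + dS G S v + n + 1)
  | cB1e (u v : V) (n : ℕ) (hg : Good G S u v) (h : HP G H u v n) (hp : n % 2 = 1)
      (hn : 2 * k ≤ dS G S u + dS G S v + n)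
  | cB2 (u v : V) (n n' : ℕ) (hg : Good G S u v) (h : HP G H u v n) (h' : HP G H u v n')
      (hp : n % 2 ≠ n' % 2) (hn : 2 * k ≤ dS G S u + dS G S v + 2 * n)
      (hn' : 2 * k ≤ dS G S u + dS G S v + 2 * n')

variable {G : SimpleGraph V}

theorem HP.symm {H : Finset V} {u v : V} {n : ℕ} (h : HP G H u v n) : HP G H v u n := by
  obtain ⟨m, h1, h2, h3⟩ := h
  exact ⟨m.reverse, h1.reverse, by simpa using h2, by simpa using h3⟩

theorem Link.symm {H : Finset V} {x y : V} {n : ℕ} (h : Link G H x y n) : Link G H y x n := by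
  obtain ⟨u, v, h1, h2, h3⟩ := h
  exact ⟨v, u, h1.symm, h3, h2⟩

theorem Good.symm {S : Finset V} {u v : V} (h : Good G S u v) : Good G S v u := by
  obtain ⟨h0, x, hx, y, hy, hxy, h1, h2⟩ := h
  exact ⟨h0.symm, y, hy, x, hx, hxy.symm, h2, h1⟩

theorem HP.pos {H : Finset V} {u v : V} {n : ℕ} (h : HP G H u v n) : 1 ≤ n := by
  obtain ⟨m, h1, h2, h3⟩ := h
  have := h1.length_pos; omega

theorem HP.two_le {H : Finset V} {u v : V} {n : ℕ} (h : HP G H u v n) (huv : u ≠ v) : 2 ≤ n := by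
  obtain ⟨m, h1, h2, h3⟩ := h
  by_contra hc
  have h4 := h1.length_pos
  have : m.length = 1 := by omega
  obtain ⟨a, rfl⟩ := List.length_eq_one_iff.1 this
  obtain ⟨_, _, e, f⟩ := h1
  simp at e f
  exact huv (e.symm.trans f)

theorem Link.pos {H : Finset V} {u v : V} {n : ℕ} (h : Link G H u v n) : 1 ≤ n := by
  obtain ⟨_, _, h, _⟩ := h; exact h.pos

end defs

section linear

theorem lin_gap (U : Finset ℕ) (q : ℕ) (hU : ∀ i ∈ U, i ≤ q)
    (hgap : ∀ i ∈ U, ∀ j ∈ U, i < j → i + 2 ≤ j) : 2 * U.card ≤ q + 2 := by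
  have hd : Disjoint U (U.image (· + 1)) := by
    rw [Finset.disjoint_left]
    intro a ha hb
    obtain ⟨b, hb2, rfl⟩ := Finset.mem_image.1 hb
    have := hgap b hb2 _ ha (by simp)
    simp at this
  have hc : (U.image (· + 1)).card = U.card := Finset.card_image_of_injective _ (add_left_injective 1)
  have hs : U ∪ U.image (· + 1) ⊆ Finset.range (q + 2) := by
    intro a ha
    rw [Finset.mem_union] at ha
    rw [Finset.mem_range]
    rcases ha with ha | ha
    · have := hU a ha; omega
    · obtain ⟨b, hb, rfl⟩ := Finset.mem_image.1 ha
      have := hU b hb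
      simp; omega
  have := Finset.card_le_card hs
  rw [Finset.card_union_of_disjoint hd, hc, Finset.card_range] at this
  omega

theorem lin_cross (I J : Finset ℕ) (q n : ℕ) (hU : ∀ i ∈ I ∪ J, i ≤ q) (hn : 1 ≤ n)
    (hgap : ∀ i ∈ I ∪ J, ∀ j ∈ I ∪ J, i < j → i + 2 ≤ j)
    (hne : ∃ i ∈ I, ∃ j ∈ J, i ≠ j)
    (hcr : ∀ i ∈ I, ∀ j ∈ J, (i < j → i + n + 1 ≤ j) ∧ (j < i → j + n + 1 ≤ i)) :
    2 * (I ∪ J).card + n ≤ q + 3 := by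
  have hex : ∃ d, 0 < d ∧ ∃ i, (i ∈ I ∧ i + d ∈ J) ∨ (i ∈ J ∧ i + d ∈ I) := by
    obtain ⟨i, hi, j, hj, hij⟩ := hne
    rcases Nat.lt_or_gt_of_ne hij with h | h
    · exact ⟨j - i, by omega, i, Or.inl ⟨hi, by rwa [Nat.add_sub_cancel' h.le]⟩⟩
    · exact ⟨i - j, by omega, j, Or.inr ⟨hj, by rwa [Nat.add_sub_cancel' h.le]⟩⟩
  obtain ⟨h1, i, h2⟩ := Nat.find_spec hex
  set d := Nat.find hex with hd
  have hbt : ∀ m, 0 < m → m < d → i + m ∉ I ∪ J := by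
    intro m m1 m2 hm
    have e : i + m + (d - m) = i + d := by omega
    rcases Finset.mem_union.1 hm with hm | hm <;> rcases h2 with ⟨h3, h4⟩ | ⟨h3, h4⟩
    · exact Nat.find_min hex (m := d - m) (by omega) ⟨by omega, i + m, Or.inl ⟨hm, by rwa [e]⟩⟩
    · exact Nat.find_min hex (m := m) (by omega) ⟨by omega, i, Or.inr ⟨h3, hm⟩⟩
    · exact Nat.find_min hex (m := m) (by omega) ⟨by omega, i, Or.inl ⟨h3, hm⟩⟩
    · exact Nat.find_min hex (m := d - m) (by omega) ⟨by omega, i + m, Or.inr ⟨hm, by rwa [e]⟩⟩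
  have hdn : n + 1 ≤ d := by
    rcases h2 with ⟨h3, h4⟩ | ⟨h3, h4⟩
    · have := (hcr _ h3 _ h4).1 (by omega); omega
    · have := (hcr _ h4 _ h3).2 (by omega); omega
  have hiU : i + d ≤ q := by
    rcases h2 with ⟨h3, h4⟩ | ⟨h3, h4⟩
    · exact hU _ (Finset.mem_union_right _ h4)
    · exact hU _ (Finset.mem_union_left _ h4)
  set U := I ∪ J with hUdef
  have hdis : Disjoint U (U.image (· + 1)) := by
    rw [Finset.disjoint_left]
    intro a ha hb
    obtain ⟨b, hb2, rfl⟩ := Finset.mem_image.1 hb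
    have := hgap b hb2 _ ha (by simp)
    simp at this
  have hdis2 : Disjoint (U ∪ U.image (· + 1)) (Finset.Icc (i + 2) (i + n)) := by
    rw [Finset.disjoint_right]
    intro a ha hb
    rw [Finset.mem_Icc] at ha
    rw [Finset.mem_union] at hb
    rcases hb with hb | hb
    · apply hbt (a - i) (by omega) (by omega)
      rwa [Nat.add_sub_cancel' (by omega)]
    · obtain ⟨b, hb, rfl⟩ := Finset.mem_image.1 hb
      apply hbt (b - i) (by omega) (by omega)
      rwa [Nat.add_sub_cancel' (by omega)]
  have hc : (U.image (· + 1)).card = U.card := Finset.card_image_of_injective _ (add_left_injective 1)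
  have hs : (U ∪ U.image (· + 1)) ∪ Finset.Icc (i + 2) (i + n) ⊆ Finset.range (q + 2) := by
    intro a ha
    rw [Finset.mem_union, Finset.mem_union, Finset.mem_Icc] at ha
    rw [Finset.mem_range]
    rcases ha with (ha | ha) | ha
    · have := hU a ha; omega
    · obtain ⟨b, hb, rfl⟩ := Finset.mem_image.1 ha
      have := hU b hb
      simp; omega
    · omega
  have := Finset.card_le_card hs
  rw [Finset.card_union_of_disjoint hdis2, Finset.card_union_of_disjoint hdis, hc,
    Finset.card_range, Nat.card_Icc] at this
  omega

end linear

section ctwo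
variable {V : Type*} {G : SimpleGraph V}

theorem insert_link {z : ℕ → V} {q i j n : ℕ} {K : Finset V} (hz : ZP G z q)
    (hdis : ∀ i ≤ q, z i ∉ K) (hij : i < j) (hj : j ≤ q) (h : Link G K (z i) (z j) n) :
    ∃ l, IsP G (z 0) (z q) l ∧ (∀ w ∈ l, w ∈ K ∨ ∃ i ≤ q, z i = w) ∧
      l.length = i + 1 + n + (q + 1 - j) := by
  obtain ⟨u, v, ⟨m, h1, h2, h3⟩, h4, h5⟩ := h
  refine ⟨up z 0 i ++ m ++ up z j q, ?_, ?_, ?_⟩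
  · refine ((hz.up (Nat.zero_le _) (by omega)).append h1 h4 ?_).append (hz.up hj le_rfl) h5.symm ?_
    · intro x hx hm
      obtain ⟨a, _, ha, rfl⟩ := mem_up.1 hx
      exact hdis a (by omega) (h2 _ hm)
    · intro x hx hm
      obtain ⟨a, ha1, ha2, rfl⟩ := mem_up.1 hm
      rw [List.mem_append] at hx
      rcases hx with hx | hx
      · obtain ⟨b, _, hb, hb'⟩ := mem_up.1 hx
        have := hz.2 b a (by omega) (by omega) hb'
        omega
      · exact hdis a (by omega) (h2 _ hx)
  · intro w hw
    simp only [List.mem_append] at hw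
    rcases hw with (hw | hw) | hw
    · obtain ⟨a, _, ha, rfl⟩ := mem_up.1 hw
      exact Or.inr ⟨a, by omega, rfl⟩
    · exact Or.inl (h2 _ hw)
    · obtain ⟨a, _, ha, rfl⟩ := mem_up.1 hw
      exact Or.inr ⟨a, by omega, rfl⟩
  · simp [h3]; omega

/-- The vertex set of the path `z 0, …, z q`. -/
noncomputable def zset (z : ℕ → V) (q : ℕ) : Finset V := (Finset.range (q + 1)).image z

theorem mem_zset {z : ℕ → V} {q : ℕ} {x : V} : x ∈ zset z q ↔ ∃ i ≤ q, z i = x := by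
  simp [zset]

/-- Positions of neighbours on a path. -/
noncomputable def pos (G : SimpleGraph V) (z : ℕ → V) (q : ℕ) (u : V) : Finset ℕ :=
  (Finset.range (q + 1)).filter (fun i => G.Adj u (z i))

theorem mem_pos {z : ℕ → V} {q : ℕ} {u : V} {i : ℕ} : i ∈ pos G z q u ↔ i ≤ q ∧ G.Adj u (z i) := by
  simp [pos]

theorem card_pos {z : ℕ → V} {q : ℕ} (hz : ZP G z q) (u : V) :
    (pos G z q u).card = dS G (zset z q) u := by
  unfold dS
  have : (zset z q).filter (G.Adj u) = (pos G z q u).image z := by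
    ext x
    simp only [Finset.mem_filter, mem_zset, Finset.mem_image, mem_pos]
    constructor
    · rintro ⟨⟨i, hi, rfl⟩, h⟩; exact ⟨i, ⟨hi, h⟩, rfl⟩
    · rintro ⟨i, ⟨hi, h⟩, rfl⟩; exact ⟨⟨i, hi, rfl⟩, h⟩
  rw [this, Finset.card_image_of_injOn]
  intro i hi j hj hij
  exact hz.2 i j (mem_pos.1 hi).1 (mem_pos.1 hj).1 hij

theorem ctwo [Fintype V] {z : ℕ → V} {q k : ℕ} {K : Finset V} (hz : ZP G z q)
    (hdeg : ∀ v, k ≤ dS G Finset.univ v) (hK : K.Nonempty)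
    (hdis : ∀ i ≤ q, z i ∉ K)
    (hN : ∀ w ∈ K, ∀ y, G.Adj w y → y ∈ K ∨ ∃ i ≤ q, z i = y)
    (hmax : ∀ l, IsP G (z 0) (z q) l → (∀ w ∈ l, w ∈ K ∨ ∃ i ≤ q, z i = w) → l.length ≤ q + 1)
    (hcon : 2 ≤ K.card → Concl G (zset z q) K k) :
    2 * k ≤ q + 4 ∨ ∃ l, IsP G (z 0) (z q) l ∧ (∀ w ∈ l, w ∈ K ∨ ∃ i ≤ q, z i = w) ∧
      l.length % 2 ≠ (q + 1) % 2 ∧ 2 * k ≤ q + 1 + l.length + 2 := by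
  have hlink : ∀ i j n, i < j → j ≤ q → Link G K (z i) (z j) n → i + n + 1 ≤ j := by
    intro i j n hij hj h
    obtain ⟨l, h1, h2, h3⟩ := insert_link hz hdis hij hj h
    have := hmax l h1 h2
    omega
  have hsing : ∀ w ∈ K, ∀ i j, G.Adj w (z i) → G.Adj w (z j) → i < j → j ≤ q → i + 2 ≤ j := by
    intro w hw i j h1 h2 h3 h4
    exact hlink i j 1 h3 h4 ⟨w, w, ⟨[w], IsP.single w, by simpa using hw, rfl⟩, h1.symm, h2.symm⟩
  -- two links of different parity
  have htwo : ∀ i j n n', i < j → j ≤ q → Link G K (z i) (z j) n → Link G K (z i) (z j) n' →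
      n % 2 ≠ n' % 2 → ∃ l, IsP G (z 0) (z q) l ∧ (∀ w ∈ l, w ∈ K ∨ ∃ i ≤ q, z i = w) ∧
      l.length % 2 ≠ (q + 1) % 2 ∧ (n + 2 ≤ l.length ∨ n' + 2 ≤ l.length) := by
    intro i j n n' hij hj h h' hp
    obtain ⟨l, h1, h2, h3⟩ := insert_link hz hdis hij hj h
    obtain ⟨l', h1', h2', h3'⟩ := insert_link hz hdis hij hj h'
    by_cases hpar : l.length % 2 = (q + 1) % 2
    · exact ⟨l', h1', h2', by omega, Or.inr (by omega)⟩
    · exact ⟨l, h1, h2, hpar, Or.inl (by omega)⟩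
  -- analysis of B-type conclusions
  have hB : ∀ u v n, Good G (zset z q) u v → HP G K u v n →
      dS G (zset z q) u + dS G (zset z q) v + n ≤ q + 3 := by
    intro u v n ⟨huv, x, hx, y, hy, hxy, hux, hvy⟩ hp
    have hpp := hp
    obtain ⟨m, m1, m2, m3⟩ := hp
    have hu : u ∈ K := m2 _ m1.mem_left
    have hv : v ∈ K := m2 _ m1.mem_right
    obtain ⟨i, hi, rfl⟩ := mem_zset.1 hx
    obtain ⟨j, hj, rfl⟩ := mem_zset.1 hy
    have hcr : ∀ i ∈ pos G z q u, ∀ j ∈ pos G z q v,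
        (i < j → i + n + 1 ≤ j) ∧ (j < i → j + n + 1 ≤ i) := by
      intro i hi j hj
      rw [mem_pos] at hi hj
      have L : Link G K (z i) (z j) n := ⟨u, v, hpp, hi.2.symm, hj.2.symm⟩
      exact ⟨fun h => hlink i j n h hj.1 L, fun h => hlink j i n h hi.1 L.symm⟩
    have n2 := hpp.two_le huv
    have := lin_cross (pos G z q u) (pos G z q v) q n (by
        intro i hi
        rcases Finset.mem_union.1 hi with h | h <;> exact (mem_pos.1 h).1) (by omega)
      (by
        intro i hi j hj hij
        rcases Finset.mem_union.1 hi with h | h <;> rcases Finset.mem_union.1 hj with h' | h'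
        · exact hsing u hu i j (mem_pos.1 h).2 (mem_pos.1 h').2 hij (mem_pos.1 h').1
        · have := (hcr _ h _ h').1 hij; omega
        · have := (hcr _ h' _ h).2 hij; omega
        · exact hsing v hv i j (mem_pos.1 h).2 (mem_pos.1 h').2 hij (mem_pos.1 h').1)
      ⟨i, mem_pos.2 ⟨hi, hux⟩, j, mem_pos.2 ⟨hj, hvy⟩, fun h => hxy (by rw [h])⟩ hcr
    have e1 := Finset.card_le_card (Finset.subset_union_left (s₁ := pos G z q u) (s₂ := pos G z q v))
    have e2 := Finset.card_le_card (Finset.subset_union_right (s₁ := pos G z q u) (s₂ := pos G z q v))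
    rw [card_pos hz] at e1 e2
    omega
  rcases Nat.lt_or_ge K.card 2 with h1 | h1
  · left
    have : K.card = 1 := by have := Finset.card_pos.2 hK; omega
    obtain ⟨w, rfl⟩ := Finset.card_eq_one.1 this
    have h3 := lin_gap (pos G z q w) q (fun i hi => (mem_pos.1 hi).1) (by
      intro i hi j hj hij
      exact hsing w (by simp) i j (mem_pos.1 hi).2 (mem_pos.1 hj).2 hij (mem_pos.1 hj).1)
    rw [card_pos hz] at h3
    have h4 : dS G Finset.univ w ≤ dS G (zset z q) w := by
      apply Finset.card_le_card
      intro y hy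
      simp only [Finset.mem_filter, Finset.mem_univ, true_and] at hy ⊢
      refine ⟨?_, hy⟩
      rcases hN w (by simp) y hy with h5 | h5
      · simp at h5; subst h5; exact absurd hy (G.irrefl)
      · exact mem_zset.2 h5
    have := hdeg w
    omega
  · rcases hcon h1 with ⟨x, y, n, hx, hy, hxy, h, hn⟩ | ⟨x, y, n, n', hx, hy, hxy, h, h', hp, hn⟩ |
      ⟨u, v, n, hg, h, hp, hn⟩ | ⟨u, v, n, hg, h, hp, hn⟩ | ⟨u, v, n, n', hg, h, h', hp, hn, hn'⟩
    · left
      obtain ⟨i, hi, rfl⟩ := mem_zset.1 hx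
      obtain ⟨j, hj, rfl⟩ := mem_zset.1 hy
      rcases Nat.lt_trichotomy i j with hij | rfl | hij
      · have := hlink i j n hij hj h; omega
      · exact absurd rfl hxy
      · have := hlink j i n hij hi h.symm; omega
    · right
      obtain ⟨i, hi, rfl⟩ := mem_zset.1 hx
      obtain ⟨j, hj, rfl⟩ := mem_zset.1 hy
      rcases Nat.lt_trichotomy i j with hij | rfl | hij
      · have e1 := hlink i j n hij hj h
        have e2 := hlink i j n' hij hj h'
        obtain ⟨l, l1, l2, l3, l4⟩ := htwo i j n n' hij hj h h' hp
        exact ⟨l, l1, l2, l3, by omega⟩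
      · exact absurd rfl hxy
      · have e1 := hlink j i n hij hi h.symm
        have e2 := hlink j i n' hij hi h'.symm
        obtain ⟨l, l1, l2, l3, l4⟩ := htwo j i n n' hij hi h.symm h'.symm hp
        exact ⟨l, l1, l2, l3, by omega⟩
    · left; have := hB u v n hg h; omega
    · left; have := hB u v n hg h; omega
    · right
      have e1 := hB u v n hg h
      have e2 := hB u v n' hg h'
      obtain ⟨huv, x, hx, y, hy, hxy, hux, hvy⟩ := hg
      obtain ⟨i, hi, rfl⟩ := mem_zset.1 hx
      obtain ⟨j, hj, rfl⟩ := mem_zset.1 hy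
      have L : Link G K (z i) (z j) n := ⟨u, v, h, hux.symm, hvy.symm⟩
      have L' : Link G K (z i) (z j) n' := ⟨u, v, h', hux.symm, hvy.symm⟩
      rcases Nat.lt_trichotomy i j with hij | rfl | hij
      · obtain ⟨l, l1, l2, l3, l4⟩ := htwo i j n n' hij hj L L' hp
        exact ⟨l, l1, l2, l3, by omega⟩
      · exact absurd rfl hxy
      · obtain ⟨l, l1, l2, l3, l4⟩ := htwo j i n n' hij hi L.symm L'.symm hp
        exact ⟨l, l1, l2, l3, by omega⟩

end ctwo
section comp
variable {V : Type*} {G : SimpleGraph V}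

theorem ZP.down {z : ℕ → V} {p a b : ℕ} (h : ZP G z p) (hab : a ≤ b) (hb : b ≤ p) :
    IsP G (z b) (z a) (VZ.up z a b).reverse := (h.up hab hb).reverse

theorem ZP.rev {z : ℕ → V} {p : ℕ} (h : ZP G z p) : ZP G (fun i => z (p - i)) p := by
  refine ⟨?_, ?_⟩
  · intro i hi
    have := h.1 (p - (i + 1)) (by omega)
    have e : p - (i + 1) + 1 = p - i := by omega
    rw [e] at this
    exact this.symm
  · intro i j hi hj hij
    have := h.2 _ _ (by omega) (by omega) hij
    omega

theorem card_zset {z : ℕ → V} {q : ℕ} (hz : ZP G z q) : (zset z q).card = q + 1 := by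
  unfold zset
  rw [Finset.card_image_of_injOn, Finset.card_range]
  intro i hi j hj hij
  simp at hi hj
  exact hz.2 i j (by omega) (by omega) hij

theorem sep [Fintype V] (h2 : TwoConnected G) (b : V) (X : Finset V) (hX : X.Nonempty) (hb : b ∉ X)
    (hy : ∃ y, y ∉ X ∧ y ≠ b) : ∃ x ∈ X, ∃ z, z ∉ X ∧ z ≠ b ∧ G.Adj x z := by
  obtain ⟨x, hx⟩ := hX
  obtain ⟨y, hy1, hy2⟩ := hy
  have hc := h2.2 b
  obtain ⟨w⟩ := hc.preconnected ⟨x, show x ≠ b from fun h => hb (h ▸ hx)⟩ ⟨y, hy2⟩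
  obtain ⟨d, -, h3, h4⟩ := w.exists_boundary_dart {v | v.1 ∈ X} hx hy1
  exact ⟨d.fst.1, h3, d.snd.1, h4, d.snd.2, d.adj⟩

/-- Working context: a longest path between a good pair in `H`. -/
structure Ctx (G : SimpleGraph V) [Fintype V] (S H : Finset V) (k : ℕ) (z : ℕ → V) (p : ℕ) : Prop where
  hdeg : ∀ v, k ≤ dS G Finset.univ v
  hdis : ∀ w ∈ H, w ∉ S
  hN : ∀ w ∈ H, ∀ y, G.Adj w y → y ∈ H ∨ y ∈ S
  hz : ZP G z p
  hzH : ∀ i, i ≤ p → z i ∈ H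
  hg : Good G S (z 0) (z p)
  hmax : ∀ u v l, Good G S u v → IsP G u v l → (∀ w ∈ l, w ∈ H) → l.length ≤ p + 1
  ih : ∀ S' K : Finset V, K.card < H.card → 2 ≤ S'.card → (∀ w ∈ K, w ∉ S') →
    (∀ a ∈ K, ∀ b ∈ K, Rch G (fun x => x ∈ K) a b) →
    (∀ w ∈ K, ∀ y, G.Adj w y → y ∈ K ∨ y ∈ S') → 2 ≤ K.card → Concl G S' K k

variable [Fintype V] {S H : Finset V} {k : ℕ} {z : ℕ → V} {p : ℕ}

theorem Ctx.rev (C : Ctx G S H k z p) : Ctx G S H k (fun i => z (p - i)) p where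
  hdeg := C.hdeg
  hdis := C.hdis
  hN := C.hN
  hz := C.hz.rev
  hzH := fun i _ => C.hzH _ (by omega)
  hg := by simpa using C.hg.symm
  hmax := C.hmax
  ih := C.ih

/-- component of `w0` in `H` minus the path -/
noncomputable def cmp (G : SimpleGraph V) (H : Finset V) (z : ℕ → V) (p : ℕ) (w0 : V) : Finset V :=
  H.filter (fun w => Rch G (fun x => x ∈ H ∧ ∀ i ≤ p, z i ≠ x) w0 w)

theorem mem_cmp {w0 w : V} : w ∈ cmp G H z p w0 ↔
    Rch G (fun x => x ∈ H ∧ ∀ i ≤ p, z i ≠ x) w0 w := by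
  simp only [cmp, Finset.mem_filter, and_iff_right_iff_imp]
  intro h
  exact h.right.1

theorem Ctx.hzp (C : Ctx G S H k z p) : 1 ≤ p := by
  by_contra h
  have : p = 0 := by omega
  subst this
  exact C.hg.1 rfl

theorem Ctx.path (C : Ctx G S H k z p) : HP G H (z 0) (z p) (p + 1) := by
  refine ⟨up z 0 p, C.hz.up (Nat.zero_le _) le_rfl, ?_, by simp⟩
  intro w hw
  obtain ⟨i, _, hi, rfl⟩ := mem_up.1 hw
  exact C.hzH i hi

theorem Ctx.comp (C : Ctx G S H k z p) {w0 : V} (hw0 : w0 ∈ H) (hw0' : ∀ i ≤ p, z i ≠ w0)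
    (hS : ∀ w ∈ cmp G H z p w0, ∀ x ∈ S, G.Adj w x → ∀ y ∈ S, G.Adj (z p) y → y = x) :
    Concl G S H k := by
  set K := cmp G H z p w0 with hK
  have hKH : ∀ w ∈ K, w ∈ H := fun w hw => (mem_cmp.1 hw).right.1
  have hKP : ∀ i ≤ p, z i ∉ K := fun i hi h => (mem_cmp.1 h).right.2 i hi rfl
  have hw0K : w0 ∈ K := mem_cmp.2 (Rch.refl ⟨hw0, hw0'⟩)
  have hKN : ∀ w ∈ K, ∀ y, G.Adj w y → y ∈ K ∨ (∃ i ≤ p, z i = y) ∨ y ∈ S := by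
    intro w hw y hy
    by_cases h1 : ∃ i ≤ p, z i = y
    · exact Or.inr (Or.inl h1)
    · rcases C.hN w (hKH w hw) y hy with h2 | h2
      · left
        refine mem_cmp.2 ((mem_cmp.1 hw).step hy ⟨h2, ?_⟩)
        push Not at h1
        exact h1
      · exact Or.inr (Or.inr h2)
  have hKc : ∀ a ∈ K, ∀ b ∈ K, Rch G (fun x => x ∈ K) a b := by
    intro a ha b hb
    obtain ⟨l, h1, h2⟩ := (mem_cmp.1 ha).inside (mem_cmp.1 hb)
    exact ⟨l, h1, fun x hx => mem_cmp.2 (h2 x hx)⟩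
  have hcard : K.card < H.card := by
    apply Finset.card_lt_card
    refine ⟨hKH, fun h => hKP 0 (by omega) (h (C.hzH 0 (by omega)))⟩
  have hp1 := C.hzp
  obtain ⟨huv, x1, hx1, y1, hy1, hxy, hux, hvy⟩ := C.hg
  by_cases hex : ∃ w ∈ K, ∃ x ∈ S, G.Adj w x
  · obtain ⟨w1, hw1, x, hx, hwx⟩ := hex
    have hy1x : y1 = x := hS w1 hw1 x hx hwx y1 hy1 hvy
    subst hy1x
    have huniq : ∀ w ∈ K, ∀ x ∈ S, G.Adj w x → x = y1 := fun w hw x hx h =>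
      (hS w hw x hx h y1 hy1 hvy).symm
    set z' : ℕ → V := fun i => if i ≤ p then z i else y1 with hz'
    have e1 : ∀ i, i ≤ p → z' i = z i := fun i hi => by simp [hz', hi]
    have e2 : z' (p + 1) = y1 := by simp [hz']
    have hy1H : y1 ∉ H := fun h => C.hdis _ h hy1
    have zz' : ZP G z' (p + 1) := by
      refine ⟨?_, ?_⟩
      · intro i hi
        rcases Nat.lt_or_ge i p with h | h
        · rw [e1 i h.le, e1 (i+1) h]; exact C.hz.1 i h
        · have : i = p := by omega
          subst this
          rw [e1 i le_rfl, e2]; exact hvy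
      · intro i j hi hj hij
        rcases Nat.lt_or_ge p i with h | h <;> rcases Nat.lt_or_ge p j with h' | h'
        · omega
        · have : i = p + 1 := by omega
          subst this
          rw [e2, e1 j h'] at hij
          exact absurd (hij ▸ C.hzH j h') hy1H
        · have : j = p + 1 := by omega
          subst this
          rw [e2, e1 i h] at hij
          exact absurd (hij ▸ C.hzH i h) hy1H
        · rw [e1 i h, e1 j h'] at hij
          exact C.hz.2 i j h h' hij
    have drop : ∀ l, IsP G (z' 0) (z' (p+1)) l → (∀ w ∈ l, w ∈ K ∨ ∃ i ≤ p + 1, z' i = w) →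
        ∃ w, HP G H (z 0) w (l.length - 1) ∧ G.Adj y1 w ∧ (w = z 0 → l.length ≤ 2) := by
      intro l hl hlK
      rw [e1 0 (by omega), e2] at hl
      obtain ⟨f, L, h1, h2, h3, h4, h5, h6⟩ := hl.exists_zp
      have hL : 1 ≤ L := by
        by_contra hcon
        have : L = 0 := by omega
        subst this
        exact hy1H (h3 ▸ h2 ▸ C.hzH 0 (by omega))
      refine ⟨f (L - 1), ⟨up f 0 (L - 1), h2 ▸ h4.up (by omega) (by omega), ?_, ?_⟩, ?_, ?_⟩
      · intro w hw
        obtain ⟨i, _, hi, rfl⟩ := mem_up.1 hw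
        rcases hlK _ ((h6 _).2 ⟨i, by omega, rfl⟩) with h7 | ⟨j, hj, h7⟩
        · exact hKH _ h7
        · rcases Nat.lt_or_ge p j with h | h
          · have : j = p + 1 := by omega
            subst this
            rw [e2, ← h3] at h7
            have := h4.2 _ _ le_rfl (by omega) h7
            omega
          · rw [← h7, e1 j h]; exact C.hzH j h
      · simp; omega
      · have := h4.1 (L - 1) (by omega)
        rw [Nat.sub_add_cancel hL, h3] at this
        exact this.symm
      · intro h
        rw [← h2] at h
        have := h4.2 _ _ (by omega) (by omega) h
        omega
    have hres := ctwo (k := k) (K := K) zz' C.hdeg ⟨w0, hw0K⟩ (by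
        intro i hi h
        rcases Nat.lt_or_ge p i with h' | h'
        · have : i = p + 1 := by omega
          subst this
          rw [e2] at h; exact hy1H (hKH _ h)
        · rw [e1 i h'] at h; exact hKP i h' h) (by
        intro w hw y hy
        rcases hKN w hw y hy with h | ⟨i, hi, h⟩ | h
        · exact Or.inl h
        · exact Or.inr ⟨i, by omega, by rw [e1 i hi]; exact h⟩
        · exact Or.inr ⟨p + 1, le_rfl, by rw [e2]; exact (huniq w hw y h hy).symm⟩) (by
        intro l hl hlK
        obtain ⟨w, ⟨m, h1, h2, h3⟩, h4, h5⟩ := drop l hl hlK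
        by_cases hwu : w = z 0
        · have := h5 hwu; omega
        · have := C.hmax (z 0) w m ⟨fun h => hwu h.symm, x1, hx1, y1, hy1, hxy, hux, h4.symm⟩ h1 h2
          omega) (by
        intro hK2
        refine C.ih _ K hcard (by rw [card_zset zz']; omega) ?_ hKc ?_ hK2
        · intro w hw h
          obtain ⟨i, hi, rfl⟩ := mem_zset.1 h
          rcases Nat.lt_or_ge p i with h' | h'
          · have : i = p + 1 := by omega
            subst this
            rw [e2] at hw; exact hy1H (hKH _ hw)
          · rw [e1 i h'] at hw; exact hKP i h' hw
        · intro w hw y hy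
          rcases hKN w hw y hy with h | ⟨i, hi, h⟩ | h
          · exact Or.inl h
          · exact Or.inr (mem_zset.2 ⟨i, by omega, by rw [e1 i hi]; exact h⟩)
          · exact Or.inr (mem_zset.2 ⟨p + 1, le_rfl, by rw [e2]; exact (huniq w hw y h hy).symm⟩))
    have L1 : Link G H x1 y1 (p + 1) := ⟨z 0, z p, C.path, hux.symm, hvy.symm⟩
    rcases hres with h | ⟨l, hl, hlK, hpar, hlen⟩
    · exact Concl.cA x1 y1 (p + 1) hx1 hy1 hxy L1 (by omega)
    · obtain ⟨w, h1, h4, h5⟩ := drop l hl hlK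
      have := h1.pos
      exact Concl.cC x1 y1 (p + 1) (l.length - 1) hx1 hy1 hxy L1 ⟨z 0, w, h1, hux.symm, h4⟩
        (by omega) (by omega)
  · push Not at hex
    have hKN' : ∀ w ∈ K, ∀ y, G.Adj w y → y ∈ K ∨ (∃ i ≤ p, z i = y) := by
      intro w hw y hy
      rcases hKN w hw y hy with h | h | h
      · exact Or.inl h
      · exact Or.inr h
      · exact absurd hy (hex w hw y h)
    have hin : ∀ l : List V, (∀ w ∈ l, w ∈ K ∨ ∃ i ≤ p, z i = w) → ∀ w ∈ l, w ∈ H := by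
      intro l h w hw
      rcases h w hw with h | ⟨i, hi, rfl⟩
      · exact hKH _ h
      · exact C.hzH i hi
    have hres := ctwo (k := k) (K := K) C.hz C.hdeg ⟨w0, hw0K⟩ hKP hKN' (by
        intro l hl hlK
        exact C.hmax _ _ l C.hg hl (hin l hlK)) (by
        intro hK2
        refine C.ih _ K hcard (by rw [card_zset C.hz]; omega) ?_ hKc ?_ hK2
        · intro w hw h
          obtain ⟨i, hi, rfl⟩ := mem_zset.1 h
          exact hKP i hi hw
        · intro w hw y hy
          rcases hKN' w hw y hy with h | h
          · exact Or.inl h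
          · exact Or.inr (mem_zset.2 h))
    have L1 : Link G H x1 y1 (p + 1) := ⟨z 0, z p, C.path, hux.symm, hvy.symm⟩
    rcases hres with h | ⟨l, hl, hlK, hpar, hlen⟩
    · exact Concl.cA x1 y1 (p + 1) hx1 hy1 hxy L1 (by omega)
    · exact Concl.cC x1 y1 (p + 1) l.length hx1 hy1 hxy L1
        ⟨z 0, z p, ⟨l, hl, hin l hlK, rfl⟩, hux.symm, hvy.symm⟩ (by omega) (by omega)

/-- no good extension of a spanning path of the vertex set of the path -/
theorem Ctx.no_ext (C : Ctx G S H k z p) {w0 w a b : V} {m : List V}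
    (hw : w ∈ cmp G H z p w0) (hm : IsP G a b m) (ha : G.Adj w0 a)
    (hmP : ∀ x ∈ m, ∃ i ≤ p, z i = x) (hlen : m.length = p + 1) : ¬ Good G S w b := by
  intro hg
  obtain ⟨l, h1, h2⟩ := (mem_cmp.1 hw).symm
  have := C.hmax w b (l ++ m) hg (h1.append hm ha (by
    intro x hx hx'
    obtain ⟨i, hi, rfl⟩ := hmP x hx'
    exact (h2 _ hx).2 i hi rfl)) (by
    intro x hx
    rcases List.mem_append.1 hx with hx | hx
    · exact (h2 x hx).1
    · obtain ⟨i, hi, rfl⟩ := hmP x hx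
      exact C.hzH i hi)
  have := h1.length_pos
  simp at *
  omega

theorem Ctx.cmp_ne (C : Ctx G S H k z p) {w0 w : V} (hw : w ∈ cmp G H z p w0) {i : ℕ} (hi : i ≤ p) :
    w ≠ z i := fun h => (mem_cmp.1 hw).right.2 i hi h.symm

theorem Ctx.case2 (C : Ctx G S H k z p) {w0 : V} (hw0 : w0 ∈ H) (hw0' : ∀ i ≤ p, z i ≠ w0)
    (h : G.Adj (z 0) w0) : Concl G S H k := by
  apply C.comp hw0 hw0'
  intro w hw x hx hwx y hy hvy
  by_contra hxy
  refine C.no_ext hw (C.hz.up (Nat.zero_le p) le_rfl) h.symm ?_ (by simp)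
    ⟨C.cmp_ne hw le_rfl, x, hx, y, hy, fun h => hxy h.symm, hwx, hvy⟩
  intro x hx
  obtain ⟨i, _, hi, rfl⟩ := mem_up.1 hx
  exact ⟨i, hi, rfl⟩

end comp
section count

theorem cnt_par (X : Finset ℕ) (r lo hi : ℕ) (h : ∀ x ∈ X, x % 2 = r ∧ lo ≤ x ∧ x ≤ hi) :
    X.card ≤ hi / 2 + 1 - lo / 2 := by
  rw [← Nat.card_Icc]
  apply Finset.card_le_card_of_injOn (fun x => x / 2)
  · intro x hx
    have := h x hx
    simp only [Finset.coe_Icc, Set.mem_Icc]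
    omega
  · intro x hx y hy hxy
    have h1 := h x hx
    have h2 := h y hy
    simp only at hxy
    omega

theorem split_card (A : Finset ℕ) (p : ℕ) (hA : ∀ a ∈ A, 1 ≤ a ∧ a ≤ p) :
    A.card ≤ (A.filter (fun a => a % 2 = 0 ∧ a < p)).card +
      (A.filter (fun a => a % 2 = 1 ∧ a < p)).card + 1 := by
  have hs : A ⊆ (A.filter (fun a => a % 2 = 0 ∧ a < p) ∪
      A.filter (fun a => a % 2 = 1 ∧ a < p)) ∪ {p} := by
    intro a ha
    have := hA a ha
    simp only [Finset.mem_union, Finset.mem_filter, Finset.mem_singleton, ha, true_and]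
    omega
  have h1 := Finset.card_le_card hs
  have h2 := Finset.card_union_le (A.filter (fun a => a % 2 = 0 ∧ a < p) ∪
      A.filter (fun a => a % 2 = 1 ∧ a < p)) {p}
  have h3 := Finset.card_union_le (A.filter (fun a => a % 2 = 0 ∧ a < p))
      (A.filter (fun a => a % 2 = 1 ∧ a < p))
  simp only [Finset.card_singleton] at h2
  omega

theorem max_even (A : Finset ℕ) (p : ℕ) (h : ∃ a ∈ A, a % 2 = 0 ∧ a < p) :
    ∃ a ∈ A, a % 2 = 0 ∧ a < p ∧ ∀ b ∈ A, b % 2 = 0 → b < p → b ≤ a := by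
  obtain ⟨a, ha, ha1, ha2⟩ := h
  obtain ⟨m, hm, hm'⟩ := (A.filter (fun a => a % 2 = 0 ∧ a < p)).exists_max_image id
    ⟨a, Finset.mem_filter.2 ⟨ha, ha1, ha2⟩⟩
  rw [Finset.mem_filter] at hm
  exact ⟨m, hm.1, hm.2.1, hm.2.2, fun b hb h1 h2 => hm' b (Finset.mem_filter.2 ⟨hb, h1, h2⟩)⟩

/-- one side has an even element, the other does not -/
theorem count_one (A B : Finset ℕ) (p L : ℕ)
    (hA : ∀ a ∈ A, 1 ≤ a ∧ a ≤ p) (hB : ∀ a ∈ B, 1 ≤ a ∧ a ≤ p)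
    (hLp : L ≤ p) (hpar : L % 2 ≠ p % 2)
    (hAe : ∀ a ∈ A, a % 2 = 0 → 1 + p ≤ L + a)
    (hcr : ∀ a ∈ A, ∀ b ∈ B, (a + b) % 2 = 1 → a < p → b < p → p < a + b → a + b + 2 ≤ L + p)
    (hbig : p + 2 ≤ A.card + B.card) (hbig' : p % 2 = 1 → p + 3 ≤ A.card + B.card)
    (hexA : ∃ a ∈ A, a % 2 = 0 ∧ a < p) (hexB : ¬ ∃ a ∈ B, a % 2 = 0 ∧ a < p) :
    A.card + B.card ≤ 2 * L + 2 := by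
  obtain ⟨a1, h1, h2, h3, h4⟩ := max_even A p hexA
  have e1 := hAe a1 h1 h2
  have s1 := split_card A p hA
  have s2 := split_card B p hB
  have c1 := cnt_par (A.filter (fun a => a % 2 = 0 ∧ a < p)) 0 (p + 1 - L) a1 (by
    intro x hx
    rw [Finset.mem_filter] at hx
    have := hAe x hx.1 hx.2.1
    have := h4 x hx.1 hx.2.1 hx.2.2
    omega)
  have c2 := cnt_par (A.filter (fun a => a % 2 = 1 ∧ a < p)) 1 1 (2 * (p / 2) - 1) (by
    intro x hx
    rw [Finset.mem_filter] at hx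
    omega)
  have c3 := cnt_par (B.filter (fun a => a % 2 = 1 ∧ a < p)) 1 1 (L + p - 2 - a1) (by
    intro x hx
    rw [Finset.mem_filter] at hx
    have := hcr a1 h1 x hx.1 (by omega) h3 hx.2.2
    omega)
  have c4 : B.filter (fun a => a % 2 = 0 ∧ a < p) = ∅ := by
    rw [Finset.filter_eq_empty_iff]
    intro x hx hx'
    exact hexB ⟨x, hx, hx'⟩
  rw [c4, Finset.card_empty] at s2
  have := (hA a1 h1).1
  have hp2 : 2 ≤ p := by omega
  omega

theorem odds_card (A : Finset ℕ) (p : ℕ) (hA : ∀ a ∈ A, 1 ≤ a ∧ a ≤ p) (hp : 1 ≤ p)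
    (hex : ¬ ∃ a ∈ A, a % 2 = 0 ∧ a < p) :
    A.card ≤ p / 2 + 1 ∧ (A.card = p / 2 + 1 → ∀ i, 1 ≤ i → i ≤ p → (i ∈ A ↔ (i % 2 = 1 ∨ i = p))) := by
  set T := (Finset.Icc 1 p).filter (fun i => i % 2 = 1 ∨ i = p) with hT
  have hAT : A ⊆ T := by
    intro a ha
    have := hA a ha
    rw [hT, Finset.mem_filter, Finset.mem_Icc]
    refine ⟨this, ?_⟩
    by_contra hcon
    exact hex ⟨a, ha, by omega, by omega⟩
  have hTc : T.card ≤ p / 2 + 1 := by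
    have s := split_card T p (by intro a ha; rw [hT, Finset.mem_filter, Finset.mem_Icc] at ha; exact ha.1)
    have c2 := cnt_par (T.filter (fun a => a % 2 = 1 ∧ a < p)) 1 1 (2 * (p / 2) - 1) (by
      intro x hx
      rw [Finset.mem_filter] at hx
      omega)
    have c4 : T.filter (fun a => a % 2 = 0 ∧ a < p) = ∅ := by
      rw [Finset.filter_eq_empty_iff]
      intro x hx hx'
      rw [hT, Finset.mem_filter] at hx
      omega
    rw [c4, Finset.card_empty] at s
    rcases Nat.lt_or_ge p 2 with h | h
    · have : p = 1 := by omega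
      subst this
      have : T.card ≤ (Finset.Icc 1 1).card := Finset.card_le_card (Finset.filter_subset _ _)
      simp at this
      omega
    · omega
  refine ⟨(Finset.card_le_card hAT).trans hTc, ?_⟩
  intro he i h1 h2
  have : A = T := Finset.eq_of_subset_of_card_le hAT (by omega)
  rw [this, hT, Finset.mem_filter, Finset.mem_Icc]
  simp [h1, h2]

theorem count (A B : Finset ℕ) (p L : ℕ) (hp : 1 ≤ p)
    (hA : ∀ a ∈ A, 1 ≤ a ∧ a ≤ p) (hB : ∀ a ∈ B, 1 ≤ a ∧ a ≤ p)
    (hLp : L ≤ p)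
    (hpar : (∃ a, (a ∈ A ∨ a ∈ B) ∧ a % 2 = 0) → L % 2 ≠ p % 2)
    (hAe : ∀ a ∈ A, a % 2 = 0 → 1 + p ≤ L + a)
    (hBe : ∀ a ∈ B, a % 2 = 0 → 1 + p ≤ L + a)
    (hcr : ∀ a ∈ A, ∀ b ∈ B, (a + b) % 2 = 1 → a < p → b < p → p < a + b → a + b + 2 ≤ L + p)
    (hbig : p + 2 ≤ A.card + B.card) (hbig' : p % 2 = 1 → p + 3 ≤ A.card + B.card) :
    A.card + B.card ≤ 2 * L + 2 ∨
    (p % 2 = 0 ∧ A.card = p / 2 + 1 ∧ B.card = p / 2 + 1 ∧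
      (∀ i, 1 ≤ i → i ≤ p → (i ∈ A ↔ (i % 2 = 1 ∨ i = p))) ∧
      (∀ i, 1 ≤ i → i ≤ p → (i ∈ B ↔ (i % 2 = 1 ∨ i = p)))) := by
  by_cases hexA : ∃ a ∈ A, a % 2 = 0 ∧ a < p <;> by_cases hexB : ∃ a ∈ B, a % 2 = 0 ∧ a < p
  · left
    have hpar := hpar (by obtain ⟨a, h, h', _⟩ := hexA; exact ⟨a, Or.inl h, h'⟩)
    obtain ⟨a1, h1, h2, h3, h4⟩ := max_even A p hexA
    obtain ⟨b1, g1, g2, g3, g4⟩ := max_even B p hexB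
    have e1 := hAe a1 h1 h2
    have e2 := hBe b1 g1 g2
    have s1 := split_card A p hA
    have s2 := split_card B p hB
    have c1 := cnt_par (A.filter (fun a => a % 2 = 0 ∧ a < p)) 0 (p + 1 - L) a1 (by
      intro x hx
      rw [Finset.mem_filter] at hx
      have := hAe x hx.1 hx.2.1
      have := h4 x hx.1 hx.2.1 hx.2.2
      omega)
    have c2 := cnt_par (B.filter (fun a => a % 2 = 0 ∧ a < p)) 0 (p + 1 - L) b1 (by
      intro x hx
      rw [Finset.mem_filter] at hx
      have := hBe x hx.1 hx.2.1
      have := g4 x hx.1 hx.2.1 hx.2.2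
      omega)
    have c3 := cnt_par (B.filter (fun a => a % 2 = 1 ∧ a < p)) 1 1 (L + p - 2 - a1) (by
      intro x hx
      rw [Finset.mem_filter] at hx
      have := hcr a1 h1 x hx.1 (by omega) h3 hx.2.2
      omega)
    have c4 := cnt_par (A.filter (fun a => a % 2 = 1 ∧ a < p)) 1 1 (L + p - 2 - b1) (by
      intro x hx
      rw [Finset.mem_filter] at hx
      have := hcr x hx.1 b1 g1 (by omega) hx.2.2 g3
      omega)
    have := (hA a1 h1).1
    have := (hB b1 g1).1
    omega
  · left
    have hpar := hpar (by obtain ⟨a, h, h', _⟩ := hexA; exact ⟨a, Or.inl h, h'⟩)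
    exact count_one A B p L hA hB hLp hpar hAe hcr hbig hbig' hexA hexB
  · left
    have hpar := hpar (by obtain ⟨a, h, h', _⟩ := hexB; exact ⟨a, Or.inr h, h'⟩)
    have := count_one B A p L hB hA hLp hpar hBe (by
      intro a ha b hb h1 h2 h3 h4
      have := hcr b hb a ha (by omega) h3 h2 (by omega)
      omega) (by omega) (by omega) hexB hexA
    omega
  · right
    have o1 := odds_card A p hA hp hexA
    have o2 := odds_card B p hB hp hexB
    have : p % 2 = 0 := by
      by_contra h
      have h3 : p % 2 = 1 := by omega
      have := hbig' h3
      omega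
    exact ⟨this, by omega, by omega, o1.2 (by omega), o2.2 (by omega)⟩

end count
section caseone
variable {V : Type*} {G : SimpleGraph V} [Fintype V] {S H : Finset V} {k : ℕ} {z : ℕ → V} {p : ℕ}

theorem Ctx.deg_split (C : Ctx G S H k z p) {w : V} (hw : w ∈ H)
    (h : ∀ y ∈ H, G.Adj w y → ∃ i ≤ p, z i = y) : k ≤ dS G S w + (pos G z p w).card := by
  rw [card_pos C.hz]
  refine (C.hdeg w).trans ?_
  unfold dS
  refine le_trans (Finset.card_le_card ?_) (Finset.card_union_le _ _)
  intro y hy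
  simp only [Finset.mem_filter, Finset.mem_univ, true_and, Finset.mem_union] at hy ⊢
  rcases C.hN w hw y hy with h1 | h1
  · exact Or.inr ⟨mem_zset.2 (h y h1 hy), hy⟩
  · exact Or.inl ⟨h1, hy⟩

theorem Ctx.up_in (C : Ctx G S H k z p) {a b : ℕ} (hb : b ≤ p) {w : V} (hw : w ∈ up z a b) : w ∈ H := by
  obtain ⟨i, _, hi, rfl⟩ := mem_up.1 hw
  exact C.hzH i (by omega)

theorem up_disj {z : ℕ → V} {p a b c d : ℕ} (hz : ZP G z p) (hb : b ≤ p) (hd : d ≤ p)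
    (h : b < c ∨ d < a) : ∀ x ∈ up z a b, x ∉ up z c d := by
  intro x hx hx'
  obtain ⟨i, h1, h2, rfl⟩ := mem_up.1 hx
  obtain ⟨j, h3, h4, h5⟩ := mem_up.1 hx'
  have := hz.2 j i (by omega) (by omega) h5
  omega

theorem up_self (z : ℕ → V) (a : ℕ) : up z a a = [z a] := by simp [up]

theorem Ctx.exception (C : Ctx G S H k z p) (hp4 : 4 ≤ p) (hpe : p % 2 = 0)
    (hA : ∀ i, 1 ≤ i → i ≤ p → (G.Adj (z 0) (z i) ↔ (i % 2 = 1 ∨ i = p)))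
    (hB : ∀ i, i < p → (G.Adj (z p) (z i) ↔ (i % 2 = 1 ∨ i = 0)))
    (hdu : k ≤ dS G S (z 0) + (p / 2 + 1)) (hdv : k ≤ dS G S (z p) + (p / 2 + 1)) :
    Concl G S H k := by
  obtain ⟨huv, x1, hx1, y1, hy1, hxy, hux, hvy⟩ := C.hg
  have dich : ∀ w, w ≠ z 0 → w ≠ z p → ∀ x ∈ S, G.Adj w x → Good G S w (z 0) ∨ Good G S w (z p) := by
    intro w h1 h2 x hx hwx
    by_cases h : x = x1
    · right; exact ⟨h2, x, hx, y1, hy1, by rw [h]; exact hxy, hwx, hvy⟩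
    · left; exact ⟨h1, x, hx, x1, hx1, h, hwx, hux⟩
  have hz := C.hz
  -- z_2 .. z_p, z_1, z_0
  have pu : IsP G (z 2) (z 0) (up z 2 p ++ (up z 0 1).reverse) := by
    refine (hz.up (by omega) le_rfl).append (hz.down (by omega) (by omega))
      ((hB 1 (by omega)).2 (Or.inl rfl)) ?_
    intro x hx; rw [List.mem_reverse]
    exact up_disj hz le_rfl (by omega) (by omega) x hx
  have pv : IsP G (z 2) (z p) ((up z 0 2).reverse ++ up z 3 p) := by
    refine (hz.down (by omega) (by omega)).append (hz.up (by omega) le_rfl)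
      ((hA 3 (by omega) (by omega)).2 (Or.inl rfl)) ?_
    intro x hx; rw [List.mem_reverse] at hx
    exact up_disj hz (by omega) (by omega) (by omega) x hx
  by_cases hout : ∃ w0 ∈ H, G.Adj (z 2) w0 ∧ ∀ i ≤ p, z i ≠ w0
  · obtain ⟨w0, hw0, hadj, hw0'⟩ := hout
    apply C.comp hw0 hw0'
    intro w hw x hx hwx
    exfalso
    rcases dich w (C.cmp_ne hw (by omega)) (C.cmp_ne hw le_rfl) x hx hwx with hg | hg
    · refine C.no_ext hw pu hadj.symm ?_ ?_ hg
      · intro y hy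
        simp only [List.mem_append, List.mem_reverse, mem_up] at hy
        rcases hy with ⟨i, _, hi, rfl⟩ | ⟨i, _, hi, rfl⟩
        · exact ⟨i, by omega, rfl⟩
        · exact ⟨i, by omega, rfl⟩
      · simp; omega
    · refine C.no_ext hw pv hadj.symm ?_ ?_ hg
      · intro y hy
        simp only [List.mem_append, List.mem_reverse, mem_up] at hy
        rcases hy with ⟨i, _, hi, rfl⟩ | ⟨i, _, hi, rfl⟩
        · exact ⟨i, by omega, rfl⟩
        · exact ⟨i, by omega, rfl⟩
      · simp; omega
  · push Not at hout
    have hin : ∀ y ∈ H, G.Adj (z 2) y → ∃ i ≤ p, z i = y := hout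
    have hd2 := C.deg_split (C.hzH 2 (by omega)) hin
    have hz20 : z 2 ≠ z 0 := fun h => by have := hz.2 _ _ (by omega) (by omega) h; omega
    have hz2p : z 2 ≠ z p := fun h => by have := hz.2 _ _ (by omega) (by omega) h; omega
    have hcard2 : (pos G z p (z 2)).card ≤ p := by
      have : pos G z p (z 2) ⊆ (Finset.range (p + 1)).erase 2 := by
        intro i hi
        rw [mem_pos] at hi
        rw [Finset.mem_erase, Finset.mem_range]
        refine ⟨?_, by omega⟩
        rintro rfl
        exact G.irrefl hi.2
      have h := Finset.card_le_card this
      rw [Finset.card_erase_of_mem (by simp; omega), Finset.card_range] at h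
      omega
    by_cases hSn : ∃ x ∈ S, G.Adj (z 2) x
    · obtain ⟨x, hx, h2x⟩ := hSn
      rcases dich (z 2) hz20 hz2p x hx h2x with hg | hg
      · refine Concl.cB2 (z 2) (z 0) (p + 1) p hg ⟨_, pu, ?_, by simp; omega⟩
          ⟨up z 2 p ++ [z 0], ?_, ?_, by simp; omega⟩ (by omega) (by omega) (by omega)
        · intro w hw
          rw [List.mem_append, List.mem_reverse] at hw
          rcases hw with hw | hw
          · exact C.up_in le_rfl hw
          · exact C.up_in (by omega) hw
        · refine (hz.up (by omega) le_rfl).append (IsP.single _) ((hB 0 (by omega)).2 (Or.inr rfl)) ?_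
          rw [← up_self]
          exact up_disj hz le_rfl (by omega) (by omega)
        · intro w hw
          rw [List.mem_append, List.mem_singleton] at hw
          rcases hw with hw | rfl
          · exact C.up_in le_rfl hw
          · exact C.hzH 0 (by omega)
      · refine Concl.cB2 (z 2) (z p) (p + 1) p hg ⟨_, pv, ?_, by simp; omega⟩
          ⟨up z 2 (p - 1) ++ [z 0] ++ [z p], ?_, ?_, by simp; omega⟩ (by omega) (by omega) (by omega)
        · intro w hw
          rw [List.mem_append, List.mem_reverse] at hw
          rcases hw with hw | hw
          · exact C.up_in (by omega) hw
          · exact C.up_in le_rfl hw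
        · refine ((hz.up (by omega) (by omega)).append (IsP.single _)
            ((hA (p - 1) (by omega) (by omega)).2 (Or.inl (by omega))).symm ?_).append (IsP.single _)
            ((hA p (by omega) (by omega)).2 (Or.inr rfl)) ?_
          · rw [← up_self]
            exact up_disj hz (by omega) (by omega) (by omega)
          · intro x hx
            rw [List.mem_append] at hx
            rw [← up_self]
            rcases hx with hx | hx
            · exact up_disj hz (by omega) (by omega) (by omega) x hx
            · rw [← up_self] at hx
              exact up_disj hz (by omega) (by omega) (by omega) x hx
        · intro w hw
          simp only [List.mem_append, List.mem_singleton] at hw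
          rcases hw with (hw | rfl) | rfl
          · exact C.up_in (by omega) hw
          · exact C.hzH 0 (by omega)
          · exact C.hzH p (by omega)
    · push Not at hSn
      by_cases hev : ∃ i, 4 ≤ i ∧ i < p ∧ i % 2 = 0 ∧ G.Adj (z 2) (z i)
      · obtain ⟨i, i1, i2, i3, i4⟩ := hev
        refine Concl.cB2 (z 0) (z p) (p + 1) p C.hg C.path
          ⟨[z 0] ++ (up z 2 (i - 1)).reverse ++ up z i p, ?_, ?_, ?_⟩ (by omega) (by omega) (by omega)
        · refine ((IsP.single _).append (hz.down (by omega) (by omega))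
            ((hA (i - 1) (by omega) (by omega)).2 (Or.inl (by omega))) ?_).append
            (hz.up (by omega) le_rfl) i4 ?_
          · intro x hx
            rw [← up_self] at hx
            rw [List.mem_reverse]
            exact up_disj hz (by omega) (by omega) (by omega) x hx
          · intro x hx
            rw [List.mem_append, List.mem_reverse] at hx
            rcases hx with hx | hx
            · rw [← up_self] at hx
              exact up_disj hz (by omega) (by omega) (by omega) x hx
            · exact up_disj hz (by omega) (by omega) (by omega) x hx
        · intro w hw
          simp only [List.mem_append, List.mem_singleton, List.mem_reverse] at hw
          rcases hw with (rfl | hw) | hw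
          · exact C.hzH 0 (by omega)
          · exact C.up_in (by omega) hw
          · exact C.up_in (by omega) hw
        · simp; omega
      · push Not at hev
        have hS0 : dS G S (z 2) = 0 := by
          unfold dS
          rw [Finset.card_eq_zero, Finset.filter_eq_empty_iff]
          intro x hx; exact hSn x hx
        have c := cnt_par (pos G z p (z 2)) 1 1 (p - 1) (by
          intro i hi
          rw [mem_pos] at hi
          by_cases ho : i % 2 = 1
          · omega
          · exfalso
            rcases Nat.lt_or_ge i 4 with h | h
            · have : i = 0 ∨ i = 2 := by omega
              rcases this with rfl | rfl
              · have := (hA 2 (by omega) (by omega)).1 hi.2.symm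
                omega
              · exact G.irrefl hi.2
            · rcases hi.1.lt_or_eq with h' | rfl
              · exact hev i h h' (by omega) hi.2
              · have := (hB 2 (by omega)).1 hi.2.symm
                omega)
        exact Concl.cA x1 y1 (p + 1) hx1 hy1 hxy ⟨z 0, z p, C.path, hux.symm, hvy.symm⟩ (by omega)

theorem Ctx.case1 (C : Ctx G S H k z p) (hu : ∀ y ∈ H, G.Adj (z 0) y → ∃ i ≤ p, z i = y)
    (hv : ∀ y ∈ H, G.Adj (z p) y → ∃ i ≤ p, z i = y) : Concl G S H k := by
  have hz := C.hz
  have hp := C.hzp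
  set A := pos G z p (z 0) with hAdef
  set B := pos G (fun i => z (p - i)) p (z p) with hBdef
  have hdu : k ≤ dS G S (z 0) + A.card := C.deg_split (C.hzH 0 (by omega)) hu
  have hdv : k ≤ dS G S (z p) + B.card := C.rev.deg_split (C.hzH p (by omega)) (by
    intro y hy h
    obtain ⟨i, hi, rfl⟩ := hv y hy h
    exact ⟨p - i, by omega, by congr 1; omega⟩)
  have hA : ∀ a ∈ A, 1 ≤ a ∧ a ≤ p := by
    intro a ha
    rw [hAdef, mem_pos] at ha
    refine ⟨?_, ha.1⟩
    by_contra h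
    have : a = 0 := by omega
    subst this
    exact G.irrefl ha.2
  have hB : ∀ a ∈ B, 1 ≤ a ∧ a ≤ p := by
    intro a ha
    rw [hBdef, mem_pos] at ha
    refine ⟨?_, ha.1⟩
    by_contra h
    have : a = 0 := by omega
    subst this
    exact G.irrefl ha.2
  by_cases hs1 : p % 2 = 1 ∧ A.card + B.card ≤ p + 2
  · exact Concl.cB1o (z 0) (z p) (p + 1) C.hg C.path (by omega) (by omega)
  by_cases hs2 : p % 2 = 0 ∧ A.card + B.card ≤ p + 1
  · exact Concl.cB1e (z 0) (z p) (p + 1) C.hg C.path (by omega) (by omega)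
  set T : ℕ → Prop := fun l => HP G H (z 0) (z p) (l + 1) ∧ l % 2 ≠ p % 2 with hT
  set L := Nat.findGreatest T p with hL
  have pathA : ∀ a ∈ A, HP G H (z 0) (z p) (1 + p - a + 1) := by
    intro a ha
    have h1 := hA a ha
    rw [hAdef, mem_pos] at ha
    refine ⟨[z 0] ++ up z a p, (IsP.single _).append (hz.up h1.2 le_rfl) ha.2 ?_, ?_, by simp; omega⟩
    · rw [← up_self]; exact up_disj hz (by omega) (by omega) (by omega)
    · intro w hw
      rw [List.mem_append, List.mem_singleton] at hw
      rcases hw with rfl | hw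
      · exact C.hzH 0 (by omega)
      · exact C.up_in le_rfl hw
  have pathB : ∀ a ∈ B, HP G H (z 0) (z p) (1 + p - a + 1) := by
    intro a ha
    have h1 := hB a ha
    rw [hBdef, mem_pos] at ha
    refine ⟨up z 0 (p - a) ++ [z p], (hz.up (by omega) (by omega)).append (IsP.single _) ha.2.symm ?_,
      ?_, by simp; omega⟩
    · rw [← up_self]; exact up_disj hz (by omega) (by omega) (by omega)
    · intro w hw
      rw [List.mem_append, List.mem_singleton] at hw
      rcases hw with hw | rfl
      · exact C.up_in (by omega) hw
      · exact C.hzH p (by omega)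
  have hAe : ∀ a ∈ A, a % 2 = 0 → 1 + p ≤ L + a := by
    intro a ha h
    have h1 := hA a ha
    have : 1 + p - a ≤ L := Nat.le_findGreatest (by omega) ⟨pathA a ha, by omega⟩
    omega
  have hBe : ∀ a ∈ B, a % 2 = 0 → 1 + p ≤ L + a := by
    intro a ha h
    have h1 := hB a ha
    have : 1 + p - a ≤ L := Nat.le_findGreatest (by omega) ⟨pathB a ha, by omega⟩
    omega
  have hLT : L ≠ 0 → T L := fun h => Nat.findGreatest_of_ne_zero rfl h
  have hLp : L ≤ p := Nat.findGreatest_le p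
  have hcount := count A B p L hp hA hB hLp (by
      rintro ⟨a, ha | ha, h⟩
      · have := hAe a ha h
        have := hA a ha
        exact (hLT (by omega)).2
      · have := hBe a ha h
        have := hB a ha
        exact (hLT (by omega)).2) hAe hBe (by
      intro a ha b hb h1 h2 h3 h4
      have ha1 := hA a ha
      have hb1 := hB b hb
      rw [hAdef, mem_pos] at ha
      rw [hBdef, mem_pos] at hb
      have : a + b + 2 - p ≤ L := by
        apply Nat.le_findGreatest (by omega)
        refine ⟨⟨[z 0] ++ (up z (p - b) a).reverse ++ [z p], ?_, ?_, ?_⟩, by omega⟩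
        · refine ((IsP.single _).append (hz.down (by omega) (by omega)) ha.2 ?_).append (IsP.single _)
            hb.2.symm ?_
          · intro x hx
            rw [← up_self] at hx
            rw [List.mem_reverse]
            exact up_disj hz (by omega) (by omega) (by omega) x hx
          · intro x hx
            rw [List.mem_append, List.mem_reverse] at hx
            rw [← up_self]
            rcases hx with hx | hx
            · rw [← up_self] at hx
              exact up_disj hz (by omega) (by omega) (by omega) x hx
            · exact up_disj hz (by omega) (by omega) (by omega) x hx
        · intro w hw
          simp only [List.mem_append, List.mem_singleton, List.mem_reverse] at hw
          rcases hw with (rfl | hw) | rfl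
          · exact C.hzH 0 (by omega)
          · exact C.up_in (by omega) hw
          · exact C.hzH p (by omega)
        · simp; omega
      omega) (by omega) (by omega)
  rcases hcount with h | ⟨h1, h2, h3, h4, h5⟩
  · have hT := hLT (by omega)
    exact Concl.cB2 (z 0) (z p) (p + 1) (L + 1) C.hg C.path hT.1 (by have := hT.2; omega) (by omega)
      (by omega)
  · rcases Nat.lt_or_ge p 4 with hp4 | hp4
    · have : p = 2 := by omega
      subst this
      have h2A : 2 ∈ A := (h4 2 (by omega) le_rfl).2 (Or.inr rfl)
      have hP := pathA 2 h2A
      exact Concl.cB2 (z 0) (z 2) 3 2 C.hg C.path hP (by omega) (by omega) (by omega)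
    · refine C.exception hp4 h1 ?_ ?_ (by omega) (by omega)
      · intro i i1 i2
        rw [← h4 i i1 i2, hAdef, mem_pos]
        simp [i2]
      · intro i hi
        have := h5 (p - i) (by omega) (by omega)
        rw [hBdef, mem_pos] at this
        have e : p - (p - i) = i := by omega
        simp only [e] at this
        constructor
        · intro h
          have := this.1 ⟨by omega, h⟩
          omega
        · intro h
          exact (this.2 (by omega)).2

end caseone

section main
variable {V : Type*} {G : SimpleGraph V} [Fintype V]

theorem good_exists (h2 : TwoConnected G) (S H : Finset V) (hS : 2 ≤ S.card) (hH : 2 ≤ H.card)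
    (hdis : ∀ w ∈ H, w ∉ S) (hN : ∀ w ∈ H, ∀ y, G.Adj w y → y ∈ H ∨ y ∈ S) :
    ∃ u ∈ H, ∃ v ∈ H, Good G S u v := by
  obtain ⟨s0, hs0⟩ : S.Nonempty := Finset.card_pos.1 (by omega)
  have one : ∀ a ∈ H, ∃ u ∈ H, u ≠ a ∧ ∃ x ∈ S, G.Adj u x := by
    intro a ha
    obtain ⟨b, hb, hba⟩ := Finset.exists_mem_ne (by omega : 1 < H.card) a
    obtain ⟨x, hx, y, hy, hya, hxy⟩ := sep h2 a (H.erase a) ⟨b, Finset.mem_erase.2 ⟨hba, hb⟩⟩ (by simp)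
      ⟨s0, fun h => hdis _ (Finset.mem_erase.1 h).2 hs0, fun h => hdis a ha (h ▸ hs0)⟩
    rw [Finset.mem_erase] at hx
    refine ⟨x, hx.2, hx.1, y, ?_, hxy⟩
    rcases hN x hx.2 y hxy with h | h
    · exact absurd (Finset.mem_erase.2 ⟨hya, h⟩) hy
    · exact h
  have two : ∀ x ∈ S, ∃ w ∈ H, ∃ y ∈ S, y ≠ x ∧ G.Adj w y := by
    intro x hx
    obtain ⟨b, hb, hbx⟩ := Finset.exists_mem_ne (by omega : 1 < S.card) x
    obtain ⟨w, hw, y, hy, hyx, hwy⟩ := sep h2 x H (Finset.card_pos.1 (by omega))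
      (fun h => hdis _ h hx) ⟨b, fun h => hdis _ h hb, hbx⟩
    refine ⟨w, hw, y, ?_, hyx, hwy⟩
    exact (hN w hw y hwy).resolve_left hy
  obtain ⟨h0, hh0⟩ : H.Nonempty := Finset.card_pos.1 (by omega)
  obtain ⟨u1, hu1, -, x1, hx1, hux1⟩ := one h0 hh0
  obtain ⟨u2, hu2, hu21, x2, hx2, hux2⟩ := one u1 hu1
  by_cases hx : x1 = x2
  · subst hx
    obtain ⟨w, hw, y, hy, hyx, hwy⟩ := two x1 hx1
    by_cases hwu : w = u1
    · exact ⟨u2, hu2, w, hw, fun h => hu21 (h.trans hwu), x1, hx1, y, hy, hyx.symm, hux2, hwy⟩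
    · exact ⟨u1, hu1, w, hw, fun h => hwu h.symm, x1, hx1, y, hy, hyx.symm, hux1, hwy⟩
  · exact ⟨u1, hu1, u2, hu2, hu21.symm, x1, hx1, x2, hx2, hx, hux1, hux2⟩

theorem main_lemma (h2 : TwoConnected G) {k : ℕ} (hdeg : ∀ v, k ≤ dS G Finset.univ v) :
    ∀ (n : ℕ) (S H : Finset V), H.card = n → 2 ≤ S.card → (∀ w ∈ H, w ∉ S) →
    (∀ a ∈ H, ∀ b ∈ H, Rch G (fun x => x ∈ H) a b) →
    (∀ w ∈ H, ∀ y, G.Adj w y → y ∈ H ∨ y ∈ S) → 2 ≤ H.card → Concl G S H k := by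
  intro n
  induction n using Nat.strong_induction_on with
  | _ n ih =>
  intro S H hn hS hdis hconn hN hH
  set T : ℕ → Prop := fun m => ∃ u v l, Good G S u v ∧ IsP G u v l ∧ (∀ w ∈ l, w ∈ H) ∧ l.length = m
    with hT
  obtain ⟨u0, hu0, v0, hv0, hg0⟩ := good_exists h2 S H hS hH hdis hN
  obtain ⟨l0, hl0, hl0'⟩ := hconn u0 hu0 v0 hv0
  set M := Nat.findGreatest T (Fintype.card V) with hM
  have hTM : T M := Nat.findGreatest_spec (P := T) hl0.length_le ⟨u0, v0, l0, hg0, hl0, hl0', rfl⟩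
  obtain ⟨u, v, l, hg, hl, hlH, hlM⟩ := hTM
  obtain ⟨z, p, h1, rfl, rfl, h4, h5, h6⟩ := hl.exists_zp
  have C : Ctx G S H k z p := by
    refine ⟨hdeg, hdis, hN, h4, ?_, hg, ?_, ?_⟩
    · intro i hi; exact hlH _ ((h6 _).2 ⟨i, hi, rfl⟩)
    · intro u v m hg' hm hmH
      have : m.length ≤ M := Nat.le_findGreatest (P := T) hm.length_le ⟨u, v, m, hg', hm, hmH, rfl⟩
      omega
    · intro S' K hK hS' hd hc hn' hk'
      exact ih K.card (by omega) S' K rfl hS' hd hc hn' hk'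
  by_cases hu : ∀ y ∈ H, G.Adj (z 0) y → ∃ i ≤ p, z i = y
  · by_cases hv : ∀ y ∈ H, G.Adj (z p) y → ∃ i ≤ p, z i = y
    · exact C.case1 hu hv
    · push Not at hv
      obtain ⟨w0, hw0, hadj, hne⟩ := hv
      exact C.rev.case2 hw0 (fun i _ => hne _ (by omega)) (by simpa using hadj)
  · push Not at hu
    obtain ⟨w0, hw0, hadj, hne⟩ := hu
    exact C.case2 hw0 hne hadj

end main
section cycles
variable {V : Type*} {G : SimpleGraph V}

/-- There is an odd cycle with `n` vertices. -/
def OC (G : SimpleGraph V) (n : ℕ) : Prop :=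
  ∃ a b l, IsP G a b l ∧ G.Adj b a ∧ l.length = n ∧ n % 2 = 1

theorem OC.three_le {n : ℕ} (h : OC G n) : 3 ≤ n := by
  obtain ⟨a, b, l, h1, h2, h3, h4⟩ := h
  by_contra hc
  have : l.length = 1 := by omega
  obtain ⟨x, rfl⟩ := List.length_eq_one_iff.1 this
  obtain ⟨_, _, e, f⟩ := h1
  simp at e f
  subst e; subst f
  exact G.irrefl h2

theorem OC.walk {n : ℕ} (h : OC G n) : ∃ (v : V) (c : G.Walk v v), c.IsCycle ∧ c.length = n := by
  have h3n := h.three_le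
  obtain ⟨a, b, l, ⟨h1, h1', h1a, h1b⟩, h2, h3, h4⟩ := h
  have hne : l ≠ [] := by rintro rfl; simp at h3; omega
  have ha : l.head hne = a := by
    rw [List.head?_eq_some_head hne] at h1a; simpa using h1a
  have hb : l.getLast hne = b := by
    rw [List.getLast?_eq_some_getLast hne] at h1b; simpa using h1b
  have hadj : G.Adj (l.getLast hne) (l.head hne) := by rw [ha, hb]; exact h2
  have hlen : (Walk.ofSupport l hne h1).length = l.length - 1 := Walk.length_ofSupport hne h1
  refine ⟨_, Walk.cons hadj (Walk.ofSupport l hne h1), ?_, ?_⟩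
  · rw [Walk.isCycle_iff_isPath_tail_and_le_length]
    constructor
    · rw [Walk.isPath_def, Walk.support_tail_of_not_nil _ (by simp)]
      simp only [Walk.support_cons, List.tail_cons, Walk.support_ofSupport]
      exact h1'
    · rw [Walk.length_cons, hlen]; omega
  · rw [Walk.length_cons, hlen]; omega

theorem exists_oc (hnb : ¬ G.Colorable 2) : ∃ n, OC G n := by
  rw [two_colorable_iff_forall_loop_even] at hnb
  push Not at hnb
  obtain ⟨u, w, hw⟩ := hnb
  rw [Nat.not_even_iff] at hw
  have hex : ∃ n, n % 2 = 1 ∧ ∃ f : ℕ → V, (∀ i < n, G.Adj (f i) (f (i + 1))) ∧ f n = f 0 :=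
    ⟨w.length, hw, w.getVert, fun i hi => w.adj_getVert_succ hi, by simp⟩
  obtain ⟨h1, f, h2, h3⟩ := Nat.find_spec hex
  set n := Nat.find hex with hn
  have hinj : ∀ i j, i < j → j < n → f i ≠ f j := by
    intro i j hij hj he
    by_cases hpar : (j - i) % 2 = 1
    · apply Nat.find_min hex (m := j - i) (by omega)
      refine ⟨hpar, fun t => f (i + t), ?_, ?_⟩
      · intro t ht; exact h2 (i + t) (by omega)
      · simp only [Nat.add_zero]; rw [Nat.add_sub_cancel' hij.le, he]
    · apply Nat.find_min hex (m := n - (j - i)) (by omega)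
      refine ⟨by omega, fun t => if t ≤ i then f t else f (t + (j - i)), ?_, ?_⟩
      · intro t ht
        by_cases ht1 : t + 1 ≤ i
        · simp only [ht1, if_true, show t ≤ i by omega]; exact h2 t (by omega)
        · by_cases ht2 : t ≤ i
          · have : t = i := by omega
            subst this
            simp only [le_refl, if_true, ht1, if_false]
            rw [he, show t + 1 + (j - t) = j + 1 by omega]
            exact h2 j hj
          · simp only [ht1, ht2, if_false]
            have := h2 (t + (j - i)) (by omega)
            rwa [show t + (j - i) + 1 = t + 1 + (j - i) by omega] at this
      · simp only [show ¬ (n - (j - i) ≤ i) by omega, if_false, Nat.zero_le, if_true]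
        rw [Nat.sub_add_cancel (by omega), h3]
  have hz : ZP G f (n - 1) := by
    refine ⟨fun i hi => h2 i (by omega), ?_⟩
    intro i j hi hj he
    rcases Nat.lt_trichotomy i j with h | h | h
    · exact absurd he (hinj i j h (by omega))
    · exact h
    · exact absurd he.symm (hinj j i h (by omega))
  refine ⟨n, f 0, f (n - 1), up f 0 (n - 1), hz.up (by omega) le_rfl, ?_, by simp; omega, h1⟩
  have := h2 (n - 1) (by omega)
  rwa [Nat.sub_add_cancel (by omega), h3] at this

theorem OC.zmod {c : ℕ} [NeZero c] (h : OC G c) :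
    ∃ f : ZMod c → V, Function.Injective f ∧ ∀ x, G.Adj (f x) (f (x + 1)) := by
  have h3 := h.three_le
  obtain ⟨a, b, l, h1, h2, hl, h4⟩ := h
  obtain ⟨z, p, g1, rfl, rfl, g4, g5, g6⟩ := h1.exists_zp
  have hcp : c = p + 1 := by omega
  refine ⟨fun x => z x.val, ?_, ?_⟩
  · intro x y hxy
    have hx := ZMod.val_lt x
    have hy := ZMod.val_lt y
    exact ZMod.val_injective c (g4.2 _ _ (by omega) (by omega) hxy)
  · intro x
    have hx := ZMod.val_lt x
    have e : (x + 1).val = (x.val + 1) % c := by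
      conv_lhs => rw [← ZMod.natCast_zmod_val x]
      rw [← Nat.cast_one, ← Nat.cast_add, ZMod.val_natCast]
    simp only [e]
    rcases Nat.lt_or_ge (x.val + 1) c with h | h
    · rw [Nat.mod_eq_of_lt h]; exact g4.1 _ (by omega)
    · have : x.val + 1 = c := by omega
      rw [this, Nat.mod_self]
      have : x.val = p := by omega
      rw [this]; exact h2

theorem arc {c : ℕ} [NeZero c] {f : ZMod c → V} (hf : Function.Injective f)
    (hadj : ∀ x, G.Adj (f x) (f (x + 1))) (x : ZMod c) : ZP G (fun i : ℕ => f (x + i)) (c - 1) := by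
  refine ⟨?_, ?_⟩
  · intro i _
    have := hadj (x + i)
    simp only
    push_cast
    rwa [← add_assoc]
  · intro i j hi hj hij
    have h1 := add_left_cancel (hf hij)
    have hc := NeZero.pos c
    have h2 := congrArg ZMod.val h1
    rwa [ZMod.val_natCast, ZMod.val_natCast, Nat.mod_eq_of_lt (by omega), Nat.mod_eq_of_lt (by omega)] at h2

theorem key_link {c : ℕ} [NeZero c] {f : ZMod c → V} (hf : Function.Injective f)
    (hadj : ∀ x, G.Adj (f x) (f (x + 1))) (hodd : c % 2 = 1) (hmax : ∀ n, OC G n → n ≤ c)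
    {H : Finset V} (hH : ∀ x, f x ∉ H) {x y : ZMod c} {a n : ℕ} (h0 : 0 < a) (h1 : a < c)
    (hy : y = x + a) (h : Link G H (f x) (f y) n) (hpar : (n + 1) % 2 = a % 2) : n + 1 ≤ a := by
  obtain ⟨u, v, ⟨m, m1, m2, m3⟩, hu, hv⟩ := h
  have hz := arc hf hadj y
  have e0 : f (y + ((0 : ℕ) : ZMod c)) = f y := by simp
  have e1 : f (y + ((c - a : ℕ) : ZMod c)) = f x := by
    rw [hy, Nat.cast_sub h1.le]; simp
  have hp := (hz.up (Nat.zero_le (c - a)) (by omega)).append m1 (by rw [e1]; exact hu) (by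
    intro w hw hw'
    obtain ⟨i, _, _, rfl⟩ := mem_up.1 hw
    exact hH _ (m2 _ hw'))
  have := hmax _ ⟨_, _, _, hp, by rw [e0]; exact hv.symm, rfl, by simp; omega⟩
  simp at this
  omega

theorem edge_case [Fintype V] (h2 : TwoConnected G) {k : ℕ} (hdeg : ∀ v, k ≤ dS G Finset.univ v)
    {c : ℕ} [NeZero c] {f : ZMod c → V} (hf : Function.Injective f) (hc3 : 3 ≤ c)
    (hadj : ∀ x, G.Adj (f x) (f (x + 1))) (hodd : c % 2 = 1) (hmax : ∀ n, OC G n → n ≤ c)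
    (hck : c + 3 ≤ 2 * k) {a b : V} (ha : ∀ x, f x ≠ a) (hb : ∀ x, f x ≠ b) (hab : G.Adj a b) :
    False := by
  set S : Finset V := Finset.univ.image f with hSdef
  have memS : ∀ w, w ∈ S ↔ ∃ x, f x = w := by intro w; simp [hSdef]
  have hScard : S.card = c := by
    rw [hSdef, Finset.card_image_of_injective _ hf, Finset.card_univ, ZMod.card]
  set H : Finset V := Finset.univ.filter (fun w => Rch G (fun y => y ∉ S) a w) with hHdef
  have memH : ∀ w, w ∈ H ↔ Rch G (fun y => y ∉ S) a w := by intro w; simp [hHdef]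
  have haS : a ∉ S := fun h => by obtain ⟨x, hx⟩ := (memS a).1 h; exact ha x hx
  have hbS : b ∉ S := fun h => by obtain ⟨x, hx⟩ := (memS b).1 h; exact hb x hx
  have haH : a ∈ H := (memH a).2 (Rch.refl haS)
  have hbH : b ∈ H := (memH b).2 (Rch.step (X := fun y => y ∉ S) (Rch.refl (X := fun y => y ∉ S) haS) hab hbS)
  have hdis : ∀ w ∈ H, w ∉ S := fun w hw => ((memH w).1 hw).right
  have hfH : ∀ x, f x ∉ H := fun x h => hdis _ h ((memS _).2 ⟨x, rfl⟩)
  have hres : Concl G S H k := by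
    refine main_lemma h2 hdeg _ S H rfl (by omega) hdis ?_ ?_ ?_
    · intro u hu v hv
      obtain ⟨l, h1, h3⟩ := ((memH u).1 hu).inside ((memH v).1 hv)
      exact ⟨l, h1, fun x hx => (memH x).2 (h3 x hx)⟩
    · intro w hw y hy
      by_cases h : y ∈ S
      · exact Or.inr h
      · exact Or.inl ((memH y).2 (((memH w).1 hw).step hy h))
    · exact Finset.one_lt_card.2 ⟨a, haH, b, hbH, hab.ne⟩
  set I : V → Finset (ZMod c) := fun u => Finset.univ.filter (fun x => G.Adj u (f x)) with hI
  have memI : ∀ u x, x ∈ I u ↔ G.Adj u (f x) := by intro u x; simp [hI]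
  have cardI : ∀ u, (I u).card = dS G S u := by
    intro u
    unfold dS
    have : S.filter (G.Adj u) = (I u).image f := by
      ext w
      simp only [Finset.mem_filter, memS, Finset.mem_image, memI]
      constructor
      · rintro ⟨⟨x, rfl⟩, h⟩; exact ⟨x, h, rfl⟩
      · rintro ⟨x, h, rfl⟩; exact ⟨⟨x, rfl⟩, h⟩
    rw [this, Finset.card_image_of_injective _ hf]
  have key := fun x y a n => @key_link V G c _ f hf hadj hodd hmax H hfH x y a n
  have cross : ∀ u v n, HP G H u v n → ∀ i ∈ I u, ∀ j ∈ I v, ∀ m : ℕ, 0 < m → m < c →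
      (n + 1) % 2 = m % 2 → (j = i + m → n + 1 ≤ m) ∧ (i = j + m → n + 1 ≤ m) := by
    intro u v n h i hi j hj m m1 m2 hp
    have L : Link G H (f i) (f j) n := ⟨u, v, h, ((memI _ _).1 hi).symm, ((memI _ _).1 hj).symm⟩
    exact ⟨fun e => key i j m n m1 m2 e L hp, fun e => key j i m n m1 m2 e L.symm hp⟩
  have gne : ∀ u v, Good G S u v → ∃ i ∈ I u, ∃ j ∈ I v, i ≠ j := by
    rintro u v ⟨_, x, hx, y, hy, hxy, h1, h3⟩
    obtain ⟨i, rfl⟩ := (memS x).1 hx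
    obtain ⟨j, rfl⟩ := (memS y).1 hy
    exact ⟨i, (memI _ _).2 h1, j, (memI _ _).2 h3, fun h => hxy (by rw [h])⟩
  have lk : ∀ x ∈ S, ∀ y ∈ S, x ≠ y → ∃ a : ℕ, 0 < a ∧ a < c ∧ ∀ n, Link G H x y n →
      ((n + 1) % 2 = a % 2 → n + 1 ≤ a) ∧ ((n + 1) % 2 ≠ a % 2 → n + 1 ≤ c - a) := by
    intro x hx y hy hxy
    obtain ⟨i, rfl⟩ := (memS x).1 hx
    obtain ⟨j, rfl⟩ := (memS y).1 hy
    obtain ⟨a, a1, a2, a3⟩ := exists_shift (fun h => hxy (by rw [h]) : i ≠ j)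
    refine ⟨a, a1, a2, fun n L => ⟨fun hp => key i j a n a1 a2 a3 L hp, fun hp => ?_⟩⟩
    exact key j i (c - a) n (by omega) (by omega) (by rw [a3, Nat.cast_sub a2.le]; simp) L.symm (by omega)
  obtain ⟨M, hM⟩ : ∃ M, c = 2 * M + 1 := ⟨c / 2, by omega⟩
  rcases hres with ⟨x, y, n, hx, hy, hxy, h, hn⟩ | ⟨x, y, n, n', hx, hy, hxy, h, h', hp, hn⟩ |
      ⟨u, v, n, hg, h, hp, hn⟩ | ⟨u, v, n, hg, h, hp, hn⟩ | ⟨u, v, n, n', hg, h, h', hp, hn, hn'⟩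
  · obtain ⟨a, a1, a2, a3⟩ := lk x hx y hy hxy
    have := a3 n h
    omega
  · obtain ⟨a, a1, a2, a3⟩ := lk x hx y hy hxy
    have := a3 n h
    have := a3 n' h'
    omega
  · have n2 := h.two_le hg.1
    have := cyc_b1o M hM (I u) (I v) (n / 2) (by omega) (gne u v hg) (by
      intro i hi j hj m m1 m2 mp
      have := cross u v n h i hi j hj m m1 m2 (by omega)
      exact ⟨fun e => by have := this.1 e; omega, fun e => by have := this.2 e; omega⟩)
    rw [cardI, cardI] at this
    omega
  · have n2 := h.two_le hg.1
    have := cyc_b1e M hM (I u) (I v) (n / 2) (by omega) (gne u v hg) (by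
      intro i hi j hj m m1 m2 mp
      have := cross u v n h i hi j hj m m1 m2 (by omega)
      exact ⟨fun e => by have := this.1 e; omega, fun e => by have := this.2 e; omega⟩)
    rw [cardI, cardI] at this
    omega
  · have n2 := h.two_le hg.1
    have n2' := h'.two_le hg.1
    have := cyc_b2 (I u) (I v) (min n n' - 1) (gne u v hg) (by
      intro i hi j hj m m1 m2
      by_cases mp : (n + 1) % 2 = m % 2
      · have := cross u v n h i hi j hj m m1 m2 mp
        exact ⟨fun e => by have := this.1 e; omega, fun e => by have := this.2 e; omega⟩
      · have := cross u v n' h' i hi j hj m m1 m2 (by omega)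
        exact ⟨fun e => by have := this.1 e; omega, fun e => by have := this.2 e; omega⟩)
    rw [cardI, cardI] at this
    omega

theorem indep_case [Fintype V] {k : ℕ} (hdeg : ∀ v, k ≤ dS G Finset.univ v)
    {c : ℕ} [NeZero c] {f : ZMod c → V} (hf : Function.Injective f)
    (hadj : ∀ x, G.Adj (f x) (f (x + 1))) (hodd : c % 2 = 1) (hmax : ∀ n, OC G n → n ≤ c)
    (hck : c + 3 ≤ 2 * k) (hn : c + 2 ≤ Fintype.card V)
    (hind : ∀ a b, (∀ x, f x ≠ a) → (∀ x, f x ≠ b) → ¬ G.Adj a b) : False := by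
  set S : Finset V := Finset.univ.image f with hSdef
  have memS : ∀ w, w ∈ S ↔ ∃ x, f x = w := by intro w; simp [hSdef]
  have hScard : S.card = c := by
    rw [hSdef, Finset.card_image_of_injective _ hf, Finset.card_univ, ZMod.card]
  have hR : 1 < (Finset.univ \ S).card := by
    rw [Finset.card_sdiff_of_subset (Finset.subset_univ _), hScard, Finset.card_univ]; omega
  obtain ⟨u, hu, v, hv, huv⟩ := Finset.one_lt_card.1 hR
  have huS : ∀ x, f x ≠ u := by
    intro x hx
    rw [Finset.mem_sdiff] at hu
    exact hu.2 ((memS u).2 ⟨x, hx⟩)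
  have hvS : ∀ x, f x ≠ v := by
    intro x hx
    rw [Finset.mem_sdiff] at hv
    exact hv.2 ((memS v).2 ⟨x, hx⟩)
  have pairs : ∀ w, (∀ x, f x ≠ w) →
      3 ≤ (Finset.univ.filter (fun x => G.Adj w (f x) ∧ G.Adj w (f (x + 1)))).card := by
    intro w hw
    set I : Finset (ZMod c) := Finset.univ.filter (fun x => G.Adj w (f x)) with hI
    set J : Finset (ZMod c) := Finset.univ.filter (fun x => G.Adj w (f (x + 1))) with hJ
    have hIc : k ≤ I.card := by
      refine (hdeg w).trans ?_
      unfold dS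
      rw [← Finset.card_image_of_injective I hf]
      apply Finset.card_le_card
      intro y hy
      simp only [Finset.mem_filter, Finset.mem_univ, true_and] at hy
      by_cases h : ∃ x, f x = y
      · obtain ⟨x, rfl⟩ := h
        exact Finset.mem_image.2 ⟨x, by simpa [hI] using hy, rfl⟩
      · push Not at h
        exact absurd hy (hind w y hw h)
    have hJc : J.card = I.card := by
      apply Finset.card_bij (fun x _ => x + 1)
      · intro x hx; simpa [hI, hJ] using hx
      · intro x _ y _ h; exact add_right_cancel h
      · intro y hy
        exact ⟨y - 1, by simpa [hI, hJ] using hy, by ring⟩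
    have e : Finset.univ.filter (fun x => G.Adj w (f x) ∧ G.Adj w (f (x + 1))) = I ∩ J := by
      ext x; simp [hI, hJ]
    rw [e]
    have h1 := Finset.card_union_add_card_inter I J
    have h2 : (I ∪ J).card ≤ c := by
      have := Finset.card_le_univ (I ∪ J)
      rwa [ZMod.card] at this
    omega
  obtain ⟨x, hx⟩ : (Finset.univ.filter (fun x => G.Adj u (f x) ∧ G.Adj u (f (x + 1)))).Nonempty :=
    Finset.card_pos.1 (by have := pairs u huS; omega)
  obtain ⟨y, hy, hyx⟩ := Finset.exists_mem_ne (by have := pairs v hvS; omega :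
    1 < (Finset.univ.filter (fun x => G.Adj v (f x) ∧ G.Adj v (f (x + 1)))).card) x
  simp only [Finset.mem_filter, Finset.mem_univ, true_and] at hx hy
  obtain ⟨a, a1, a2, a3⟩ := exists_shift hyx.symm
  have hz := arc hf hadj (x + 1)
  have e0 : f (x + 1 + ((0 : ℕ) : ZMod c)) = f (x + 1) := by simp
  have e1 : f (x + 1 + ((a - 1 : ℕ) : ZMod c)) = f y := by
    rw [Nat.cast_sub a1, a3]; congr 1; push_cast; ring
  have e2 : f (x + 1 + (a : ZMod c)) = f (y + 1) := by rw [a3]; congr 1; ring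
  have e3 : f (x + 1 + ((c - 1 : ℕ) : ZMod c)) = f x := by
    rw [Nat.cast_sub (by omega)]; congr 1; simp
  have s1 := (hz.up (Nat.zero_le (a - 1)) (by omega)).append (IsP.single v)
    (by rw [e1]; exact hy.1.symm) (by
      intro w hw hw'
      obtain ⟨i, _, _, rfl⟩ := mem_up.1 hw
      rw [List.mem_singleton] at hw'
      exact hvS _ hw')
  have s2 := s1.append (hz.up (show a ≤ c - 1 by omega) le_rfl) (by rw [e2]; exact hy.2) (by
      intro w hw hw'
      rw [List.mem_append, List.mem_singleton] at hw
      rcases hw with hw | rfl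
      · exact up_disj hz (by omega) le_rfl (by omega) w hw hw'
      · obtain ⟨i, _, _, h⟩ := mem_up.1 hw'
        exact hvS _ h)
  have s3 := s2.append (IsP.single u) (by rw [e3]; exact hx.1.symm) (by
      intro w hw hw'
      rw [List.mem_singleton] at hw'
      subst hw'
      simp only [List.mem_append, List.mem_singleton] at hw
      rcases hw with (hw | rfl) | hw
      · obtain ⟨i, _, _, h⟩ := mem_up.1 hw
        exact huS _ h
      · exact huv rfl
      · obtain ⟨i, _, _, h⟩ := mem_up.1 hw
        exact huS _ h)
  have := hmax _ ⟨_, _, _, s3, by rw [e0]; exact hx.2, rfl, by simp; omega⟩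
  simp at this
  omega

end cycles

end VZ


/-- Voss–Zuluaga (odd case): a 2-connected non-bipartite graph with
`δ(G) ≥ k ≥ 3` on at least `2k+1` vertices contains an odd cycle of length at
least `2k-1`. -/
theorem voss_zuluaga_odd {V : Type*} [Fintype V] (G : SimpleGraph V)
    (k : ℕ) (hk : 3 ≤ k) (h2 : TwoConnected G) (hnb : ¬ G.Colorable 2)
    (hδ : k ≤ G.minDegree) (hn : 2 * k + 1 ≤ Fintype.card V) :
    ∃ (v : V) (c : G.Walk v v), c.IsCycle ∧ Odd c.length ∧ 2 * k - 1 ≤ c.length := by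
  have hdeg : ∀ v, k ≤ VZ.dS G Finset.univ v := by
    intro v
    refine (hδ.trans (G.minDegree_le_degree v)).trans (le_of_eq ?_)
    rw [← SimpleGraph.card_neighborFinset_eq_degree]
    unfold VZ.dS
    congr 1
    ext w
    simp
  obtain ⟨n0, hn0⟩ := VZ.exists_oc hnb
  have hle : ∀ n, VZ.OC G n → n ≤ Fintype.card V := by
    rintro n ⟨a, b, l, h1, _, h3, _⟩
    rw [← h3]; exact h1.length_le
  set c := Nat.findGreatest (VZ.OC G) (Fintype.card V) with hc
  have hoc : VZ.OC G c := Nat.findGreatest_spec (P := VZ.OC G) (hle _ hn0) hn0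
  have hmax : ∀ n, VZ.OC G n → n ≤ c := fun n h => Nat.le_findGreatest (hle n h) h
  have hc3 := hoc.three_le
  have hodd : c % 2 = 1 := by obtain ⟨_, _, _, _, _, _, h⟩ := hoc; exact h
  by_cases hfin : 2 * k - 1 ≤ c
  · obtain ⟨v, w, hw, hl⟩ := hoc.walk
    exact ⟨v, w, hw, by rw [hl]; exact Nat.odd_iff.2 hodd, by rw [hl]; exact hfin⟩
  · exfalso
    haveI : NeZero c := ⟨by omega⟩
    obtain ⟨f, hf, hadj⟩ := hoc.zmod
    by_cases hind : ∀ a b, (∀ x, f x ≠ a) → (∀ x, f x ≠ b) → ¬ G.Adj a b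
    · exact VZ.indep_case hdeg hf hadj hodd hmax (by omega) (by omega) hind
    · push Not at hind
      obtain ⟨a, b, ha, hb, hab⟩ := hind
      exact VZ.edge_case h2 hdeg hf hc3 hadj hodd hmax (by omega) ha hb hab
end
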